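/- Let P be a simple 3-polytope all of whose facets are pentagons and hexagons except at most one exceptional facet F which is a quadrangle or a heptagon. Then: (1) if P has no quadrangular facet, P has no 4-belts; (2) if P has a quadrangular facet F, then P has exactly one 4-belt, namely the 4-belt surrounding F. -/

import Mathlib

open Set

noncomputable section

/-- The ambient space `ℝ³`. -/
abbrev E3 := EuclideanSpace ℝ (Fin 3)

/-- The cyclic successor in `Fin k`. -/
def nxt {k : ℕ} (i : Fin k) : Fin k := ⟨(i.1 + 1) % k, Nat.mod_lt _ i.pos⟩

/-- The cyclic predecessor in `Fin k`. -/
def prv {k : ℕ} (i : Fin k) : Fin k := ⟨(i.1 + (k - 1)) % k, Nat.mod_lt _ i.pos⟩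

/-- A convex polytope in `ℝ³`: the convex hull of a finite set of points. -/
def IsPolytope (P : Set E3) : Prop := ∃ V : Finset E3, P = convexHull ℝ (V : Set E3)

/-- The dimension of a subset of `ℝ³` (the dimension of its affine hull). -/
def setDim (A : Set E3) : ℕ := Module.finrank ℝ ↥(vectorSpan ℝ A)

/-- A face of a polytope: a nonempty closed convex extreme subset. -/
def IsFaceOf (F P : Set E3) : Prop :=
  F.Nonempty ∧ IsClosed F ∧ Convex ℝ F ∧ IsExtreme ℝ P F

/-- A facet: a `2`-dimensional face. -/
def IsFacetOf (F P : Set E3) : Prop := IsFaceOf F P ∧ setDim F = 2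

/-- An edge: a `1`-dimensional face. -/
def IsEdgeOf (F P : Set E3) : Prop := IsFaceOf F P ∧ setDim F = 1

/-- A vertex: a point whose singleton is a face. -/
def IsVertexOf (v : E3) (P : Set E3) : Prop := IsFaceOf {v} P

/-- The set of facets of `P`. -/
def facets (P : Set E3) : Set (Set E3) := {F | IsFacetOf F P}

/-- A simple 3-polytope: a 3-dimensional convex polytope each of whose vertices
is contained in exactly 3 facets. -/
def IsSimplePolytope3 (P : Set E3) : Prop :=
  IsPolytope P ∧ setDim P = 3 ∧
    ∀ v : E3, IsVertexOf v P → {F | IsFacetOf F P ∧ v ∈ F}.ncard = 3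

/-- The number of edges of a facet `F` of `P`. -/
def facetEdges (P F : Set E3) : ℕ := {e | IsEdgeOf e P ∧ e ⊆ F}.ncard

/-- `pVec P k` is the number of `k`-gonal facets of `P`. -/
def pVec (P : Set E3) (k : ℕ) : ℕ := {F | IsFacetOf F P ∧ facetEdges P F = k}.ncard

/-- A (mathematical) fullerene: a simple 3-polytope with all facets pentagons
and hexagons. -/
def IsFullerene (P : Set E3) : Prop :=
  IsSimplePolytope3 P ∧ ∀ F, IsFacetOf F P → facetEdges P F = 5 ∨ facetEdges P F = 6

/-- A `k`-loop in `P` (`k ≥ 2`): a cyclic sequence of facets in which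
(cyclically) consecutive facets intersect in an edge; a `1`-loop is a single facet. -/
def IsLoop (P : Set E3) {k : ℕ} (L : Fin k → Set E3) : Prop :=
  0 < k ∧ (∀ i, IsFacetOf (L i) P) ∧ (2 ≤ k → ∀ i, IsEdgeOf (L i ∩ L (nxt i)) P)

/-- A simple loop: a loop with pairwise different facets. -/
def IsSimpleLoop (P : Set E3) {k : ℕ} (L : Fin k → Set E3) : Prop :=
  IsLoop P L ∧ Function.Injective L

/-- A `k`-belt (`k ≥ 3`): a `k`-loop such that for `k = 3` the three facets have empty
total intersection, and for `k ≥ 4` two facets intersect iff they are cyclically successive. -/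
def IsBelt (P : Set E3) {k : ℕ} (L : Fin k → Set E3) : Prop :=
  3 ≤ k ∧ IsLoop P L ∧
    (k = 3 → ∀ i, L i ∩ L (nxt i) ∩ L (nxt (nxt i)) = ∅) ∧
    (4 ≤ k → ∀ p q, p ≠ q → ((L p ∩ L q).Nonempty ↔ q = nxt p ∨ p = nxt q))

/-- A flag 3-polytope: a simple 3-polytope different from the tetrahedron
(i.e. not having exactly 4 facets) without 3-belts. -/
def IsFlag3Polytope (P : Set E3) : Prop :=
  IsSimplePolytope3 P ∧ (facets P).ncard ≠ 4 ∧ ∀ B : Fin 3 → Set E3, ¬ IsBelt P B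

/-- `γ` is the simple edge-cycle of `P` traced by the cyclically ordered distinct
vertices `v 0, …, v (n-1)` (`n ≥ 3`), consecutive ones joined by edges of `P`. -/
def IsSimpleEdgeCycleVia (P γ : Set E3) {n : ℕ} (v : Fin n → E3) : Prop :=
  3 ≤ n ∧ Function.Injective v ∧ (∀ i, IsVertexOf (v i) P) ∧
    (∀ i, IsEdgeOf (segment ℝ (v i) (v (nxt i))) P) ∧
    γ = ⋃ i, segment ℝ (v i) (v (nxt i))

/-- A simple edge-cycle in the graph of `P`. -/
def IsSimpleEdgeCycle (P γ : Set E3) : Prop :=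
  ∃ (n : ℕ) (v : Fin n → E3), IsSimpleEdgeCycleVia P γ v

/-- `C` is a connected component of the set `A`. -/
def IsCompOf (C A : Set E3) : Prop := ∃ x ∈ A, C = connectedComponentIn A x

/-- The loop `L` is obtained by walking round the simple edge-cycle `γ` inside the
connected component `C` of `∂P ∖ γ`: the facets of `L` lie on the side `C`, and the
edges of `γ`, in cyclic order, lie in the facets of `L` in cyclic order (the loop
index advancing exactly when the facet changes, and making exactly one turn). -/
def WalksRound (P γ C : Set E3) {k : ℕ} (L : Fin k → Set E3) : Prop :=
  IsLoop P L ∧ (∀ i, intrinsicInterior ℝ (L i) ⊆ C) ∧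
    ∃ (n : ℕ) (v : Fin n → E3) (φ : Fin n → Fin k),
      IsSimpleEdgeCycleVia P γ v ∧
      (∀ i, segment ℝ (v i) (v (nxt i)) ⊆ L (φ i)) ∧
      (∀ i, φ (nxt i) = φ i ∨ φ (nxt i) = nxt (φ i)) ∧
      Function.Surjective φ ∧
      (2 ≤ k → (Finset.univ.filter (fun i : Fin n => φ (nxt i) ≠ φ i)).card = k)

/-- Two loops border each other: they are obtained by walking round the same simple
edge-cycle `γ` in the two different connected components of `∂P ∖ γ`. -/
def Borders (P : Set E3) {k₁ k₂ : ℕ} (L₁ : Fin k₁ → Set E3) (L₂ : Fin k₂ → Set E3) : Prop :=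
  ∃ γ C₁ C₂ : Set E3, IsCompOf C₁ (frontier P \ γ) ∧ IsCompOf C₂ (frontier P \ γ) ∧
    C₁ ≠ C₂ ∧ WalksRound P γ C₁ L₁ ∧ WalksRound P γ C₂ L₂

/-- A loop surrounds the facet `F` if it borders the `1`-loop `(F)`. -/
def Surrounds (P : Set E3) {k : ℕ} (L : Fin k → Set E3) (F : Set E3) : Prop :=
  IsFacetOf F P ∧ Borders P L (fun _ : Fin 1 => F)

/-- The number of edges of `P` lying in the facet `F` and in the set `γ`. -/
def edgesInCommon (P F γ : Set E3) : ℕ := {e | IsEdgeOf e P ∧ e ⊆ F ∧ e ⊆ γ}.ncard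
/-- A simple 3-polytope all of whose facets are pentagons and hexagons except for
at most one exceptional facet, which is a quadrangle or a heptagon. -/
def IsAlmostFullerene (P : Set E3) : Prop :=
  IsSimplePolytope3 P ∧
    (∀ F, IsFacetOf F P → facetEdges P F ∈ ({4, 5, 6, 7} : Set ℕ)) ∧
    {F | IsFacetOf F P ∧ (facetEdges P F = 4 ∨ facetEdges P F = 7)}.ncard ≤ 1

/-- The (combinatorial) dodecahedron: a simple 3-polytope with all facets pentagons. -/
def IsDodecahedron (P : Set E3) : Prop :=
  IsSimplePolytope3 P ∧ ∀ F, IsFacetOf F P → facetEdges P F = 5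

/-- `e` and `e'` are opposite edges of the hexagonal facet `H`: they are disjoint and no
edge of `H` meets both of them. -/
def OppositeEdges (P H e e' : Set E3) : Prop :=
  IsEdgeOf e P ∧ IsEdgeOf e' P ∧ e ⊆ H ∧ e' ⊆ H ∧ e ∩ e' = ∅ ∧
    ∀ e'', IsEdgeOf e'' P → e'' ⊆ H → (e'' ∩ e).Nonempty → e'' ≠ e → e'' ∩ e' = ∅

/-- A cap: a pentagonal facet `F₀` together with a surrounding 5-belt of pentagons. -/
def IsCapOf (P F₀ : Set E3) (L : Fin 5 → Set E3) : Prop :=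
  IsFacetOf F₀ P ∧ facetEdges P F₀ = 5 ∧ (∀ i, facetEdges P (L i) = 5) ∧
    IsBelt P L ∧ Surrounds P L F₀

/-- The number of 5-belts of `P` (counted as sets of facets). -/
def fiveBeltCount (P : Set E3) : ℕ :=
  {S : Set (Set E3) | ∃ B : Fin 5 → Set E3, IsBelt P B ∧ S = Set.range B}.ncard

/-- The structure of the `k`-th fullerene of Family I: two caps separated by `k`
hexagonal 5-belts, each bordering the next (for `k = 0` the caps border each other,
giving the dodecahedron). -/
def FamilyI (P : Set E3) (k : ℕ) : Prop :=
  ∃ (F₀ F₀' : Set E3) (L L' : Fin 5 → Set E3) (B : ℕ → Fin 5 → Set E3),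
    IsCapOf P F₀ L ∧ IsCapOf P F₀' L' ∧
    (∀ i < k, IsBelt P (B i) ∧ ∀ j, facetEdges P (B i j) = 6) ∧
    (∀ i, i + 1 < k → Borders P (B i) (B (i + 1))) ∧
    (0 < k → Borders P L (B 0) ∧ Borders P (B (k - 1)) L') ∧
    (k = 0 → Borders P L L') ∧
    facets P = {F₀, F₀'} ∪ Set.range L ∪ Set.range L' ∪ ⋃ i ∈ Set.Iio k, Set.range (B i)

/-- `P` is obtained from `Q` by an `(s,k;t₀,t₁)`-truncation with new edge `Enew`:
`P` is cut off from `Q` by a halfspace `{f ≤ c}` whose boundary plane crosses exactly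
two edges `E₀ ≠ E₁` of a `k`-gonal facet `F` of `Q`, cutting off exactly `s` vertices,
all belonging to `F`; `G₀` and `G₁` are the facets meeting `F` along `E₀` and `E₁`, and
they are `t₀`- and `t₁`-gons; `Enew` is the new edge dividing `F`. -/
def IsTruncation (s k t₀ t₁ : ℕ) (Q P Enew : Set E3) : Prop :=
  IsSimplePolytope3 Q ∧ IsSimplePolytope3 P ∧
    ∃ (F E₀ E₁ G₀ G₁ : Set E3) (f : E3 →ₗ[ℝ] ℝ) (c : ℝ),
      IsFacetOf F Q ∧ facetEdges Q F = k ∧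
      IsEdgeOf E₀ Q ∧ IsEdgeOf E₁ Q ∧ E₀ ≠ E₁ ∧ E₀ ⊆ F ∧ E₁ ⊆ F ∧
      IsFacetOf G₀ Q ∧ IsFacetOf G₁ Q ∧ G₀ ≠ F ∧ G₁ ≠ F ∧ E₀ ⊆ G₀ ∧ E₁ ⊆ G₁ ∧
      facetEdges Q G₀ = t₀ ∧ facetEdges Q G₁ = t₁ ∧
      P = Q ∩ {x | f x ≤ c} ∧
      (∀ e, IsEdgeOf e Q → (∃ x ∈ e, c < f x) → (∃ x ∈ e, f x < c) → e = E₀ ∨ e = E₁) ∧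
      (∃ x ∈ E₀, c < f x) ∧ (∃ x ∈ E₀, f x < c) ∧
      (∃ x ∈ E₁, c < f x) ∧ (∃ x ∈ E₁, f x < c) ∧
      (∀ v, IsVertexOf v Q → f v ≠ c) ∧
      {v | IsVertexOf v Q ∧ c < f v}.ncard = s ∧
      (∀ v, IsVertexOf v Q → c < f v → v ∈ F) ∧
      Enew = F ∩ {x | f x = c}

/-- Combinatorial equivalence of polytopes: an inclusion-preserving bijection
between the sets of faces. -/
def CombEquiv (P Q : Set E3) : Prop :=
  ∃ φ : {A : Set E3 // IsFaceOf A P} ≃ {A : Set E3 // IsFaceOf A Q},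
    ∀ A B : {A : Set E3 // IsFaceOf A P}, A.1 ⊆ B.1 ↔ (φ A).1 ⊆ (φ B).1

/-- Combinatorial equivalence sending the face `Ep` of `P` to the face `Eq` of `Q`. -/
def CombEquivMapping (P Q Ep Eq : Set E3) : Prop :=
  ∃ φ : {A : Set E3 // IsFaceOf A P} ≃ {A : Set E3 // IsFaceOf A Q},
    (∀ A B : {A : Set E3 // IsFaceOf A P}, A.1 ⊆ B.1 ↔ (φ A).1 ⊆ (φ B).1) ∧
    ∀ h : IsFaceOf Ep P, ((φ ⟨Ep, h⟩) : {A : Set E3 // IsFaceOf A Q}).1 = Eq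

/-- The straightening of `P` along the edge `E` is defined: `P` is combinatorially
obtained from some simple 3-polytope `Q` by an `(s,k)`-truncation whose new edge
corresponds to `E`. -/
def StraighteningDefined (P E : Set E3) : Prop :=
  ∃ (s k t₀ t₁ : ℕ) (Q P₁ E₁ : Set E3),
    IsTruncation s k t₀ t₁ Q P₁ E₁ ∧ CombEquivMapping P P₁ E E₁

/-- `P` is obtained from `Q` by one of the truncations
`(1;4,5)`, `(1;5,5)`, `(2,6;4,5)`, `(2,6;5,5)`, `(2,6;5,6)`, `(2,7;5,5)`, `(2,7;5,6)`. -/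
def FullereneStep (Q P : Set E3) : Prop :=
  ∃ (s k t₀ t₁ : ℕ) (Enew : Set E3), IsTruncation s k t₀ t₁ Q P Enew ∧
    ((s = 1 ∧ (({t₀, t₁} : Finset ℕ) = {4, 5} ∨ ({t₀, t₁} : Finset ℕ) = {5, 5})) ∨
     (s = 2 ∧ k = 6 ∧ (({t₀, t₁} : Finset ℕ) = {4, 5} ∨ ({t₀, t₁} : Finset ℕ) = {5, 5} ∨
        ({t₀, t₁} : Finset ℕ) = {5, 6})) ∨
     (s = 2 ∧ k = 7 ∧ (({t₀, t₁} : Finset ℕ) = {5, 5} ∨ ({t₀, t₁} : Finset ℕ) = {5, 6})))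


namespace FB

/-- Combinatorial model of a simple 3-polytope: facets as finite sets of vertices,
with a generic height function. -/
structure CMap (V : Type*) [Fintype V] [DecidableEq V] where
  Φ : Finset (Finset V)
  h : V → ℝ
  hinj : Function.Injective h
  three : ∀ v, (Φ.filter (fun A => v ∈ A)).card = 3
  inter2 : ∀ A ∈ Φ, ∀ B ∈ Φ, A ≠ B → ∀ v, v ∈ A → v ∈ B → ∃ w, w ≠ v ∧ A ∩ B = {v, w}
  inter3 : ∀ A ∈ Φ, ∀ B ∈ Φ, ∀ C ∈ Φ, A ≠ B → A ≠ C → B ≠ C → ∀ x y,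
    x ∈ A → x ∈ B → x ∈ C → y ∈ A → y ∈ B → y ∈ C → x = y
  locmin : ∀ A ∈ Φ, ∀ v ∈ A, (∃ w ∈ A, h w < h v) →
    ∃ w ∈ A, h w < h v ∧ ∃ B ∈ Φ, B ≠ A ∧ v ∈ B ∧ w ∈ B
  locmax : ∀ v, (∃ w, h v < h w) →
    ∃ w, h v < h w ∧ ∃ A ∈ Φ, ∃ B ∈ Φ, A ≠ B ∧ v ∈ A ∧ v ∈ B ∧ w ∈ A ∧ w ∈ B

variable {V : Type*} [Fintype V] [DecidableEq V]

namespace CMap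

/-- Two distinct vertices are adjacent if they lie in two common facets. -/
def Adj (M : CMap V) (x y : V) : Prop :=
  x ≠ y ∧ ∃ A ∈ M.Φ, ∃ B ∈ M.Φ, A ≠ B ∧ x ∈ A ∧ x ∈ B ∧ y ∈ A ∧ y ∈ B

variable (M : CMap V)

theorem Adj.symm {M : CMap V} {x y : V} (h : M.Adj x y) : M.Adj y x := by
  obtain ⟨h1, A, hA, B, hB, hAB, a, b, c, d⟩ := h
  exact ⟨h1.symm, A, hA, B, hB, hAB, c, d, a, b⟩

theorem facets_three (v : V) : ∃ A ∈ M.Φ, ∃ B ∈ M.Φ, ∃ C ∈ M.Φ, A ≠ B ∧ A ≠ C ∧ B ≠ C ∧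
    v ∈ A ∧ v ∈ B ∧ v ∈ C ∧ ∀ D ∈ M.Φ, v ∈ D → D = A ∨ D = B ∨ D = C := by
  obtain ⟨A, B, C, h1, h2, h3, h⟩ := Finset.card_eq_three.1 (M.three v)
  have key : ∀ D, (D ∈ M.Φ ∧ v ∈ D) ↔ (D = A ∨ D = B ∨ D = C) := by
    intro D
    have := Finset.ext_iff.1 h D
    simpa using this
  have hA := (key A).2 (by simp)
  have hB := (key B).2 (by simp)
  have hC := (key C).2 (by simp)
  exact ⟨A, hA.1, B, hB.1, C, hC.1, h1, h2, h3, hA.2, hB.2, hC.2,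
    fun D hD hv => (key D).1 ⟨hD, hv⟩⟩

/-- the third facet at a vertex -/
theorem third {A B : Finset V} (hA : A ∈ M.Φ) (hB : B ∈ M.Φ) (hAB : A ≠ B) {v : V}
    (hvA : v ∈ A) (hvB : v ∈ B) : ∃ C ∈ M.Φ, C ≠ A ∧ C ≠ B ∧ v ∈ C ∧
      ∀ D ∈ M.Φ, v ∈ D → D = A ∨ D = B ∨ D = C := by
  obtain ⟨X, hX, Y, hY, Z, hZ, h1, h2, h3, a, b, c, h⟩ := M.facets_three v
  have e1 := h A hA hvA
  have e2 := h B hB hvB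
  grind

theorem two_more {A : Finset V} (hA : A ∈ M.Φ) {v : V}
    (hvA : v ∈ A) : ∃ B ∈ M.Φ, ∃ C ∈ M.Φ, B ≠ A ∧ C ≠ A ∧ B ≠ C ∧ v ∈ B ∧ v ∈ C ∧
      ∀ D ∈ M.Φ, v ∈ D → D = A ∨ D = B ∨ D = C := by
  obtain ⟨X, hX, Y, hY, Z, hZ, h1, h2, h3, a, b, c, h⟩ := M.facets_three v
  have e1 := h A hA hvA
  grind

theorem no_four {A B C D : Finset V} (hA : A ∈ M.Φ) (hB : B ∈ M.Φ) (hC : C ∈ M.Φ)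
    (hD : D ∈ M.Φ) {v : V} (a : v ∈ A) (b : v ∈ B) (c : v ∈ C) (d : v ∈ D)
    (h1 : A ≠ B) (h2 : A ≠ C) (h3 : B ≠ C) : D = A ∨ D = B ∨ D = C := by
  obtain ⟨X, hX, Y, hY, Z, hZ, h1, h2, h3, a, b, c, h⟩ := M.facets_three v
  have := h A hA
  have := h B hB
  have := h C hC
  have := h D hD
  grind

theorem pair {A B : Finset V} (hA : A ∈ M.Φ) (hB : B ∈ M.Φ) (hAB : A ≠ B) {x y z : V}
    (xA : x ∈ A) (xB : x ∈ B) (yA : y ∈ A) (yB : y ∈ B) (zA : z ∈ A) (zB : z ∈ B)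
    (hxy : x ≠ y) : z = x ∨ z = y := by
  obtain ⟨w, hw, h⟩ := M.inter2 A hA B hB hAB x xA xB
  have hy : y ∈ A ∩ B := by simp [yA, yB]
  have hz : z ∈ A ∩ B := by simp [zA, zB]
  rw [h] at hy hz
  simp at hy hz
  grind

theorem other {A B : Finset V} (hA : A ∈ M.Φ) (hB : B ∈ M.Φ) (hAB : A ≠ B) {x : V}
    (xA : x ∈ A) (xB : x ∈ B) : ∃ y, y ≠ x ∧ y ∈ A ∧ y ∈ B ∧ A ∩ B = {x, y} := by
  obtain ⟨w, hw, h⟩ := M.inter2 A hA B hB hAB x xA xB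
  have hy : w ∈ A ∩ B := by simp [h]
  rw [Finset.mem_inter] at hy
  exact ⟨w, hw, hy.1, hy.2, h⟩

/-- polygons are connected -/
theorem conn {A T : Finset V} (hA : A ∈ M.Φ) (hT : T ⊆ A) (hne : T.Nonempty)
    (hcl : ∀ x ∈ T, ∀ B ∈ M.Φ, B ≠ A → x ∈ B → ∀ y ∈ A, y ∈ B → y ∈ T) : T = A := by
  by_contra hcon
  have hne2 : (A \ T).Nonempty := by
    rw [Finset.sdiff_nonempty]
    exact fun h => hcon (Finset.Subset.antisymm hT h)
  have key : ∀ U : Finset V, U ⊆ A → U.Nonempty →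
      (∀ x ∈ U, ∀ B ∈ M.Φ, B ≠ A → x ∈ B → ∀ y ∈ A, y ∈ B → y ∈ U) →
      ∃ x ∈ U, ∀ y ∈ A, M.h x ≤ M.h y := by
    intro U hU hUne hUcl
    obtain ⟨x, hx, hmin⟩ := Finset.exists_min_image U M.h hUne
    refine ⟨x, hx, ?_⟩
    by_contra hc
    push Not at hc
    obtain ⟨w, hw, hlt, B, hB, hBA, hxB, hwB⟩ := M.locmin A hA x (hU hx) hc
    have := hmin w (hUcl x hx B hB hBA hxB w hw hwB)
    linarith
  obtain ⟨x, hx, hx2⟩ := key T hT hne hcl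
  obtain ⟨y, hy, hy2⟩ := key (A \ T) Finset.sdiff_subset hne2 (by
    intro x hx B hB hBA hxB y hy hyB
    rw [Finset.mem_sdiff] at hx ⊢
    refine ⟨hy, fun hyT => hx.2 (hcl y hyT B hB hBA hyB x hx.1 hxB)⟩)
  rw [Finset.mem_sdiff] at hy
  have : x = y := M.hinj (le_antisymm (hx2 y hy.1) (hy2 x (hT hx)))
  subst this
  exact hy.2 hx

/-- the graph is connected -/
theorem connV {T : Finset V} (hne : T.Nonempty)
    (hcl : ∀ x ∈ T, ∀ y, M.Adj x y → y ∈ T) : T = Finset.univ := by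
  by_contra hcon
  have hne2 : (Tᶜ).Nonempty := by
    rw [Finset.nonempty_iff_ne_empty]
    exact fun h => hcon (by simpa using h)
  have key : ∀ U : Finset V, U.Nonempty →
      (∀ x ∈ U, ∀ y, M.Adj x y → y ∈ U) →
      ∃ x ∈ U, ∀ y, M.h y ≤ M.h x := by
    intro U hUne hUcl
    obtain ⟨x, hx, hmin⟩ := Finset.exists_max_image U M.h hUne
    refine ⟨x, hx, ?_⟩
    by_contra hc
    push Not at hc
    obtain ⟨w, hlt, A, hA, B, hB, hBA, h1, h2, h3, h4⟩ := M.locmax x hc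
    have := hmin w (hUcl x hx w ⟨by rintro rfl; simp at hlt, A, hA, B, hB, hBA, h1, h2, h3, h4⟩)
    linarith
  obtain ⟨x, hx, hx2⟩ := key T hne hcl
  obtain ⟨y, hy, hy2⟩ := key Tᶜ hne2 (by
    intro x hx y hxy
    rw [Finset.mem_compl] at hx ⊢
    exact fun hyT => hx (hcl y hyT x hxy.symm))
  have : x = y := M.hinj (le_antisymm (hy2 x) (hx2 y))
  subst this
  rw [Finset.mem_compl] at hy
  exact hy hx

/-- a facet containing a triangle of edges has three vertices -/
theorem triangle {A B C D : Finset V} (hA : A ∈ M.Φ) (hB : B ∈ M.Φ) (hC : C ∈ M.Φ)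
    (hD : D ∈ M.Φ) {x y z : V} (xA : x ∈ A) (yA : y ∈ A) (zA : z ∈ A)
    (xB : x ∈ B) (yB : y ∈ B) (yC : y ∈ C) (zC : z ∈ C) (xD : x ∈ D) (zD : z ∈ D)
    (hBA : B ≠ A) (hCA : C ≠ A) (hDA : D ≠ A) (hxy : x ≠ y) (hyz : y ≠ z) (hxz : x ≠ z) :
    A = {x, y, z} := by
  symm
  have hBC : B ≠ C := by
    rintro rfl
    have := M.pair hA hB hBA.symm xA xB yA yB zA zC hxy
    grind
  have hBD : B ≠ D := by
    rintro rfl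
    have := M.pair hA hB hBA.symm xA xB yA yB zA zD hxy
    grind
  have hCD : C ≠ D := by
    rintro rfl
    have := M.pair hA hC hCA.symm yA yC zA zC xA xD hyz
    grind
  apply M.conn hA
  · grind
  · simp
  · intro p hp E hE hEA hpE q hqA hqE
    simp only [Finset.mem_insert, Finset.mem_singleton] at hp ⊢
    rcases hp with rfl | rfl | rfl
    · rcases M.no_four hA hB hD hE xA xB xD hpE hBA.symm hDA.symm hBD with rfl | rfl | rfl
      · exact absurd rfl hEA
      · have := M.pair hA hE hBA.symm xA xB yA yB hqA hqE hxy
        grind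
      · have := M.pair hA hE hDA.symm xA xD zA zD hqA hqE hxz
        grind
    · rcases M.no_four hA hB hC hE yA yB yC hpE hBA.symm hCA.symm hBC with rfl | rfl | rfl
      · exact absurd rfl hEA
      · have := M.pair hA hE hBA.symm xA xB yA yB hqA hqE hxy
        grind
      · have := M.pair hA hE hCA.symm yA yC zA zC hqA hqE hyz
        grind
    · rcases M.no_four hA hC hD hE zA zC zD hpE hCA.symm hDA.symm hCD with rfl | rfl | rfl
      · exact absurd rfl hEA
      · have := M.pair hA hE hCA.symm yA yC zA zC hqA hqE hyz
        grind
      · have := M.pair hA hE hDA.symm xA xD zA zD hqA hqE hxz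
        grind

end CMap
end FB

namespace FB
variable {V : Type*} [Fintype V] [DecidableEq V]
namespace CMap
variable (M : CMap V)

theorem zmod2_add_self (a : ZMod 2) : a + a = 0 := CharTwo.add_self_eq_zero a

theorem facestep (z : Finset V → Finset V → ZMod 2)
    (hsum : ∀ A ∈ M.Φ, ∑ B ∈ M.Φ, z A B = 0)
    (hsupp : ∀ A ∈ M.Φ, ∀ B ∈ M.Φ, z A B ≠ 0 → A ≠ B ∧ (A ∩ B).Nonempty)
    (U : Finset V) (hU : ∀ x ∈ U, ∀ y, M.h x ≤ M.h y → y ∈ U) (v : V) (hv : v ∈ U)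
    (hmin : ∀ x ∈ U, M.h v ≤ M.h x) (g : V → ZMod 2)
    (hg : ∀ A ∈ M.Φ, ∀ B ∈ M.Φ, A ≠ B → ∀ x ∈ U.erase v, ∀ y ∈ U.erase v, x ≠ y →
      x ∈ A → x ∈ B → y ∈ A → y ∈ B → g x + g y = z A B)
    {A B C : Finset V} (hA : A ∈ M.Φ) (hB : B ∈ M.Φ) (hC : C ∈ M.Φ) (hAB : A ≠ B)
    (hAC : A ≠ C) (hBC : B ≠ C) (vA : v ∈ A) (vB : v ∈ B) (vC : v ∈ C) {u w : V}
    (hu : u ∈ U.erase v) (hw : w ∈ U.erase v) (uA : u ∈ A) (uB : u ∈ B) (wA : w ∈ A)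
    (wC : w ∈ C) : z A B + z A C = g u + g w := by
  have huv : u ≠ v := (Finset.mem_erase.1 hu).1
  have hwv : w ≠ v := (Finset.mem_erase.1 hw).1
  have hAU : ∀ y ∈ A, y ∈ U := by
    intro y hy
    apply hU v hv
    by_contra hlt
    push Not at hlt
    obtain ⟨p, hpA, hlt2, D, hD, hDA, hvD, hpD⟩ := M.locmin A hA v vA ⟨y, hy, hlt⟩
    have hp : p = v ∨ p = u ∨ p = w := by
      rcases M.no_four hA hB hC hD vA vB vC hvD hAB hAC hBC with rfl | rfl | rfl
      · exact absurd rfl hDA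
      · have := M.pair hA hB hAB vA vB uA uB hpA hpD huv.symm
        grind
      · have := M.pair hA hC hAC vA vC wA wC hpA hpD hwv.symm
        grind
    rcases hp with rfl | rfl | rfl
    · exact lt_irrefl _ hlt2
    · exact absurd (hmin p (Finset.mem_erase.1 hu).2) (not_le.2 hlt2)
    · exact absurd (hmin p (Finset.mem_erase.1 hw).2) (not_le.2 hlt2)
  let s : Finset V → ZMod 2 := fun D => ∑ x ∈ (A ∩ D).erase v, g x
  have hzAA : z A A = 0 := by
    by_contra h
    exact (hsupp A hA A hA h).1 rfl
  have hs0 : ∑ D ∈ M.Φ.erase A, s D = 0 := by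
    have e1 : ∀ D, s D = ∑ x ∈ A.erase v, if x ∈ D then g x else 0 := by
      intro D
      rw [← Finset.sum_filter]
      apply Finset.sum_congr _ (fun _ _ => rfl)
      ext x
      simp only [Finset.mem_erase, Finset.mem_inter, Finset.mem_filter]
      tauto
    simp_rw [e1]
    rw [Finset.sum_comm]
    apply Finset.sum_eq_zero
    intro x hx
    rw [← Finset.sum_filter, Finset.sum_const]
    have : ((M.Φ.erase A).filter (fun D => x ∈ D)).card = 2 := by
      rw [Finset.filter_erase, Finset.card_erase_of_mem, M.three x]
      simp [hA, (Finset.mem_erase.1 hx).2]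
    rw [this, two_smul, zmod2_add_self]
  have hz0 : ∑ D ∈ M.Φ.erase A, z A D = 0 := by
    have := Finset.add_sum_erase M.Φ (z A) hA
    rw [hsum A hA, hzAA, zero_add] at this
    exact this
  have hsB : s B = g u := by
    have : (A ∩ B).erase v = {u} := by
      ext x
      simp only [Finset.mem_erase, Finset.mem_inter, Finset.mem_singleton]
      constructor
      · rintro ⟨h1, h2, h3⟩
        have := M.pair hA hB hAB vA vB uA uB h2 h3 huv.symm
        grind
      · rintro rfl
        exact ⟨huv, uA, uB⟩
    simp [s, this]
  have hsC : s C = g w := by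
    have : (A ∩ C).erase v = {w} := by
      ext x
      simp only [Finset.mem_erase, Finset.mem_inter, Finset.mem_singleton]
      constructor
      · rintro ⟨h1, h2, h3⟩
        have := M.pair hA hC hAC vA vC wA wC h2 h3 hwv.symm
        grind
      · rintro rfl
        exact ⟨hwv, wA, wC⟩
    simp [s, this]
  have hoth : ∀ D ∈ M.Φ.erase A, D ≠ B ∧ D ≠ C → s D + z A D = 0 := by
    intro D hD hne
    rw [Finset.mem_erase] at hD
    by_cases hemp : (A ∩ D).Nonempty
    · obtain ⟨x, hx⟩ := hemp
      rw [Finset.mem_inter] at hx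
      obtain ⟨y, hyx, hyA, hyD, hAD⟩ := M.other hA hD.2 hD.1.symm hx.1 hx.2
      have hvD : v ∉ D := by
        intro hvD
        have := M.no_four hA hB hC hD.2 vA vB vC hvD hAB hAC hBC
        grind
      have hxv : x ≠ v := by rintro rfl; exact hvD hx.2
      have hyv : y ≠ v := by rintro rfl; exact hvD hyD
      have e : (A ∩ D).erase v = {x, y} := by
        rw [Finset.erase_eq_of_notMem, hAD]
        simp [hvD]
      have := hg A hA D hD.2 hD.1.symm x (Finset.mem_erase.2 ⟨hxv, hAU x hx.1⟩) y
        (Finset.mem_erase.2 ⟨hyv, hAU y hyA⟩) hyx.symm hx.1 hx.2 hyA hyD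
      simp only [s, e]
      rw [Finset.sum_pair hyx.symm, this, zmod2_add_self]
    · have hz : z A D = 0 := by
        by_contra h
        exact hemp (hsupp A hA D hD.2 h).2
      rw [Finset.not_nonempty_iff_eq_empty] at hemp
      simp [s, hemp, hz]
  have htot : ∑ D ∈ M.Φ.erase A, (s D + z A D) = (s B + z A B) + (s C + z A C) :=
    Finset.sum_eq_add B C hBC hoth
      (fun h => absurd (Finset.mem_erase.2 ⟨hAB.symm, hB⟩) h)
      (fun h => absurd (Finset.mem_erase.2 ⟨hAC.symm, hC⟩) h)
  rw [Finset.sum_add_distrib, hs0, hz0, hsB, hsC] at htot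
  have h2 := zmod2_add_self (g u + g w)
  linear_combination (-1 : ZMod 2) * htot - h2

theorem exists_cut (z : Finset V → Finset V → ZMod 2)
    (hsym : ∀ A B, z A B = z B A)
    (hsum : ∀ A ∈ M.Φ, ∑ B ∈ M.Φ, z A B = 0)
    (hsupp : ∀ A ∈ M.Φ, ∀ B ∈ M.Φ, z A B ≠ 0 → A ≠ B ∧ (A ∩ B).Nonempty) :
    ∃ g : V → ZMod 2, ∀ A ∈ M.Φ, ∀ B ∈ M.Φ, A ≠ B → ∀ x y, x ≠ y →
      x ∈ A → x ∈ B → y ∈ A → y ∈ B → g x + g y = z A B := by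
  suffices H : ∀ n : ℕ, ∀ U : Finset V, U.card = n →
      (∀ x ∈ U, ∀ y, M.h x ≤ M.h y → y ∈ U) →
      ∃ g : V → ZMod 2, ∀ A ∈ M.Φ, ∀ B ∈ M.Φ, A ≠ B → ∀ x ∈ U, ∀ y ∈ U, x ≠ y →
      x ∈ A → x ∈ B → y ∈ A → y ∈ B → g x + g y = z A B by
    obtain ⟨g, hg⟩ := H _ Finset.univ rfl (fun _ _ _ _ => Finset.mem_univ _)
    exact ⟨g, fun A hA B hB hAB x y => hg A hA B hB hAB x (Finset.mem_univ _) y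
      (Finset.mem_univ _)⟩
  intro n
  induction n with
  | zero =>
    intro U hU _
    rw [Finset.card_eq_zero] at hU
    subst hU
    exact ⟨0, by simp⟩
  | succ n ih =>
    intro U hUc hU
    have hUne : U.Nonempty := by
      rw [← Finset.card_pos]; omega
    obtain ⟨v, hv, hmin⟩ := Finset.exists_min_image U M.h hUne
    obtain ⟨g, hg⟩ := ih (U.erase v) (by rw [Finset.card_erase_of_mem hv]; omega) (by
      intro x hx y hxy
      rw [Finset.mem_erase] at hx ⊢
      refine ⟨?_, hU x hx.2 y hxy⟩
      rintro rfl
      exact hx.1 (M.hinj (le_antisymm hxy (hmin x hx.2))))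
    by_cases hn : ∃ u ∈ U.erase v, ∃ A ∈ M.Φ, ∃ B ∈ M.Φ, A ≠ B ∧ v ∈ A ∧ v ∈ B ∧ u ∈ A ∧ u ∈ B
    · obtain ⟨u, hu, A, hA, B, hB, hAB, vA, vB, uA, uB⟩ := hn
      have huv : u ≠ v := (Finset.mem_erase.1 hu).1
      have fs := @facestep V _ _ M z hsum hsupp U hU v hv hmin g hg
      have key : ∀ w ∈ U.erase v, ∀ C ∈ M.Φ, ∀ D ∈ M.Φ, C ≠ D → v ∈ C → v ∈ D → w ∈ C → w ∈ D →
          g u + z A B + g w = z C D := by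
        intro w hw C hC D hD hCD vC vD wC wD
        have hwv : w ≠ v := (Finset.mem_erase.1 hw).1
        have aux : ∀ X ∈ M.Φ, ∀ Y ∈ M.Φ, X ≠ Y → v ∈ X → v ∈ Y → w ∈ X → w ∈ Y →
            X = A → g u + z A B + g w = z X Y := by
          intro X hX Y hY hXY vX vY wX wY hXA
          subst hXA
          by_cases hYB : Y = B
          · subst hYB
            have := M.pair hX hY hXY vX vY uA uB wX wY huv.symm
            have hwu : w = u := by grind
            subst hwu
            linear_combination zmod2_add_self (g w)
          · have h1 := fs hX hB hY hAB hXY (fun h => hYB h.symm) vX vB vY hu hw uA uB wX wY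
            linear_combination (-1 : ZMod 2) * h1 + zmod2_add_self (z X B)
        have aux2 : ∀ X ∈ M.Φ, ∀ Y ∈ M.Φ, X ≠ Y → v ∈ X → v ∈ Y → w ∈ X → w ∈ Y →
            X = B → g u + z A B + g w = z X Y := by
          intro X hX Y hY hXY vX vY wX wY hXB
          subst hXB
          by_cases hYA : Y = A
          · subst hYA
            have := M.pair hX hY hXY vX vY uB uA wX wY huv.symm
            have hwu : w = u := by grind
            subst hwu
            rw [hsym X Y]
            linear_combination zmod2_add_self (g w)
          · have h1 := fs hX hA hY hAB.symm hXY (fun h => hYA h.symm) vX vA vY hu hw uB uA wX wY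
            rw [hsym A X]
            linear_combination (-1 : ZMod 2) * h1 + zmod2_add_self (z X A)
        by_cases h1 : C = A
        · exact aux C hC D hD hCD vC vD wC wD h1
        by_cases h2 : C = B
        · exact aux2 C hC D hD hCD vC vD wC wD h2
        rcases M.no_four hA hB hC hD vA vB vC vD hAB (Ne.symm h1) (Ne.symm h2) with h | h | h
        · rw [hsym C D]
          exact aux D hD C hC hCD.symm vD vC wD wC h
        · rw [hsym C D]
          exact aux2 D hD C hC hCD.symm vD vC wD wC h
        · exact absurd h.symm hCD
      refine ⟨Function.update g v (g u + z A B), ?_⟩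
      intro C hC D hD hCD x hx y hy hxy xC xD yC yD
      by_cases hxv : x = v
      · subst hxv
        rw [Function.update_self, Function.update_of_ne hxy.symm]
        exact key y (Finset.mem_erase.2 ⟨hxy.symm, hy⟩) C hC D hD hCD xC xD yC yD
      · by_cases hyv : y = v
        · subst hyv
          rw [Function.update_self, Function.update_of_ne hxy, add_comm]
          exact key x (Finset.mem_erase.2 ⟨hxy, hx⟩) C hC D hD hCD yC yD xC xD
        · rw [Function.update_of_ne hxv, Function.update_of_ne hyv]
          exact hg C hC D hD hCD x (Finset.mem_erase.2 ⟨hxv, hx⟩) y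
            (Finset.mem_erase.2 ⟨hyv, hy⟩) hxy xC xD yC yD
    · refine ⟨g, ?_⟩
      intro C hC D hD hCD x hx y hy hxy xC xD yC yD
      by_cases hxv : x = v
      · subst hxv
        exact absurd ⟨y, Finset.mem_erase.2 ⟨hxy.symm, hy⟩, C, hC, D, hD, hCD, xC, xD, yC, yD⟩ hn
      · by_cases hyv : y = v
        · subst hyv
          exact absurd ⟨x, Finset.mem_erase.2 ⟨hxy, hx⟩, C, hC, D, hD, hCD, yC, yD, xC, xD⟩ hn
        · exact hg C hC D hD hCD x (Finset.mem_erase.2 ⟨hxv, hx⟩) y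
            (Finset.mem_erase.2 ⟨hyv, hy⟩) hxy xC xD yC yD

/-- A cut of the graph along a ring of facets. -/
structure Ring (k : ℕ) (S : Finset V) where
  F : ZMod k → Finset V
  u : ZMod k → V
  o : ZMod k → V
  hF : ∀ i, F i ∈ M.Φ
  inj : Function.Injective F
  uS : ∀ i, u i ∈ S
  oS : ∀ i, o i ∉ S
  uF : ∀ i, u i ∈ F i
  uF1 : ∀ i, u i ∈ F (i + 1)
  oF : ∀ i, o i ∈ F i
  oF1 : ∀ i, o i ∈ F (i + 1)
  complete : ∀ x ∈ S, ∀ y, y ∉ S → M.Adj x y → ∃ i, x = u i ∧ y = o i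

/-- the complementary ring -/
def Ring.compl {M : CMap V} {k : ℕ} {S : Finset V} (R : M.Ring k S) : M.Ring k Sᶜ where
  F := R.F
  u := R.o
  o := R.u
  hF := R.hF
  inj := R.inj
  uS := fun i => Finset.mem_compl.2 (R.oS i)
  oS := fun i h => Finset.mem_compl.1 h (R.uS i)
  uF := R.oF
  uF1 := R.oF1
  oF := R.uF
  oF1 := R.uF1
  complete := by
    intro x hx y hy hxy
    rw [Finset.mem_compl] at hx hy
    push Not at hy
    obtain ⟨i, h1, h2⟩ := R.complete y hy x hx hxy.symm
    exact ⟨i, h2, h1⟩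

theorem exists_ring (k : ℕ) [NeZero k] (h1 : (1 : ZMod k) ≠ 0) (h2 : (2 : ZMod k) ≠ 0)
    (F : ZMod k → Finset V) (hF : ∀ i, F i ∈ M.Φ) (hinj : Function.Injective F)
    (hadj : ∀ i, (F i ∩ F (i + 1)).Nonempty) :
    ∃ S : Finset V, ∃ R : M.Ring k S, R.F = F := by
  let z : Finset V → Finset V → ZMod 2 := fun A B =>
    ∑ i : ZMod k, ((if A = F i ∧ B = F (i + 1) then 1 else 0) +
      (if B = F i ∧ A = F (i + 1) then 1 else 0))
  have hsym : ∀ A B, z A B = z B A := by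
    intro A B
    simp only [z]
    exact Finset.sum_congr rfl (fun i _ => add_comm _ _)
  have hsum : ∀ A ∈ M.Φ, ∑ B ∈ M.Φ, z A B = 0 := by
    intro A hA
    simp only [z]
    rw [Finset.sum_comm]
    have e : ∀ i : ZMod k, ∑ B ∈ M.Φ, (((if A = F i ∧ B = F (i + 1) then 1 else 0) +
      (if B = F i ∧ A = F (i + 1) then 1 else 0) : ZMod 2)) =
        (if A = F i then 1 else 0) + (if A = F (i + 1) then 1 else 0) := by
      intro i
      rw [Finset.sum_add_distrib]
      congr 1
      · by_cases h : A = F i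
        · simp [h, hF]
        · simp [h]
      · by_cases h : A = F (i + 1)
        · simp [h, hF]
        · simp [h]
    simp_rw [e]
    rw [Finset.sum_add_distrib]
    have := Equiv.sum_comp (Equiv.addRight (1 : ZMod k))
      (fun i => (if A = F i then 1 else 0 : ZMod 2))
    simp only [Equiv.coe_addRight] at this
    have h3 := zmod2_add_self (∑ i : ZMod k, (if A = F i then 1 else 0 : ZMod 2))
    nth_rewrite 2 [← this] at h3
    exact h3
  have hne1 : ∀ i : ZMod k, i + 1 ≠ i := fun i h => h1 (by simpa using h)
  have hsupp' : ∀ A B, z A B ≠ 0 → ∃ i, (A = F i ∧ B = F (i + 1)) ∨ (B = F i ∧ A = F (i + 1)) := by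
    intro A B h
    by_contra hc
    push Not at hc
    apply h
    apply Finset.sum_eq_zero
    intro i _
    rw [if_neg (fun hh => (hc i).1 hh.1 hh.2), if_neg (fun hh => (hc i).2 hh.1 hh.2), add_zero]
  have hz1 : ∀ i, z (F i) (F (i + 1)) = 1 := by
    intro i
    simp only [z]
    rw [Finset.sum_eq_single i]
    · rw [if_pos ⟨rfl, rfl⟩, if_neg (fun hh => hne1 i (hinj hh.1)), add_zero]
    · intro j _ hj
      rw [if_neg (fun hh => hj (hinj hh.1).symm), if_neg, add_zero]
      rintro ⟨ha, hb⟩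
      have e1 := hinj ha
      have e2 := hinj hb
      apply h2
      rw [← e1] at e2
      linear_combination -e2
    · intro h
      exact absurd (Finset.mem_univ _) h
  obtain ⟨g, hg⟩ := M.exists_cut z hsym hsum (by
    intro A hA B hB h
    obtain ⟨i, h | h⟩ := hsupp' A B h
    · rw [h.1, h.2]
      exact ⟨fun hh => hne1 i (hinj hh).symm, hadj i⟩
    · rw [h.1, h.2]
      exact ⟨fun hh => hne1 i (hinj hh), by rw [Finset.inter_comm]; exact hadj i⟩)
  let S : Finset V := Finset.univ.filter (fun v => g v = 0)
  have hS : ∀ v, v ∈ S ↔ g v = 0 := fun v => by simp [S]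
  have two : ∀ a : ZMod 2, a = 0 ∨ a = 1 := by decide
  have hex : ∀ i, ∃ u o, u ∈ S ∧ o ∉ S ∧ u ∈ F i ∧ u ∈ F (i + 1) ∧ o ∈ F i ∧ o ∈ F (i + 1) := by
    intro i
    obtain ⟨x, hx⟩ := hadj i
    rw [Finset.mem_inter] at hx
    have hFne : F i ≠ F (i + 1) := fun hh => hne1 i (hinj hh).symm
    obtain ⟨y, hyx, hy1, hy2, -⟩ := M.other (hF i) (hF (i + 1)) hFne hx.1 hx.2
    have := hg _ (hF i) _ (hF (i + 1)) hFne x y hyx.symm hx.1 hx.2 hy1 hy2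
    rw [hz1] at this
    rcases two (g x) with h | h
    · refine ⟨x, y, (hS x).2 h, ?_, hx.1, hx.2, hy1, hy2⟩
      rw [hS]
      rw [h, zero_add] at this
      rw [this]
      exact one_ne_zero
    · refine ⟨y, x, ?_, ?_, hy1, hy2, hx.1, hx.2⟩
      · rw [hS]
        rw [h] at this
        simpa using this
      · rw [hS, h]
        exact one_ne_zero
  choose u o huS hoS huF huF1 hoF hoF1 using hex
  refine ⟨S, ⟨F, u, o, hF, hinj, huS, hoS, huF, huF1, hoF, hoF1, ?_⟩, rfl⟩
  intro x hx y hy ⟨hxy, A, hA, B, hB, hAB, xA, xB, yA, yB⟩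
  have hzAB := hg A hA B hB hAB x y hxy xA xB yA yB
  rw [hS] at hx hy
  rw [hx, zero_add] at hzAB
  have h0 : z A B ≠ 0 := by rw [← hzAB]; exact hy
  have fin : ∀ i, x ∈ F i → x ∈ F (i + 1) → y ∈ F i → y ∈ F (i + 1) → x = u i ∧ y = o i := by
    intro i a b c d
    have hFne : F i ≠ F (i + 1) := fun hh => hne1 i (hinj hh).symm
    have huo : u i ≠ o i := fun h => hoS i (h ▸ huS i)
    have p1 := M.pair (hF i) (hF (i + 1)) hFne (huF i) (huF1 i) (hoF i) (hoF1 i) a b huo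
    have p2 := M.pair (hF i) (hF (i + 1)) hFne (huF i) (huF1 i) (hoF i) (hoF1 i) c d huo
    have q1 := huS i
    have q2 := hoS i
    rw [hS] at q1 q2
    grind
  obtain ⟨i, ⟨rfl, rfl⟩ | ⟨rfl, rfl⟩⟩ := hsupp' A B h0
  · exact ⟨i, fin i xA xB yA yB⟩
  · exact ⟨i, fin i xB xA yB yA⟩

end CMap
end FB

namespace FB
variable {V : Type*} [Fintype V] [DecidableEq V]
namespace CMap

/-- facet sizes: all `5` or `6` except possibly `X`, of size between `4` and `7` -/
structure Good (M : CMap V) (X : Finset V) : Prop where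
  hX : X ∈ M.Φ
  ge4 : 4 ≤ X.card
  le7 : X.card ≤ 7
  rest : ∀ A ∈ M.Φ, A ≠ X → A.card = 5 ∨ A.card = 6

theorem Good.ge {M : CMap V} {X : Finset V} (h : M.Good X) {A : Finset V} (hA : A ∈ M.Φ) :
    4 ≤ A.card := by
  by_cases e : A = X
  · rw [e]; exact h.ge4
  · have := h.rest A hA e; omega

theorem Good.eqX {M : CMap V} {X : Finset V} (h : M.Good X) {A : Finset V} (hA : A ∈ M.Φ)
    (hc : A.card ≤ 4) : A = X := by
  by_contra e
  have := h.rest A hA e; omega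

/-- small cyclic index sets -/
structure KOK (k : ℕ) : Prop where
  k34 : k = 3 ∨ k = 4

theorem KOK.one {k : ℕ} (h : KOK k) : (1 : ZMod k) ≠ 0 := by
  rcases h.k34 with rfl | rfl <;> decide
theorem KOK.two {k : ℕ} (h : KOK k) : (2 : ZMod k) ≠ 0 := by
  rcases h.k34 with rfl | rfl <;> decide
theorem KOK.all {k : ℕ} (h : KOK k) : ∀ j : ZMod k, j = 0 ∨ j = 1 ∨ j = 2 ∨ j = -1 := by
  rcases h.k34 with rfl | rfl <;> decide
theorem KOK.ne1 {k : ℕ} (h : KOK k) (i : ZMod k) : i ≠ i + 1 := fun e => h.one (by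
  linear_combination -e)
theorem KOK.ne2 {k : ℕ} (h : KOK k) (i : ZMod k) : i ≠ i + 1 + 1 := fun e => h.two (by
  linear_combination -e)
theorem KOK.cases {k : ℕ} (h : KOK k) (i j : ZMod k) :
    j = i ∨ j = i + 1 ∨ j = i + 1 + 1 ∨ j = i - 1 := by
  rcases h.all (j - i) with e | e | e | e
  · left; linear_combination e
  · right; left; linear_combination e
  · right; right; left; linear_combination e
  · right; right; right; linear_combination e

namespace Ring
variable {M : CMap V} {k : ℕ} {S : Finset V} (R : M.Ring k S)

theorem Fne (hk : KOK k) (i : ZMod k) : R.F i ≠ R.F (i + 1) := fun h => hk.ne1 i (R.inj h)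

theorem uo (i j : ZMod k) : R.u i ≠ R.o j := fun h => R.oS j (h ▸ R.uS i)

/-- in `F i ∩ F (i+1)` the only vertex in `S` is `u i` -/
theorem eq_u (hk : KOK k) {i : ZMod k} {x : V} (hx : x ∈ S) (h1 : x ∈ R.F i)
    (h2 : x ∈ R.F (i + 1)) : x = R.u i := by
  rcases M.pair (R.hF i) (R.hF (i + 1)) (R.Fne hk i) (R.uF i) (R.uF1 i) (R.oF i) (R.oF1 i)
    h1 h2 (R.uo i i) with h | h
  · exact h
  · rw [h] at hx
    exact absurd hx (R.oS i)

theorem cut (hk : KOK k) {A B : Finset V} (hA : A ∈ M.Φ) (hB : B ∈ M.Φ) (hAB : A ≠ B)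
    {x y : V} (hx : x ∈ S) (hy : y ∉ S) (xA : x ∈ A) (xB : x ∈ B) (yA : y ∈ A) (yB : y ∈ B) :
    ∃ i, x = R.u i ∧ y = R.o i ∧ ((A = R.F i ∧ B = R.F (i + 1)) ∨
      (B = R.F i ∧ A = R.F (i + 1))) := by
  have hxy : x ≠ y := by rintro rfl; exact hy hx
  obtain ⟨i, h1, h2⟩ := R.complete x hx y hy ⟨hxy, A, hA, B, hB, hAB, xA, xB, yA, yB⟩
  refine ⟨i, h1, h2, ?_⟩
  have key : ∀ C ∈ M.Φ, x ∈ C → y ∈ C → C = R.F i ∨ C = R.F (i + 1) := by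
    intro C hC xC yC
    by_contra hc
    push Not at hc
    subst h1 h2
    exact hxy (M.inter3 C hC _ (R.hF i) _ (R.hF (i + 1)) hc.1 hc.2 (R.Fne hk i) _ _
      xC (R.uF i) (R.uF1 i) yC (R.oF i) (R.oF1 i))
  rcases key A hA xA yA with a | a <;> rcases key B hB xB yB with b | b
  · exact absurd (a.trans b.symm) hAB
  · exact Or.inl ⟨a, b⟩
  · exact Or.inr ⟨b, a⟩
  · exact absurd (a.trans b.symm) hAB

theorem inner (hk : KOK k) {A : Finset V} (hA : A ∈ M.Φ) (hnr : ∀ i, A ≠ R.F i) {x : V}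
    (hx : x ∈ S) (xA : x ∈ A) : A ⊆ S := by
  have := M.conn (A := A) (T := A ∩ S) hA Finset.inter_subset_left
    ⟨x, by simp [hx, xA]⟩ (by
      intro x hx B hB hBA xB y yA yB
      rw [Finset.mem_inter] at hx ⊢
      refine ⟨yA, ?_⟩
      by_contra hy
      obtain ⟨i, -, -, h | h⟩ := R.cut hk hA hB hBA.symm hx.2 hy hx.1 xB yA yB
      · exact hnr _ h.1
      · exact hnr _ h.2)
  rw [← this]
  exact Finset.inter_subset_right

theorem card_le [NeZero k] (R : M.Ring k S) (hS : S ∈ M.Φ) : S.card ≤ k := by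
  have : S ⊆ Finset.univ.image R.u := by
    intro x hx
    obtain ⟨B, hB, C, hC, h1, h2, h3, xB, xC, -⟩ := M.two_more hS hx
    obtain ⟨y, hyx, yB, yC, -⟩ := M.other hB hC h3 xB xC
    have hy : y ∉ S := fun hy => hyx (M.inter3 S hS B hB C hC h1.symm h2.symm h3 y x hy yB yC
      hx xB xC)
    obtain ⟨i, hi, -⟩ := R.complete x hx y hy ⟨hyx.symm, B, hB, C, hC, h3, xB, xC, yB, yC⟩
    exact Finset.mem_image.2 ⟨i, Finset.mem_univ _, hi.symm⟩
  calc S.card ≤ (Finset.univ.image R.u).card := Finset.card_le_card this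
    _ ≤ (Finset.univ : Finset (ZMod k)).card := Finset.card_image_le
    _ = k := by rw [Finset.card_univ, ZMod.card]

theorem u_mem (hk : KOK k) (hu : Function.Injective R.u) {i j : ZMod k} (h : R.u i ∈ R.F j) :
    j = i ∨ j = i + 1 := by
  rcases hk.cases i j with e | e | e | e
  · exact Or.inl e
  · exact Or.inr e
  · subst e
    have := hu (R.eq_u hk (R.uS i) (R.uF1 i) h)
    exact absurd this (hk.ne1 i)
  · subst e
    have := hu (R.eq_u hk (i := i - 1) (R.uS i) h (by simpa using R.uF i))
    exact absurd this (fun h => hk.one (by linear_combination h))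

/-- the third facets at the vertices `u i` -/
theorem exists_G (hk : KOK k) (hu : Function.Injective R.u) : ∃ G : ZMod k → Finset V,
    (∀ i, G i ∈ M.Φ) ∧ (∀ i j, G i ≠ R.F j) ∧ (∀ i, R.u i ∈ G i) ∧ (∀ i, G i ⊆ S) ∧
    (∀ i, ∀ D ∈ M.Φ, R.u i ∈ D → D = R.F i ∨ D = R.F (i + 1) ∨ D = G i) := by
  have : ∀ i, ∃ C ∈ M.Φ, C ≠ R.F i ∧ C ≠ R.F (i + 1) ∧ R.u i ∈ C ∧
      ∀ D ∈ M.Φ, R.u i ∈ D → D = R.F i ∨ D = R.F (i + 1) ∨ D = C := fun i =>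
    M.third (R.hF i) (R.hF (i + 1)) (R.Fne hk i) (R.uF i) (R.uF1 i)
  choose G hG h1 h2 h3 h4 using this
  have h5 : ∀ i j, G i ≠ R.F j := by
    intro i j h
    have := h3 i
    rw [h] at this
    rcases R.u_mem hk hu this with rfl | rfl
    · exact h1 _ h
    · exact h2 _ h
  exact ⟨G, hG, h5, h3, fun i => R.inner hk (hG i) (h5 i) (R.uS i) (h3 i), h4⟩

/-- the potential -/
def W [NeZero k] (R : M.Ring k S) (X : Finset V) : ℕ :=
  ∑ i, (R.F i ∩ S).card + if X ⊆ S then 1 else 0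

theorem slide_ring (hk : KOK k) (hu : Function.Injective R.u) (i : ZMod k)
    (hb : R.F i ∩ S = {R.u (i - 1), R.u i}) {G : Finset V} (hG : G ∈ M.Φ)
    (hnr : ∀ j, G ≠ R.F j) (hGS : G ⊆ S) (pG : R.u (i - 1) ∈ G) (qG : R.u i ∈ G) :
    ∃ R' : M.Ring k (S \ {R.u (i - 1), R.u i}), R'.F = Function.update R.F i G := by
  have him : i - 1 ≠ i := fun h => hk.one (by linear_combination -h)
  have e1 : i - 1 + 1 = i := by ring
  have pF : R.u (i - 1) ∈ R.F i := by have := R.uF1 (i - 1); rwa [e1] at this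
  have ip : i + 1 ≠ i := (hk.ne1 i).symm
  have imp : i - 1 ≠ i + 1 := fun h => hk.two (by linear_combination -h)
  obtain ⟨y, hyp, yF, yG, -⟩ := M.other (R.hF (i - 1)) hG (hnr _).symm (R.uF (i - 1)) pG
  obtain ⟨z, hzq, zF, zG, -⟩ := M.other (R.hF (i + 1)) hG (hnr _).symm (R.uF1 i) qG
  have hyq : y ≠ R.u i := by
    rintro rfl
    rcases R.u_mem hk hu yF with h | h
    · exact him h
    · exact imp h
  have hzp : z ≠ R.u (i - 1) := by
    rintro rfl
    rcases R.u_mem hk hu zF with h | h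
    · exact imp h.symm
    · rw [e1] at h; exact ip h
  refine ⟨⟨Function.update R.F i G,
    fun j => if j = i - 1 then y else if j = i then z else R.u j,
    fun j => if j = i - 1 then R.u (i - 1) else if j = i then R.u i else R.o j,
    ?_, ?_, ?_, ?_, ?_, ?_, ?_, ?_, ?_⟩, rfl⟩
  · intro j
    by_cases h : j = i
    · subst h; simpa using hG
    · simpa [h] using R.hF j
  · intro a b hab
    by_cases ha : a = i <;> by_cases hb : b = i
    · rw [ha, hb]
    · subst ha; simp [hb] at hab; exact absurd hab (hnr _)
    · subst hb; simp [ha] at hab; exact absurd hab.symm (hnr _)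
    · simp [ha, hb] at hab; exact R.inj hab
  · intro j
    split_ifs with h1 h2
    · simp [hGS yG, hyp, hyq]
    · simp [hGS zG, hzp, hzq]
    · simp only [Finset.mem_sdiff, Finset.mem_insert, Finset.mem_singleton, not_or]
      exact ⟨R.uS j, fun h => h1 (hu h), fun h => h2 (hu h)⟩
  · intro j
    split_ifs with h1 h2
    · simp
    · simp
    · simp [R.oS j]
  · intro j
    split_ifs with h1 h2
    · rw [h1, Function.update_of_ne him]; exact yF
    · rw [h2, Function.update_self]; exact zG
    · rw [Function.update_of_ne h2]; exact R.uF j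
  · intro j
    split_ifs with h1 h2
    · rw [h1, e1, Function.update_self]; exact yG
    · rw [h2, Function.update_of_ne ip]; exact zF
    · rw [Function.update_of_ne (fun h => h1 (by rw [← h]; ring))]; exact R.uF1 j
  · intro j
    split_ifs with h1 h2
    · rw [h1, Function.update_of_ne him]; exact R.uF _
    · rw [h2, Function.update_self]; exact qG
    · rw [Function.update_of_ne h2]; exact R.oF j
  · intro j
    split_ifs with h1 h2
    · rw [h1, e1, Function.update_self]; exact pG
    · rw [h2, Function.update_of_ne ip]; exact R.uF1 _
    · rw [Function.update_of_ne (fun h => h1 (by rw [← h]; ring))]; exact R.oF1 j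
  · intro a ha b hb' hab
    simp only [Finset.mem_sdiff, Finset.mem_insert, Finset.mem_singleton, not_or] at ha hb'
    have aF : a ∉ R.F i := by
      intro h
      have : a ∈ R.F i ∩ S := by simp [h, ha.1]
      rw [hb] at this
      simp at this
      grind
    by_cases hbS : b ∈ S
    · have : b = R.u (i - 1) ∨ b = R.u i := by tauto
      obtain ⟨hne, A, hA, B, hB, hAB, aA, aB, bA, bB⟩ := hab
      rcases this with rfl | rfl
      · refine ⟨i - 1, ?_, by simp⟩
        have f1 := M.no_four (R.hF (i - 1)) (R.hF i) hG hA (R.uF _) pF pG bA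
          (fun h => him (R.inj h)) (hnr _).symm (hnr _).symm
        have f2 := M.no_four (R.hF (i - 1)) (R.hF i) hG hB (R.uF _) pF pG bB
          (fun h => him (R.inj h)) (hnr _).symm (hnr _).symm
        have aa : a ∈ R.F (i - 1) ∧ a ∈ G := by
          rcases f1 with rfl | rfl | rfl <;> rcases f2 with rfl | rfl | rfl <;> tauto
        have := M.pair (R.hF (i - 1)) hG (hnr _).symm (R.uF _) pG yF yG aa.1 aa.2 hyp.symm
        simp; tauto
      · refine ⟨i, ?_, by simp [him.symm]⟩
        have f1 := M.no_four (R.hF i) (R.hF (i + 1)) hG hA (R.uF _) (R.uF1 _) qG bA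
          (fun h => ip.symm (R.inj h)) (hnr _).symm (hnr _).symm
        have f2 := M.no_four (R.hF i) (R.hF (i + 1)) hG hB (R.uF _) (R.uF1 _) qG bB
          (fun h => ip.symm (R.inj h)) (hnr _).symm (hnr _).symm
        have aa : a ∈ R.F (i + 1) ∧ a ∈ G := by
          rcases f1 with rfl | rfl | rfl <;> rcases f2 with rfl | rfl | rfl <;> tauto
        have := M.pair (R.hF (i + 1)) hG (hnr _).symm (R.uF1 _) qG zF zG aa.1 aa.2 hzq.symm
        simp [him.symm]; tauto
    · obtain ⟨j, rfl, rfl⟩ := R.complete a ha.1 b hbS hab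
      have h1 : j ≠ i - 1 := by rintro rfl; exact ha.2.1 rfl
      have h2 : j ≠ i := by rintro rfl; exact ha.2.2 rfl
      exact ⟨j, by simp [h1, h2], by simp [h1, h2]⟩

end Ring
end CMap
end FB

namespace FB
variable {V : Type*} [Fintype V] [DecidableEq V]
namespace CMap
namespace Ring
variable {M : CMap V} {k : ℕ} {S : Finset V}

theorem slide_count [NeZero k] (R : M.Ring k S) (hk : KOK k) (hu : Function.Injective R.u)
    (i : ZMod k)
    (hb : R.F i ∩ S = {R.u (i - 1), R.u i}) {G : Finset V} (hGS : G ⊆ S)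
    (pG : R.u (i - 1) ∈ G) (qG : R.u i ∈ G) 
    (R' : M.Ring k (S \ {R.u (i - 1), R.u i})) (hR' : R'.F = Function.update R.F i G) :
    ∑ j, (R'.F j ∩ (S \ {R.u (i - 1), R.u i})).card + 6 ≤ ∑ j, (R.F j ∩ S).card + G.card := by
  have him : i - 1 ≠ i := fun h => hk.one (by linear_combination -h)
  have ip : i + 1 ≠ i := (hk.ne1 i).symm
  have imp : i - 1 ≠ i + 1 := fun h => hk.two (by linear_combination -h)
  have hpq : R.u (i - 1) ≠ R.u i := fun h => him (hu h)
  have key : ∀ j, (R'.F j ∩ (S \ {R.u (i - 1), R.u i})).card + ((if j = i - 1 then 1 else 0) +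
      (if j = i + 1 then 1 else 0) + (if j = i then 4 else 0)) ≤
      (R.F j ∩ S).card + (if j = i then G.card else 0) := by
    intro j
    rw [hR']
    by_cases h1 : j = i
    · subst h1
      rw [Function.update_self, hb, Finset.card_pair hpq]
      have : (G ∩ (S \ {R.u (j - 1), R.u j})) = (G.erase (R.u (j - 1))).erase (R.u j) := by
        ext x
        simp only [Finset.mem_inter, Finset.mem_sdiff, Finset.mem_insert, Finset.mem_singleton,
          Finset.mem_erase]
        have := @hGS x
        tauto
      rw [this, Finset.card_erase_of_mem (by simp [hpq.symm, qG]), Finset.card_erase_of_mem pG]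
      have : 2 ≤ G.card := by
        rw [← Finset.card_pair hpq]
        apply Finset.card_le_card
        intro x; simp; rintro (rfl | rfl) <;> assumption
      simp [him.symm, ip.symm]
      omega
    · rw [Function.update_of_ne h1]
      simp only [h1, if_false, add_zero]
      have hlt : ∀ l, R.u l ∈ R.F j → (l = i - 1 ∨ l = i) →
          (R.F j ∩ (S \ {R.u (i - 1), R.u i})).card + 1 ≤ (R.F j ∩ S).card := by
        intro l hl hl2
        apply Finset.card_lt_card
        rw [Finset.ssubset_iff_of_subset (Finset.inter_subset_inter_left Finset.sdiff_subset)]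
        refine ⟨R.u l, by simp [hl, R.uS], ?_⟩
        rcases hl2 with rfl | rfl <;> simp
      by_cases h2 : j = i - 1
      · subst h2
        simp only [imp, if_true, if_false, add_zero]
        exact hlt _ (R.uF _) (Or.inl rfl)
      · by_cases h3 : j = i + 1
        · subst h3
          simp only [imp.symm, if_true, if_false, zero_add]
          exact hlt i (R.uF1 _) (Or.inr rfl)
        · simp only [h2, h3, if_false, add_zero]
          exact Finset.card_le_card (Finset.inter_subset_inter_left Finset.sdiff_subset)
  have := Finset.sum_le_sum (fun j (_ : j ∈ Finset.univ) => key j)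
  simp only [Finset.sum_add_distrib, Finset.sum_ite_eq', Finset.mem_univ, if_true] at this
  omega

/-- if `F (i+1) ∩ S` has three elements, the middle one lies on both `G i` and `G (i+1)` -/
theorem middle (R : M.Ring k S) (hk : KOK k) (hu : Function.Injective R.u)
    {G : ZMod k → Finset V}
    (h4 : ∀ i, ∀ D ∈ M.Φ, R.u i ∈ D → D = R.F i ∨ D = R.F (i + 1) ∨ D = G i)
    (i : ZMod k) (h3 : (R.F (i + 1) ∩ S).card = 3) :
    ∃ w, R.F (i + 1) ∩ S = {R.u i, w, R.u (i + 1)} ∧ w ∈ G i ∧ w ∈ G (i + 1) ∧ w ∈ R.F (i + 1) ∧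
      G i ≠ G (i + 1) ∧ w ∈ S ∧
      (∀ D ∈ M.Φ, w ∈ D → D = R.F (i + 1) ∨ D = G i ∨ D = G (i + 1)) := by
  have hne : R.u i ≠ R.u (i + 1) := fun h => hk.ne1 i (hu h)
  have hsub : ({R.u i, R.u (i + 1)} : Finset V) ⊆ R.F (i + 1) ∩ S := by
    intro x
    simp only [Finset.mem_insert, Finset.mem_singleton, Finset.mem_inter]
    rintro (rfl | rfl)
    · exact ⟨R.uF1 _, R.uS _⟩
    · exact ⟨R.uF _, R.uS _⟩
  have hcard : ((R.F (i + 1) ∩ S) \ {R.u i, R.u (i + 1)}).card = 1 := by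
    rw [Finset.card_sdiff_of_subset hsub, h3, Finset.card_pair hne]
  obtain ⟨w, hw⟩ := Finset.card_eq_one.1 hcard
  have hmem : ∀ x, x ∈ R.F (i + 1) → x ∈ S → x = R.u i ∨ x = w ∨ x = R.u (i + 1) := by
    intro x a b
    have := Finset.ext_iff.1 hw x
    simp only [Finset.mem_sdiff, Finset.mem_inter, Finset.mem_insert, Finset.mem_singleton] at this
    tauto
  have hw' := Finset.ext_iff.1 hw w
  simp only [Finset.mem_sdiff, Finset.mem_inter, Finset.mem_insert, Finset.mem_singleton,
    iff_true, not_or] at hw'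
  obtain ⟨⟨wF, wS⟩, wn1, wn2⟩ := hw'
  obtain ⟨B, hB, C, hC, hBF, hCF, hBC, wB, wC, hall⟩ := M.two_more (R.hF (i + 1)) wF
  have side : ∀ B ∈ M.Φ, B ≠ R.F (i + 1) → w ∈ B →
      (R.u i ∈ B ∧ B = G i) ∨ (R.u (i + 1) ∈ B ∧ B = G (i + 1)) := by
    intro B hB hBF wB
    obtain ⟨p, hpw, pF, pB, -⟩ := M.other (R.hF (i + 1)) hB hBF.symm wF wB
    have hpS : p ∈ S := by
      by_contra hp
      obtain ⟨j, h1, -, h | h⟩ := R.cut hk (R.hF (i + 1)) hB hBF.symm wS hp wF wB pF pB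
      · have := R.inj h.1
        rw [← this] at h1
        exact wn2 h1
      · have := R.inj h.2
        have : i = j := by linear_combination this
        rw [← this] at h1
        exact wn1 h1
    rcases hmem p pF hpS with rfl | rfl | rfl
    · left
      refine ⟨pB, ?_⟩
      rcases h4 i B hB pB with h | h | h
      · subst h
        exact absurd (R.eq_u hk wS wB wF) wn1
      · exact absurd h hBF
      · exact h
    · exact absurd rfl hpw
    · right
      refine ⟨pB, ?_⟩
      rcases h4 (i + 1) B hB pB with h | h | h
      · exact absurd h hBF
      · subst h
        exact absurd (R.eq_u hk wS wF wB) wn2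
      · exact h
  have hset : R.F (i + 1) ∩ S = {R.u i, w, R.u (i + 1)} := by
    ext x
    simp only [Finset.mem_inter, Finset.mem_insert, Finset.mem_singleton]
    constructor
    · rintro ⟨a, b⟩; exact hmem x a b
    · rintro (rfl | rfl | rfl)
      · exact ⟨R.uF1 _, R.uS _⟩
      · exact ⟨wF, wS⟩
      · exact ⟨R.uF _, R.uS _⟩
  refine ⟨w, hset, ?_⟩
  have sB := side B hB hBF wB
  have sC := side C hC hCF wC
  rcases sB with ⟨b1, b2⟩ | ⟨b1, b2⟩ <;> rcases sC with ⟨c1, c2⟩ | ⟨c1, c2⟩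
  · exact absurd (b2.trans c2.symm) hBC
  · rw [← b2, ← c2]
    exact ⟨wB, wC, wF, hBC, wS, hall⟩
  · rw [← b2, ← c2]
    exact ⟨wC, wB, wF, hBC.symm, wS, fun D hD hwD => by have := hall D hD hwD; tauto⟩
  · exact absurd (b2.trans c2.symm) hBC

theorem peel [NeZero k] (R : M.Ring k S) (hk : KOK k) {X : Finset V} (hX : M.Good X)
    (hu : Function.Injective R.u)
    (h3 : ∀ i, (R.F i ∩ S).card = 3) (hXS : ¬ X ⊆ S) :
    ∃ S' : Finset V, ∃ R' : M.Ring k S', S' ⊂ S ∧ (∀ i, (R'.F i ∩ S').card = 2 ∨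
      (R'.F i ∩ S').card = 3) := by
  obtain ⟨G, hG, hnr, uG, hGS, h4⟩ := R.exists_G hk hu
  choose w hw w1 w2 wF hGG wS hall using fun i => R.middle hk hu h4 i (h3 (i + 1))
  have hwu : ∀ i j, w i ≠ R.u j := by
    intro i j h
    have a := hall i (R.F j) (R.hF j) (h ▸ R.uF j)
    have b := hall i (R.F (j + 1)) (R.hF _) (h ▸ R.uF1 j)
    have a' : R.F j = R.F (i + 1) := by
      rcases a with a | a | a
      · exact a
      · exact absurd a.symm (hnr _ _)
      · exact absurd a.symm (hnr _ _)
    have b' : R.F (j + 1) = R.F (i + 1) := by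
      rcases b with a | a | a
      · exact a
      · exact absurd a.symm (hnr _ _)
      · exact absurd a.symm (hnr _ _)
    exact R.Fne hk j (a'.trans b'.symm)
  have hww : ∀ i j, w i ∈ R.F j → j = i + 1 := by
    intro i j h
    rcases hall i (R.F j) (R.hF j) h with a | a | a
    · exact R.inj a
    · exact absurd a.symm (hnr _ _)
    · exact absurd a.symm (hnr _ _)
  have winj : ∀ i, w i ≠ w (i + 1) := by
    intro i h
    have := hww (i + 1) (i + 1) (h ▸ wF i)
    exact hk.ne1 (i + 1) this
  have hGX : ∀ i, G i ≠ X := fun i h => hXS (h ▸ hGS i)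
  have hG2 : ∀ i, G i ≠ G (i + 1 + 1) := by
    intro i h
    have tri := M.triangle (hG (i + 1)) (R.hF (i + 1)) (hG i) (R.hF (i + 1 + 1))
      (uG (i + 1)) (w2 i) (w1 (i + 1)) (R.uF _) (wF i) (w1 i) (by rw [h]; exact w2 (i + 1))
      (R.uF1 _) (wF (i + 1)) (hnr _ _).symm (hGG i) (hnr _ _).symm (hwu _ _).symm (winj i)
      (hwu _ _).symm
    have c4 := hX.ge (hG (i + 1))
    rw [tri] at c4
    have := Finset.card_le_three (a := R.u (i + 1)) (b := w i) (c := w (i + 1))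
    omega
  have Ginj : Function.Injective G := by
    intro i j h
    rcases hk.cases i j with e | e | e | e
    · exact e.symm
    · subst e; exact absurd h (hGG i)
    · subst e; exact absurd h (hG2 i)
    · have : i = j + 1 := by rw [e]; ring
      subst this
      exact absurd h.symm (hGG j)
  choose x hxw xG xG1 hxx using fun i => M.other (hG i) (hG (i + 1)) (hGG i) (w1 i) (w2 i)
  have hFS : ∀ j p, p ∈ R.F j → p ∈ S → ∃ l, p = R.u l ∨ p = w l := by
    intro j p pF pS
    have : p ∈ R.F (j - 1 + 1) ∩ S := by
      rw [show j - 1 + 1 = j by ring]; simp [pF, pS]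
    rw [hw] at this
    simp only [Finset.mem_insert, Finset.mem_singleton] at this
    rcases this with h | h | h
    · exact ⟨_, Or.inl h⟩
    · exact ⟨_, Or.inr h⟩
    · exact ⟨_, Or.inl h⟩
  have uGi : ∀ l i, R.u l ∈ G i → l = i := by
    intro l i h
    rcases h4 l (G i) (hG i) h with h | h | h
    · exact absurd h (hnr _ _)
    · exact absurd h (hnr _ _)
    · exact (Ginj h).symm
  have wGi : ∀ l i, w l ∈ G i → i = l ∨ i = l + 1 := by
    intro l i h
    rcases hall l (G i) (hG i) h with h | h | h
    · exact absurd h (hnr _ _)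
    · exact Or.inl (Ginj h)
    · exact Or.inr (Ginj h)
  have xF : ∀ i j, x i ∉ R.F j := by
    intro i j h
    obtain ⟨l, e | e⟩ := hFS j (x i) h (hGS i (xG i))
    · have a := uGi l i (e ▸ xG i)
      have b := uGi l (i + 1) (e ▸ xG1 i)
      exact hk.ne1 i (a.symm.trans b)
    · have a := wGi l i (e ▸ xG i)
      have b := wGi l (i + 1) (e ▸ xG1 i)
      rcases a with rfl | rfl
      · exact hxw _ e
      · rcases b with b | b
        · exact hk.ne2 l b.symm
        · exact hk.ne1 (l + 1) b.symm
  let S' : Finset V := S.filter (fun p => ∀ j, p ∉ R.F j)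
  have hS' : ∀ p, p ∈ S' ↔ p ∈ S ∧ ∀ j, p ∉ R.F j := fun p => by simp [S']
  refine ⟨S', ⟨G, x, w, hG, Ginj, fun i => (hS' _).2 ⟨hGS i (xG i), xF i⟩,
    fun i h => ((hS' _).1 h).2 _ (wF i), xG, xG1, w1, w2, ?_⟩, ?_, ?_⟩
  · intro p hp q hq ⟨hpq, A, hA, B, hB, hAB, pA, pB, qA, qB⟩
    rw [hS'] at hp hq
    have hqS : q ∈ S := by
      by_contra hqS
      obtain ⟨j, h, -⟩ := R.cut hk hA hB hAB hp.1 hqS pA pB qA qB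
      exact hp.2 j (h ▸ R.uF j)
    have : ∃ j, q ∈ R.F j := by
      by_contra hc
      push Not at hc
      exact hq ⟨hqS, hc⟩
    obtain ⟨j, hj⟩ := this
    obtain ⟨l, rfl | rfl⟩ := hFS j q hj hqS
    · have a := h4 l A hA qA
      have b := h4 l B hB qB
      exfalso
      rcases a with rfl | rfl | rfl
      · exact hp.2 _ pA
      · exact hp.2 _ pA
      · rcases b with rfl | rfl | rfl
        · exact hp.2 _ pB
        · exact hp.2 _ pB
        · exact hAB rfl
    · refine ⟨l, ?_, rfl⟩
      have a := hall l A hA qA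
      have b := hall l B hB qB
      have pp : p ∈ G l ∧ p ∈ G (l + 1) := by
        rcases a with rfl | rfl | rfl
        · exact absurd pA (hp.2 _)
        · rcases b with rfl | rfl | rfl
          · exact absurd pB (hp.2 _)
          · exact absurd rfl hAB
          · exact ⟨pA, pB⟩
        · rcases b with rfl | rfl | rfl
          · exact absurd pB (hp.2 _)
          · exact ⟨pB, pA⟩
          · exact absurd rfl hAB
      have := M.pair (hG l) (hG (l + 1)) (hGG l) (w1 l) (w2 l) (xG l) (xG1 l) pp.1 pp.2
        (hxw l).symm
      tauto
  · rw [Finset.ssubset_iff_of_subset (Finset.filter_subset _ _)]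
    exact ⟨R.u 0, R.uS 0, fun h => ((hS' _).1 h).2 _ (R.uF 0)⟩
  · intro i
    change (G i ∩ S').card = 2 ∨ (G i ∩ S').card = 3
    let j := i - 1
    have hj : i = j + 1 := by simp [j]
    have e : G i ∩ S' = G i \ {R.u i, w i, w j} := by
      ext p
      simp only [Finset.mem_inter, hS', Finset.mem_sdiff, Finset.mem_insert,
        Finset.mem_singleton, not_or]
      constructor
      · rintro ⟨a, b, c⟩
        refine ⟨a, ?_, ?_, ?_⟩
        · rintro rfl; exact c _ (R.uF _)
        · rintro rfl; exact c _ (wF _)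
        · rintro rfl; exact c _ (wF _)
      · rintro ⟨a, b, c, d⟩
        refine ⟨a, hGS i a, ?_⟩
        intro m hm
        obtain ⟨l, rfl | rfl⟩ := hFS m p hm (hGS i a)
        · exact b (by rw [uGi l i a])
        · rcases wGi l i a with h | h
          · exact c (by rw [h])
          · exact d (by congr 1; simp only [j]; rw [h]; ring)
    have wwij : w i ≠ w j := by rw [hj]; exact (winj j).symm
    have hc : ({R.u i, w i, w j} : Finset V).card = 3 :=
      Finset.card_eq_three.2 ⟨_, _, _, (hwu _ _).symm, (hwu _ _).symm, wwij, rfl⟩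
    rw [e, Finset.card_sdiff_of_subset, hc]
    · have := hX.rest (G i) (hG i) (hGX i)
      omega
    · intro p
      simp only [Finset.mem_insert, Finset.mem_singleton]
      rintro (rfl | rfl | rfl)
      · exact uG i
      · exact w1 i
      · rw [hj]; exact w2 j

theorem claim [NeZero k] (hk : KOK k) {X : Finset V} (hX : M.Good X)
    (hdeg : ∀ (S : Finset V) (R : M.Ring k S), ¬ Function.Injective R.u → S.card + 2 = k) :
    ∀ (n : ℕ) (S : Finset V) (R : M.Ring k S), S.card = n → R.W X ≤ 3 * k →
      S.card + 2 = k ∨ S ∈ M.Φ := by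
  intro n
  induction n using Nat.strong_induction_on with
  | _ n ih =>
  intro S R hSn hW
  by_cases hu : Function.Injective R.u
  swap
  · exact Or.inl (hdeg S R hu)
  have hk4 : k ≤ 4 := by rcases hk.k34 with h | h <;> omega
  have hu1 : ∀ i : ZMod k, R.u (i - 1) ≠ R.u i := fun i h => by
    have := hu h
    exact hk.one (by linear_combination -this)
  have uF' : ∀ i : ZMod k, R.u (i - 1) ∈ R.F i := fun i => by
    have := R.uF1 (i - 1)
    rwa [show i - 1 + 1 = i by ring] at this
  have hsub : ∀ i, ({R.u (i - 1), R.u i} : Finset V) ⊆ R.F i ∩ S := by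
    intro i p
    simp only [Finset.mem_insert, Finset.mem_singleton, Finset.mem_inter]
    rintro (rfl | rfl)
    · exact ⟨uF' i, R.uS _⟩
    · exact ⟨R.uF _, R.uS _⟩
  have hge2 : ∀ i, 2 ≤ (R.F i ∩ S).card := fun i => by
    rw [← Finset.card_pair (hu1 i)]; exact Finset.card_le_card (hsub i)
  by_cases h2 : ∃ i, (R.F i ∩ S).card = 2
  · obtain ⟨i, hi⟩ := h2
    have hb : R.F i ∩ S = {R.u (i - 1), R.u i} :=
      (Finset.eq_of_subset_of_card_le (hsub i) (by rw [hi, Finset.card_pair (hu1 i)])).symm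
    obtain ⟨G', hG', hnr', uG', hGS', h4⟩ := R.exists_G hk hu
    obtain ⟨y, hyq, yF, yG, -⟩ := M.other (R.hF i) (hG' i) (hnr' _ _).symm (R.uF i) (uG' i)
    have hy : y ∈ R.F i ∩ S := by simp [yF, hGS' i yG]
    rw [hb] at hy
    simp only [Finset.mem_insert, Finset.mem_singleton] at hy
    have pG' : R.u (i - 1) ∈ G' i := by
      rcases hy with rfl | rfl
      · exact yG
      · exact absurd rfl hyq
    obtain ⟨G, hG, hnr, hGS, pG, qG⟩ : ∃ G, G ∈ M.Φ ∧ (∀ j, G ≠ R.F j) ∧ G ⊆ S ∧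
        R.u (i - 1) ∈ G ∧ R.u i ∈ G := ⟨G' i, hG' i, hnr' i, hGS' i, pG', uG' i⟩
    obtain ⟨R', hR'⟩ := R.slide_ring hk hu i hb hG hnr hGS pG qG
    have hcnt := R.slide_count hk hu i hb hGS pG qG R' hR'
    have hpqS : ({R.u (i - 1), R.u i} : Finset V) ⊆ S := (hsub i).trans Finset.inter_subset_right
    have hc' : (S \ {R.u (i - 1), R.u i}).card + 2 = S.card := by
      have := Finset.card_le_card hpqS
      rw [Finset.card_sdiff_of_subset hpqS, Finset.card_pair (hu1 i)]
      rw [Finset.card_pair (hu1 i)] at this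
      omega
    have hGc : (G ∩ (S \ {R.u (i - 1), R.u i})).card + 2 = G.card := by
      have e : G ∩ (S \ {R.u (i - 1), R.u i}) = G \ {R.u (i - 1), R.u i} := by
        ext p
        have := @hGS p
        simp only [Finset.mem_inter, Finset.mem_sdiff]
        tauto
      have hpqG : ({R.u (i - 1), R.u i} : Finset V) ⊆ G := by
        intro p
        simp only [Finset.mem_insert, Finset.mem_singleton]
        rintro (rfl | rfl) <;> assumption
      have := Finset.card_le_card hpqG
      rw [e, Finset.card_sdiff_of_subset hpqG, Finset.card_pair (hu1 i)]
      rw [Finset.card_pair (hu1 i)] at this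
      omega
    have hG4 := hX.ge hG
    have hW' : R'.W X ≤ 3 * k := by
      unfold W at hW ⊢
      by_cases hGX : G = X
      · have n1 : ¬ X ⊆ S \ {R.u (i - 1), R.u i} := by
          intro h
          have := h (hGX ▸ qG)
          simp at this
        have n2 : X ⊆ S := hGX ▸ hGS
        rw [if_neg n1]
        rw [if_pos n2] at hW
        have := hX.le7
        rw [← hGX] at this
        omega
      · have := hX.rest G hG hGX
        by_cases n1 : X ⊆ S \ {R.u (i - 1), R.u i}
        · have n2 : X ⊆ S := n1.trans Finset.sdiff_subset
          rw [if_pos n1]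
          rw [if_pos n2] at hW
          omega
        · rw [if_neg n1]
          omega
    have hle := Finset.card_le_card
      (Finset.inter_subset_right : G ∩ (S \ {R.u (i - 1), R.u i}) ⊆ _)
    rcases ih _ (by omega) _ R' rfl hW' with h | h
    · right
      have : G = S := Finset.eq_of_subset_of_card_le hGS (by omega)
      rw [← this]; exact hG
    · exfalso
      have c4 := R'.card_le h
      have eX := hX.eqX h (by omega)
      have hne : G ≠ S \ {R.u (i - 1), R.u i} := by
        intro e
        rw [e] at qG
        simp at qG
      have hle2 : (G ∩ (S \ {R.u (i - 1), R.u i})).card ≤ 2 := by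
        obtain ⟨p, hp⟩ : (G ∩ (S \ {R.u (i - 1), R.u i})).Nonempty := by
          rw [← Finset.card_pos]; omega
        rw [Finset.mem_inter] at hp
        obtain ⟨y, -, -, -, hh⟩ := M.other hG h hne hp.1 hp.2
        rw [hh]
        exact Finset.card_le_two
      exact hne ((hX.eqX hG (by omega)).trans eX.symm)
  · push Not at h2
    have hge3 : ∀ i, 3 ≤ (R.F i ∩ S).card := fun i => by
      have := hge2 i
      have := h2 i
      omega
    have hs : ∑ i : ZMod k, 3 ≤ ∑ i, (R.F i ∩ S).card := Finset.sum_le_sum (fun i _ => hge3 i)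
    have hs' : ∑ i : ZMod k, 3 = 3 * k := by simp [ZMod.card, mul_comm]
    unfold W at hW
    have hXS : ¬ X ⊆ S := by
      intro h
      rw [if_pos h] at hW
      omega
    have heq : ∑ i : ZMod k, 3 = ∑ i, (R.F i ∩ S).card := by omega
    have h3 : ∀ i, (R.F i ∩ S).card = 3 := fun i =>
      ((Finset.sum_eq_sum_iff_of_le (fun i _ => hge3 i)).1 heq i (Finset.mem_univ _)).symm
    obtain ⟨S', R', hss, h23⟩ := R.peel hk hX hu h3 hXS
    have hXS' : ¬ X ⊆ S' := fun h => hXS (h.trans hss.subset)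
    have hW' : R'.W X ≤ 3 * k := by
      unfold W
      rw [if_neg hXS', ← hs']
      exact Finset.sum_le_sum (fun i _ => by have := h23 i; omega)
    exfalso
    have hlt := Finset.card_lt_card hss
    rcases ih _ (by omega) S' R' rfl hW' with h | h
    · have hsub' : ∀ i, S' ⊆ R'.F i := by
        intro i
        have : R'.F i ∩ S' = S' := Finset.eq_of_subset_of_card_le Finset.inter_subset_right
          (by have := h23 i; omega)
        exact Finset.inter_eq_right.1 this
      have c2 : 1 < S'.card := by
        have := Finset.card_le_card (Finset.inter_subset_right : R'.F 0 ∩ S' ⊆ S')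
        have := h23 0
        omega
      obtain ⟨a, ha, b, hb, hab⟩ := Finset.one_lt_card.1 c2
      have n1 := R'.Fne hk 0
      have n2 := R'.Fne hk (0 + 1)
      have n3 : R'.F 0 ≠ R'.F (0 + 1 + 1) := fun h => hk.ne2 0 (R'.inj h)
      exact hab (M.inter3 _ (R'.hF _) _ (R'.hF _) _ (R'.hF _) n1 n3 n2 a b (hsub' _ ha)
        (hsub' _ ha) (hsub' _ ha) (hsub' _ hb) (hsub' _ hb) (hsub' _ hb))
    · have c4 := R'.card_le h
      have eX := hX.eqX h (by omega)
      exact hXS' (by rw [eX])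

end Ring
end CMap
end FB

namespace FB
variable {V : Type*} [Fintype V] [DecidableEq V]
namespace CMap
theorem kok3 : KOK 3 := ⟨Or.inl rfl⟩
theorem kok4 : KOK 4 := ⟨Or.inr rfl⟩
namespace Ring
variable {M : CMap V} {k : ℕ} {S : Finset V}

theorem sum_W [NeZero k] (R : M.Ring k S) {X : Finset V} (hX : M.Good X) :
    R.W X + R.compl.W X ≤ 6 * k + 1 := by
  unfold W
  have hc : ∀ i, (R.F i ∩ S).card + (R.F i ∩ Sᶜ).card = (R.F i).card := by
    intro i
    rw [← Finset.sdiff_eq_inter_compl, Finset.card_inter_add_card_sdiff]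
  have h6 : ∑ i : ZMod k, 6 = 6 * k := by simp [ZMod.card, mul_comm]
  have hs : ∑ i, (R.F i ∩ S).card + ∑ i, (R.F i ∩ Sᶜ).card = ∑ i, (R.F i).card := by
    rw [← Finset.sum_add_distrib]
    exact Finset.sum_congr rfl (fun i _ => hc i)
  change ∑ i, (R.F i ∩ S).card + _ + (∑ i, (R.F i ∩ Sᶜ).card + _) ≤ _
  by_cases hr : ∃ i0, R.F i0 = X
  · obtain ⟨i0, hi0⟩ := hr
    have n1 : ¬ X ⊆ S := fun h => R.oS i0 (h (hi0 ▸ R.oF i0))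
    have n2 : ¬ X ⊆ Sᶜ := fun h => Finset.mem_compl.1 (h (hi0 ▸ R.uF i0)) (R.uS i0)
    rw [if_neg n1, if_neg n2]
    have : ∑ i, (R.F i).card ≤ ∑ i, (6 + if i = i0 then 1 else 0) := by
      apply Finset.sum_le_sum
      intro i _
      by_cases e : i = i0
      · subst e
        rw [hi0]; simpa using hX.le7
      · have := hX.rest (R.F i) (R.hF i) (fun h => e (R.inj (h.trans hi0.symm)))
        simp [e]; omega
    rw [Finset.sum_add_distrib, h6] at this
    simp at this
    omega
  · push Not at hr
    have : ∑ i, (R.F i).card ≤ ∑ i : ZMod k, 6 := by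
      apply Finset.sum_le_sum
      intro i _
      have := hX.rest (R.F i) (R.hF i) (hr i)
      omega
    obtain ⟨x, hx⟩ : X.Nonempty := by
      rw [← Finset.card_pos]; have := hX.ge4; omega
    by_cases n1 : X ⊆ S
    · have n2 : ¬ X ⊆ Sᶜ := fun h => Finset.mem_compl.1 (h hx) (n1 hx)
      rw [if_pos n1, if_neg n2]; omega
    · rw [if_neg n1]
      split_ifs <;> omega

theorem half [NeZero k] (hk : KOK k) {X : Finset V} (hX : M.Good X)
    (hdeg : ∀ (S : Finset V) (R : M.Ring k S), ¬ Function.Injective R.u → S.card + 2 = k)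
    (R : M.Ring k S) :
    (S.card + 2 = k ∨ S ∈ M.Φ) ∨ (Sᶜ.card + 2 = k ∨ Sᶜ ∈ M.Φ) := by
  have := R.sum_W hX
  by_cases h : R.W X ≤ 3 * k
  · exact Or.inl (claim hk hX hdeg _ S R rfl h)
  · exact Or.inr (claim hk hX hdeg _ Sᶜ R.compl rfl (by omega))

theorem deg3 (S : Finset V) (R : M.Ring 3 S) (hu : ¬ Function.Injective R.u) :
    S.card + 2 = 3 := by
  have : ∃ i j, R.u i = R.u j ∧ i ≠ j := by
    by_contra hc
    push Not at hc
    exact hu (fun i j h => hc i j h)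
  obtain ⟨i, j, hij, hne⟩ := this
  have hall : ∀ l, R.u i ∈ R.F l := by
    intro l
    have a := R.uF i
    have b := R.uF1 i
    have c := R.uF j
    have d := R.uF1 j
    rw [← hij] at c d
    have : l = i ∨ l = i + 1 ∨ l = j ∨ l = j + 1 := by
      clear a b c d hij hu
      revert i j l; decide
    rcases this with rfl | rfl | rfl | rfl <;> assumption
  have hueq : ∀ l, R.u l = R.u i := fun l => (R.eq_u kok3 (R.uS i) (hall l) (hall (l + 1))).symm
  have huu : ∀ x ∈ S, ∀ l m, l ≠ m → x ∈ R.F l → x ∈ R.F m → x = R.u i := by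
    intro x hx l m hlm hl hm
    have : m = l + 1 ∨ l = m + 1 := by
      clear hl hm; revert l m; decide
    rcases this with rfl | rfl
    · rw [R.eq_u kok3 hx hl hm, hueq]
    · rw [R.eq_u kok3 hx hm hl, hueq]
  have hS : S.erase (R.u i) = ∅ := by
    by_contra hne'
    have := M.connV (T := S.erase (R.u i)) (Finset.nonempty_iff_ne_empty.2 hne') (by
      intro x hx y hxy
      rw [Finset.mem_erase] at hx ⊢
      constructor
      · rintro rfl
        obtain ⟨-, A, hA, B, hB, hAB, xA, xB, yA, yB⟩ := hxy
        have n1 := R.Fne kok3 0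
        have n2 := R.Fne kok3 (0 + 1)
        have n3 : R.F 0 ≠ R.F (0 + 1 + 1) := fun h => kok3.ne2 0 (R.inj h)
        have fA := M.no_four (R.hF 0) (R.hF (0 + 1)) (R.hF (0 + 1 + 1)) hA (hall _) (hall _)
          (hall _) yA n1 n3 n2
        have fB := M.no_four (R.hF 0) (R.hF (0 + 1)) (R.hF (0 + 1 + 1)) hB (hall _) (hall _)
          (hall _) yB n1 n3 n2
        have eA : ∃ l, A = R.F l := by rcases fA with h | h | h <;> exact ⟨_, h⟩
        have eB : ∃ l, B = R.F l := by rcases fB with h | h | h <;> exact ⟨_, h⟩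
        obtain ⟨l, rfl⟩ := eA
        obtain ⟨m, rfl⟩ := eB
        exact hx.1 (huu x hx.2 l m (fun h => hAB (by rw [h])) xA xB)
      · by_contra hy
        obtain ⟨l, h, -⟩ := R.complete x hx.2 y hy hxy
        exact hx.1 (h.trans (hueq l)))
    have h2 := Finset.mem_univ (R.u i)
    rw [← this] at h2
    simp at h2
  have := Finset.card_erase_of_mem (R.uS i)
  rw [hS] at this
  have h1 : 0 < S.card := Finset.card_pos.2 ⟨_, R.uS i⟩
  simp at this
  omega

theorem thm3 {X : Finset V} (hX : M.Good X) (R : M.Ring 3 S) : S.card = 1 ∨ Sᶜ.card = 1 := by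
  rcases half kok3 hX deg3 R with (h | h) | (h | h)
  · left; omega
  · have := R.card_le h
    have := hX.ge h
    omega
  · right; omega
  · have := R.compl.card_le h
    have := hX.ge h
    omega

end Ring

/-- functions on `ZMod 3` -/
def sel3 {α : Type*} (a b c : α) : ZMod 3 → α := (![a, b, c] : Fin 3 → α)
theorem sel3_0 {α : Type*} (a b c : α) : sel3 a b c 0 = a := rfl
theorem sel3_1 {α : Type*} (a b c : α) : sel3 a b c 1 = b := rfl
theorem sel3_2 {α : Type*} (a b c : α) : sel3 a b c 2 = c := rfl
theorem all3 {p : ZMod 3 → Prop} (h0 : p 0) (h1 : p 1) (h2 : p 2) : ∀ i, p i := by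
  intro i
  have : i = 0 ∨ i = 1 ∨ i = 2 := by revert i; decide
  rcases this with rfl | rfl | rfl <;> assumption
theorem sel3_inj {α : Type*} {a b c : α} (h1 : a ≠ b) (h2 : a ≠ c) (h3 : b ≠ c) :
    Function.Injective (sel3 a b c) := by
  intro i j
  revert i j
  apply all3 <;> apply all3 <;> simp only [sel3_0, sel3_1, sel3_2] <;> intro h <;>
    first | rfl | trivial | (exfalso; tauto)
theorem sel3_nx {p : ZMod 3 → ZMod 3 → Prop} (h0 : p 0 1) (h1 : p 1 2) (h2 : p 2 0) :
    ∀ i, p i (i + 1) := all3 h0 h1 h2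

theorem three_meet {M : CMap V} {X : Finset V} (hX : M.Good X) {A B C : Finset V} (hA : A ∈ M.Φ)
    (hB : B ∈ M.Φ) (hC : C ∈ M.Φ) (h1 : A ≠ B) (h2 : A ≠ C) (h3 : B ≠ C)
    (i1 : (A ∩ B).Nonempty) (i2 : (B ∩ C).Nonempty) (i3 : (C ∩ A).Nonempty) :
    ∃ v, v ∈ A ∧ v ∈ B ∧ v ∈ C := by
  obtain ⟨S, R, hR⟩ := M.exists_ring 3 (by decide) (by decide) (sel3 A B C)
    (all3 hA hB hC) (sel3_inj h1 h2 h3) (sel3_nx (p := fun i j => (sel3 A B C i ∩ sel3 A B C j).Nonempty) i1 i2 i3)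
  have key : ∀ T : Finset V, T.card = 1 → ∀ R : M.Ring 3 T, R.F = sel3 A B C →
      ∃ v, v ∈ A ∧ v ∈ B ∧ v ∈ C := by
    intro T hT R hR
    obtain ⟨v, rfl⟩ := Finset.card_eq_one.1 hT
    have := fun i => Finset.mem_singleton.1 (R.uS i)
    have a := R.uF 0
    have b := R.uF 1
    have c := R.uF 2
    rw [this, hR] at a b c
    exact ⟨v, a, b, c⟩
  rcases R.thm3 hX with h | h
  · exact key S h R hR
  · exact key _ h R.compl hR

theorem exists_three {M : CMap V} {X : Finset V} (hX : M.Good X) {S : Finset V}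
    {A B C : Finset V} (hA : A ∈ M.Φ)
    (hB : B ∈ M.Φ) (hC : C ∈ M.Φ) (h1 : A ≠ B) (h2 : A ≠ C) (h3 : B ≠ C)
    {p q r p' q' r' : V} (pS : p ∈ S) (qS : q ∈ S) (rS : r ∈ S) (pS' : p' ∉ S) (qS' : q' ∉ S)
    (rS' : r' ∉ S) (pA : p ∈ A) (pB : p ∈ B) (qB : q ∈ B) (qC : q ∈ C) (rC : r ∈ C) (rA : r ∈ A)
    (pA' : p' ∈ A) (pB' : p' ∈ B) (qB' : q' ∈ B) (qC' : q' ∈ C) (rC' : r' ∈ C) (rA' : r' ∈ A)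
    (hc : ∀ x ∈ S, ∀ y, y ∉ S → M.Adj x y → (x = p ∧ y = p') ∨ (x = q ∧ y = q') ∨
      (x = r ∧ y = r')) : S.card = 1 ∨ Sᶜ.card = 1 := by
  let R : M.Ring 3 S := ⟨sel3 A B C, sel3 p q r, sel3 p' q' r', all3 hA hB hC,
    sel3_inj h1 h2 h3, all3 pS qS rS, all3 pS' qS' rS', all3 pA qB rC, all3 pB qC rA,
    all3 pA' qB' rC', all3 pB' qC' rA', by
      intro x hx y hy hxy
      rcases hc x hx y hy hxy with h | h | h
      · exact ⟨0, h⟩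
      · exact ⟨1, h⟩
      · exact ⟨2, h⟩⟩
  exact R.thm3 hX

namespace Ring
variable {M : CMap V} {k : ℕ} {S : Finset V}

theorem deg4 {X : Finset V} (hX : M.Good X) (S : Finset V) (R : M.Ring 4 S)
    (hu : ¬ Function.Injective R.u) : S.card + 2 = 4 := by
  have : ∃ i j, R.u i = R.u j ∧ i ≠ j := by
    by_contra hc
    push Not at hc
    exact hu (fun i j h => hc i j h)
  have hne : ∀ a b : ZMod 4, a ≠ b → R.F a ≠ R.F b := fun a b h e => h (R.inj e)
  obtain ⟨i, hi⟩ : ∃ i, R.u i = R.u (i + 1) := by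
    obtain ⟨i, j, hij, hne'⟩ := this
    have : j = i + 1 ∨ i = j + 1 ∨ j = i + 2 := by clear hij; revert i j; decide
    rcases this with rfl | rfl | rfl
    · exact ⟨i, hij⟩
    · exact ⟨j, hij.symm⟩
    · exfalso
      have c := R.uF (i + 2)
      have d := R.uF1 (i + 2)
      rw [← hij] at c d
      have h1 : ∀ i : ZMod 4, i ≠ i + 1 ∧ i ≠ i + 2 ∧ i + 1 ≠ i + 2 ∧ i + 2 + 1 ≠ i ∧
        i + 2 + 1 ≠ i + 1 ∧ i + 2 + 1 ≠ i + 2 := by decide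
      obtain ⟨a1, a2, a3, a4, a5, a6⟩ := h1 i
      have := M.no_four (R.hF i) (R.hF (i + 1)) (R.hF (i + 2)) (R.hF (i + 2 + 1)) (R.uF i)
        (R.uF1 i) c d (hne _ _ a1) (hne _ _ a2) (hne _ _ a3)
      rcases this with h | h | h
      · exact hne _ _ a4 h
      · exact hne _ _ a5 h
      · exact hne _ _ a6 h
  -- facets at `u`: `F i`, `F (i+1)`, `F (i+2)`
  have ar : ∀ i : ZMod 4, i ≠ i + 1 ∧ i ≠ i + 2 ∧ i + 1 ≠ i + 2 ∧ i + 3 ≠ i ∧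
        i + 3 ≠ i + 1 ∧ i + 3 ≠ i + 2 ∧ i + 1 + 1 = i + 2 ∧ i + 2 + 1 = i + 3 ∧ i + 3 + 1 = i := by
    decide
  obtain ⟨a1, a2, a3, a4, a5, a6, e1, e2, e3⟩ := ar i
  have u0 := R.uF i
  have u1 := R.uF1 i
  have u2 : R.u i ∈ R.F (i + 2) := by
    rw [hi, ← e1]; exact R.uF1 (i + 1)
  have u3 : R.u i ∉ R.F (i + 3) := by
    intro h
    have := M.no_four (R.hF i) (R.hF (i + 1)) (R.hF (i + 2)) (R.hF (i + 3)) u0 u1 u2 h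
      (hne _ _ a1) (hne _ _ a2) (hne _ _ a3)
    rcases this with h | h | h
    · exact hne _ _ a4 h
    · exact hne _ _ a5 h
    · exact hne _ _ a6 h
  have hu2 : R.u (i + 2) ≠ R.u i := by
    intro h
    have := R.uF1 (i + 2)
    rw [h, e2] at this
    exact u3 this
  have hu3 : R.u (i + 3) ≠ R.u i := by
    intro h
    have := R.uF (i + 3)
    rw [h] at this
    exact u3 this
  obtain ⟨x, hxu, x0, x2, -⟩ := M.other (R.hF i) (R.hF (i + 2)) (hne _ _ a2) u0 u2
  have xS : x ∈ S := by
    by_contra hx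
    obtain ⟨l, -, -, h | h⟩ := R.cut kok4 (R.hF i) (R.hF (i + 2)) (hne _ _ a2) (R.uS i) hx u0 u2 x0 x2
    · have g1 := R.inj h.1
      have g2 := R.inj h.2
      rw [← g1, ← e1] at g2
      exact kok4.ne1 (i + 1) g2.symm
    · have g1 := R.inj h.1
      have g2 := R.inj h.2
      rw [← g1, e2] at g2
      exact a4 g2.symm
  have h3 := exists_three hX (S := S.erase (R.u i)) (R.hF (i + 2)) (R.hF (i + 3)) (R.hF i)
    (hne _ _ a6.symm) (hne _ _ a2.symm) (hne _ _ a4)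
    (p := R.u (i + 2)) (q := R.u (i + 3)) (r := x) (p' := R.o (i + 2)) (q' := R.o (i + 3))
    (r' := R.u i) (by simp [hu2, R.uS]) (by simp [hu3, R.uS]) (by simp [hxu, xS])
    (by simp [R.oS]) (by simp [R.oS]) (by simp) (R.uF _) (e2 ▸ R.uF1 (i + 2)) (R.uF _)
    (by have := R.uF1 (i + 3); rwa [e3] at this) x0 x2 (R.oF _) (e2 ▸ R.oF1 (i + 2)) (R.oF _)
    (by have := R.oF1 (i + 3); rwa [e3] at this) u0 u2 (by
      intro a ha b hb hab
      rw [Finset.mem_erase] at ha hb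
      by_cases hbS : b ∈ S
      · have hbu : b = R.u i := by tauto
        subst hbu
        right; right
        refine ⟨?_, rfl⟩
        obtain ⟨hne', A, hA, B, hB, hAB, aA, aB, bA, bB⟩ := hab
        have f := fun D hD hbD => M.no_four (R.hF i) (R.hF (i + 1)) (R.hF (i + 2)) (D := D) hD
          u0 u1 u2 hbD (hne _ _ a1) (hne _ _ a2) (hne _ _ a3)
        have n1 : a ∈ R.F i → a ∈ R.F (i + 1) → False := fun h h' =>
          ha.1 (R.eq_u kok4 ha.2 h h')
        have n2 : a ∈ R.F (i + 1) → a ∈ R.F (i + 2) → False := fun h h' =>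
          ha.1 (by rw [hi]; exact R.eq_u kok4 ha.2 h (by rw [e1]; exact h'))
        have aa : a ∈ R.F i ∧ a ∈ R.F (i + 2) := by
          rcases f A hA bA with h1 | h1 | h1 <;> rcases f B hB bB with h2 | h2 | h2
          · exact absurd (h1.trans h2.symm) hAB
          · exact (n1 (h1 ▸ aA) (h2 ▸ aB)).elim
          · exact ⟨h1 ▸ aA, h2 ▸ aB⟩
          · exact (n1 (h2 ▸ aB) (h1 ▸ aA)).elim
          · exact absurd (h1.trans h2.symm) hAB
          · exact (n2 (h1 ▸ aA) (h2 ▸ aB)).elim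
          · exact ⟨h2 ▸ aB, h1 ▸ aA⟩
          · exact (n2 (h2 ▸ aB) (h1 ▸ aA)).elim
          · exact absurd (h1.trans h2.symm) hAB
        have := M.pair (R.hF i) (R.hF (i + 2)) (hne _ _ a2) u0 u2 x0 x2 aa.1 aa.2 hxu.symm
        exact this.resolve_left ha.1
      · obtain ⟨l, h1, h2⟩ := R.complete a ha.2 b hbS hab
        have : ∀ i l : ZMod 4, l = i ∨ l = i + 1 ∨ l = i + 2 ∨ l = i + 3 := by decide
        rcases this i l with rfl | rfl | rfl | rfl
        · exact absurd h1 ha.1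
        · rw [← hi] at h1
          exact absurd h1 ha.1
        · exact Or.inl ⟨h1, h2⟩
        · exact Or.inr (Or.inl ⟨h1, h2⟩))
  have hce := Finset.card_erase_add_one (R.uS i)
  rcases h3 with h | h
  · omega
  · exfalso
    have h1 : 1 < (S.erase (R.u i))ᶜ.card := Finset.one_lt_card.2
      ⟨R.u i, by simp, R.o i, by simp [R.oS], R.uo i i⟩
    omega

theorem thm4 {X : Finset V} (hX : M.Good X) (R : M.Ring 4 S) :
    (S.card + 2 = 4 ∨ S ∈ M.Φ) ∨ (Sᶜ.card + 2 = 4 ∨ Sᶜ ∈ M.Φ) :=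
  half kok4 hX (deg4 hX) R

theorem belt_half (R : M.Ring 4 S)
    (hop : ∀ i, Disjoint (R.F i) (R.F (i + 2))) (h : S.card + 2 = 4 ∨ S ∈ M.Φ) :
    ∃ Q ∈ M.Φ, Q.card = 4 ∧ (∀ i, Q ≠ R.F i) ∧ ∃ u : ZMod 4 → V, Function.Injective u ∧
      ∀ i, u i ∈ Q ∧ u i ∈ R.F i ∧ u i ∈ R.F (i + 1) := by
  have hu : Function.Injective R.u := by
    intro i j hij
    by_contra hne
    have h1 : ∀ i j : ZMod 4, i ≠ j → (j + 1 = i + 2) ∨ (i + 1 = j + 2) ∨ (j = i + 2) := by decide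
    have c := R.uF j
    have d := R.uF1 j
    rw [← hij] at c d
    rcases h1 i j hne with e | e | e
    · rw [e] at d
      exact Finset.disjoint_left.1 (hop i) (R.uF i) d
    · have := R.uF1 i
      rw [e] at this
      exact Finset.disjoint_left.1 (hop j) c this
    · rw [e] at c
      exact Finset.disjoint_left.1 (hop i) (R.uF i) c
  have h4 : 4 ≤ S.card := by
    have := Finset.card_le_card (show Finset.univ.image R.u ⊆ S by
      intro x hx
      obtain ⟨i, -, rfl⟩ := Finset.mem_image.1 hx
      exact R.uS i)
    rw [Finset.card_image_of_injective _ hu, Finset.card_univ, ZMod.card] at this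
    exact this
  rcases h with h | h
  · omega
  · refine ⟨S, h, le_antisymm (R.card_le h) h4, ?_, R.u, hu, fun i => ⟨R.uS i, R.uF i, R.uF1 i⟩⟩
    intro i e
    have := R.oF i
    rw [← e] at this
    exact R.oS i this

end Ring

theorem belt {M : CMap V} {X : Finset V} (hX : M.Good X) (F : ZMod 4 → Finset V)
    (hF : ∀ i, F i ∈ M.Φ) (hinj : Function.Injective F) (hadj : ∀ i, (F i ∩ F (i + 1)).Nonempty)
    (hop : ∀ i, Disjoint (F i) (F (i + 2))) :
    ∃ Q ∈ M.Φ, Q.card = 4 ∧ (∀ i, Q ≠ F i) ∧ ∃ u : ZMod 4 → V, Function.Injective u ∧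
      ∀ i, u i ∈ Q ∧ u i ∈ F i ∧ u i ∈ F (i + 1) := by
  obtain ⟨S, R, rfl⟩ := M.exists_ring 4 (by decide) (by decide) F hF hinj hadj
  rcases R.thm4 hX with h | h
  · exact R.belt_half hop h
  · exact R.compl.belt_half hop h

theorem nbr_card (M : CMap V) {A : Finset V} (hA : A ∈ M.Φ) :
    (M.Φ.filter (fun B => B ≠ A ∧ (A ∩ B).Nonempty)).card = A.card := by
  have := Finset.card_mul_eq_card_mul (s := A)
    (t := M.Φ.filter (fun B => B ≠ A ∧ (A ∩ B).Nonempty)) (fun v B => v ∈ B) (m := 2) (n := 2)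
    (by
      intro v hv
      have : (M.Φ.filter (fun B => B ≠ A ∧ (A ∩ B).Nonempty)).bipartiteAbove (fun v B => v ∈ B) v
        = (M.Φ.filter (fun B => v ∈ B)).erase A := by
        ext B
        simp only [Finset.mem_bipartiteAbove, Finset.mem_filter, Finset.mem_erase]
        constructor
        · tauto
        · rintro ⟨h1, h2, h3⟩
          exact ⟨⟨h2, h1, v, by simp [hv, h3]⟩, h3⟩
      rw [this, Finset.card_erase_of_mem (by simp [hA, hv]), M.three])
    (by
      intro B hB
      simp only [Finset.mem_filter] at hB
      obtain ⟨hB, hne, v, hv⟩ := hB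
      rw [Finset.mem_inter] at hv
      have : A.bipartiteBelow (fun v B => v ∈ B) B = A ∩ B := by
        ext x
        simp [Finset.mem_bipartiteBelow]
      obtain ⟨w, hw, h⟩ := M.inter2 A hA B hB hne.symm v hv.1 hv.2
      rw [this, h, Finset.card_pair hw.symm])
  omega

end CMap
end FB

namespace FB
variable {V : Type*} [Fintype V] [DecidableEq V]
namespace CMap

/-- functions on `ZMod 4` -/
def sel4 {α : Type*} (a b c d : α) : ZMod 4 → α := (![a, b, c, d] : Fin 4 → α)
theorem sel4_0 {α : Type*} (a b c d : α) : sel4 a b c d 0 = a := rfl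
theorem sel4_1 {α : Type*} (a b c d : α) : sel4 a b c d 1 = b := rfl
theorem sel4_2 {α : Type*} (a b c d : α) : sel4 a b c d 2 = c := rfl
theorem sel4_3 {α : Type*} (a b c d : α) : sel4 a b c d 3 = d := rfl
theorem all4 {p : ZMod 4 → Prop} (h0 : p 0) (h1 : p 1) (h2 : p 2) (h3 : p 3) : ∀ i, p i := by
  intro i
  have : i = 0 ∨ i = 1 ∨ i = 2 ∨ i = 3 := by revert i; decide
  rcases this with rfl | rfl | rfl | rfl <;> assumption
theorem sel4_inj {α : Type*} {a b c d : α} (h1 : a ≠ b) (h2 : a ≠ c) (h3 : a ≠ d) (h4 : b ≠ c)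
    (h5 : b ≠ d) (h6 : c ≠ d) :
    Function.Injective (sel4 a b c d) := by
  intro i j
  revert i j
  apply all4 <;> apply all4 <;> simp only [sel4_0, sel4_1, sel4_2, sel4_3] <;> intro h <;>
    first | rfl | trivial | (exfalso; tauto)

theorem quad {M : CMap V} {X : Finset V} (hX : M.Good X) {Q : Finset V} (hQ : Q ∈ M.Φ)
    (hc : Q.card = 4) :
    ∃ (F : ZMod 4 → Finset V) (u : ZMod 4 → V), (∀ i, F i ∈ M.Φ) ∧ (∀ i, F i ≠ Q) ∧
      Function.Injective F ∧ Function.Injective u ∧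
      (∀ i, u i ∈ Q ∧ u i ∈ F i ∧ u i ∈ F (i + 1)) ∧ ∀ i, Disjoint (F i) (F (i + 2)) := by
  obtain ⟨u0, h0⟩ : Q.Nonempty := by rw [← Finset.card_pos]; omega
  obtain ⟨F0, hF0, F1, hF1, n0, n1, n01, u0F0, u0F1, all0⟩ := M.two_more hQ h0
  obtain ⟨u1, d10, h1, u1F1, I1⟩ := M.other hQ hF1 n1.symm h0 u0F1
  obtain ⟨F2, hF2, n2, n21, u1F2, all1⟩ := M.third hQ hF1 n1.symm h1 u1F1
  obtain ⟨u2, d21, h2, u2F2, I2⟩ := M.other hQ hF2 n2.symm h1 u1F2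
  have d20 : u2 ≠ u0 := by
    rintro rfl
    exact d10 (M.inter3 Q hQ F1 hF1 F2 hF2 n1.symm n2.symm n21.symm u1 u2 h1 u1F1 u1F2 h2 u0F1 u2F2)
  obtain ⟨F3, hF3, n3, n32, u2F3, all2⟩ := M.third hQ hF2 n2.symm h2 u2F2
  obtain ⟨u3, d32, h3, u3F3, I3⟩ := M.other hQ hF3 n3.symm h2 u2F3
  have d31 : u3 ≠ u1 := by
    rintro rfl
    exact d21 (M.inter3 Q hQ F2 hF2 F3 hF3 n2.symm n3.symm n32.symm u2 u3 h2 u2F2 u2F3 h3 u1F2 u3F3)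
  have d30 : u3 ≠ u0 := by
    rintro rfl
    have := M.triangle hQ hF1 hF2 hF3 h0 h1 h2 u0F1 u1F1 u1F2 u2F2 u3F3 u2F3 n1 n2 n3
      d10.symm d21.symm d20.symm
    rw [this] at hc
    have := Finset.card_le_three (a := u3) (b := u1) (c := u2)
    omega
  have hQs : ({u0, u1, u2, u3} : Finset V) = Q := by
    apply Finset.eq_of_subset_of_card_le
    · intro x; simp only [Finset.mem_insert, Finset.mem_singleton]
      rintro (rfl | rfl | rfl | rfl) <;> assumption
    · rw [hc, Finset.card_insert_of_notMem, Finset.card_insert_of_notMem,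
        Finset.card_pair d32.symm]
      · simp [d21.symm, d31.symm]
      · simp [d10.symm, d20.symm, d30.symm]
  have m1 : ∀ x ∈ Q, x ∈ F1 → x = u0 ∨ x = u1 := fun x a b => by
    have : x ∈ Q ∩ F1 := by simp [a, b]
    rw [I1] at this; simpa using this
  have m2 : ∀ x ∈ Q, x ∈ F2 → x = u1 ∨ x = u2 := fun x a b => by
    have : x ∈ Q ∩ F2 := by simp [a, b]
    rw [I2] at this; simpa using this
  have m3 : ∀ x ∈ Q, x ∈ F3 → x = u2 ∨ x = u3 := fun x a b => by
    have : x ∈ Q ∩ F3 := by simp [a, b]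
    rw [I3] at this; simpa using this
  obtain ⟨y, dy, hy, yF0, I0⟩ := M.other hQ hF0 n0.symm h0 u0F0
  have n20 : F2 ≠ F0 := by
    rintro rfl
    rcases m2 u0 h0 u0F0 with h | h
    · exact d10 h.symm
    · exact d20 h.symm
  have n30 : F3 ≠ F0 := by
    rintro rfl
    rcases m3 u0 h0 u0F0 with h | h
    · exact d20 h.symm
    · exact d30 h.symm
  have n31 : F3 ≠ F1 := by
    rintro rfl
    rcases m3 u0 h0 u0F1 with h | h
    · exact d20 h.symm
    · exact d30 h.symm
  have ey : y = u3 := by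
    have hy' := hy
    rw [← hQs] at hy'
    simp only [Finset.mem_insert, Finset.mem_singleton] at hy'
    rcases hy' with rfl | rfl | rfl | rfl
    · exact absurd rfl dy
    · rcases all1 F0 hF0 yF0 with h | h | h
      · exact absurd h n0
      · exact absurd h n01
      · exact absurd h.symm n20
    · rcases all2 F0 hF0 yF0 with h | h | h
      · exact absurd h n0
      · exact absurd h.symm n20
      · exact absurd h.symm n30
    · rfl
  subst ey
  have m0 : ∀ x ∈ Q, x ∈ F0 → x = u0 ∨ x = y := fun x a b => by
    have : x ∈ Q ∩ F0 := by simp [a, b]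
    rw [I0] at this; simpa using this
  have D02 : Disjoint F0 F2 := by
    rw [Finset.disjoint_iff_inter_eq_empty]
    by_contra hne
    obtain ⟨v, a, b, c⟩ := three_meet hX hQ hF0 hF2 n0.symm n2.symm n20.symm
      ⟨u0, by simp [h0, u0F0]⟩ (Finset.nonempty_iff_ne_empty.2 hne) ⟨u1, by simp [h1, u1F2]⟩
    rcases m0 v a b with rfl | rfl <;> rcases m2 _ a c with h | h
    · exact d10 h.symm
    · exact d20 h.symm
    · exact d31 h
    · exact d32 h
  have D13 : Disjoint F1 F3 := by
    rw [Finset.disjoint_iff_inter_eq_empty]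
    by_contra hne
    obtain ⟨v, a, b, c⟩ := three_meet hX hQ hF1 hF3 n1.symm n3.symm n31.symm
      ⟨u0, by simp [h0, u0F1]⟩ (Finset.nonempty_iff_ne_empty.2 hne) ⟨u2, by simp [h2, u2F3]⟩
    rcases m1 v a b with rfl | rfl <;> rcases m3 _ a c with h | h
    · exact d20 h.symm
    · exact d30 h.symm
    · exact d21 h.symm
    · exact d31 h.symm
  exact ⟨sel4 F0 F1 F2 F3, sel4 u0 u1 u2 y, all4 hF0 hF1 hF2 hF3, all4 n0 n1 n2 n3,
    sel4_inj n01 n20.symm n30.symm n21.symm n31.symm n32.symm,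
    sel4_inj d10.symm d20.symm d30.symm d21.symm d31.symm d32.symm,
    all4 ⟨h0, u0F0, u0F1⟩ ⟨h1, u1F1, u1F2⟩ ⟨h2, u2F2, u2F3⟩ ⟨h3, u3F3, yF0⟩,
    all4 D02 D13 D02.symm D13.symm⟩

end CMap
end FB

namespace FB

variable {P Q R F : Set E3}

abbrev vx (P : Set E3) : Set E3 := P.extremePoints ℝ

theorem vx_fin (hP : IsPolytope P) : (vx P).Finite := by
  obtain ⟨V, rfl⟩ := hP
  exact V.finite_toSet.subset extremePoints_convexHull_subset

theorem cpt (hP : IsPolytope P) : IsCompact P := by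
  obtain ⟨V, rfl⟩ := hP
  exact V.finite_toSet.isCompact_convexHull ℝ

theorem cvx (hP : IsPolytope P) : Convex ℝ P := by
  obtain ⟨V, rfl⟩ := hP
  exact convex_convexHull _ _

theorem face_self (hP : IsPolytope P) (hne : P.Nonempty) : IsFaceOf P P :=
  ⟨hne, (cpt hP).isClosed, cvx hP, IsExtreme.rfl⟩

theorem face_sub (hF : IsFaceOf F P) : F ⊆ P := hF.2.2.2.subset

theorem face_vx (hF : IsFaceOf F P) : vx F = F ∩ vx P := hF.2.2.2.extremePoints_eq

theorem face_hull (hP : IsPolytope P) (hF : IsFaceOf F P) : convexHull ℝ (F ∩ vx P) = F := by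
  rw [← face_vx hF]
  have hc : IsCompact F := (cpt hP).of_isClosed_subset hF.2.1 (face_sub hF)
  have := closure_convexHull_extremePoints hc hF.2.2.1
  have hf : (vx F).Finite := by rw [face_vx hF]; exact (vx_fin hP).subset inter_subset_right
  rwa [(hf.isCompact_convexHull ℝ).isClosed.closure_eq] at this

theorem face_poly (hP : IsPolytope P) (hF : IsFaceOf F P) : IsPolytope F := by
  have hf : (F ∩ vx P).Finite := (vx_fin hP).subset inter_subset_right
  exact ⟨hf.toFinset, by rw [hf.coe_toFinset, face_hull hP hF]⟩

theorem face_eq_of_vx (hP : IsPolytope P) (hF : IsFaceOf F P) (hQ : IsFaceOf Q P)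
    (h : F ∩ vx P = Q ∩ vx P) : F = Q := by
  rw [← face_hull hP hF, h, face_hull hP hQ]

theorem face_sub_of_vx (hP : IsPolytope P) (hF : IsFaceOf F P) (hQ : IsFaceOf Q P)
    (h : F ∩ vx P ⊆ Q) : F ⊆ Q := by
  rw [← face_hull hP hF]; exact convexHull_min h hQ.2.2.1

theorem face_has_vx (hP : IsPolytope P) (hF : IsFaceOf F P) : (F ∩ vx P).Nonempty := by
  by_contra h
  rw [not_nonempty_iff_eq_empty] at h
  have := face_hull hP hF
  rw [h, convexHull_empty] at this
  exact hF.1.ne_empty this.symm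

theorem faces_fin (hP : IsPolytope P) : {F | IsFaceOf F P}.Finite := by
  refine Set.Finite.of_finite_image (f := fun F => F ∩ vx P) ?_ ?_
  · exact (vx_fin hP).finite_subsets.subset (by rintro _ ⟨F, -, rfl⟩; exact inter_subset_right)
  · intro F hF Q hQ h
    exact face_eq_of_vx hP hF hQ h

theorem vertex_iff (v : E3) : IsVertexOf v P ↔ v ∈ vx P := by
  unfold IsVertexOf IsFaceOf
  rw [← isExtreme_singleton]
  constructor
  · exact fun h => h.2.2.2
  · exact fun h => ⟨singleton_nonempty _, isClosed_singleton, convex_singleton _, h⟩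

theorem face_inter (hF : IsFaceOf F P) (hQ : IsFaceOf Q P) (h : (F ∩ Q).Nonempty) :
    IsFaceOf (F ∩ Q) P :=
  ⟨h, hF.2.1.inter hQ.2.1, hF.2.2.1.inter hQ.2.2.1, hF.2.2.2.inter hQ.2.2.2⟩

theorem face_trans (hQ : IsFaceOf Q P) (hR : IsFaceOf R Q) : IsFaceOf R P :=
  ⟨hR.1, hR.2.1, hR.2.2.1, hQ.2.2.2.trans hR.2.2.2⟩

theorem face_mono (hQ : IsFaceOf Q P) (hR : IsFaceOf R P) (h : R ⊆ Q) : IsFaceOf R Q :=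
  ⟨hR.1, hR.2.1, hR.2.2.1, hR.2.2.2.mono (face_sub hQ) h⟩

theorem lf_cont (g : E3 →ₗ[ℝ] ℝ) : Continuous g := g.continuous_of_finiteDimensional

theorem level_face (hQ : IsFaceOf Q P) (g : E3 →ₗ[ℝ] ℝ) (c : ℝ) (h : ∀ x ∈ Q, g x ≤ c)
    (hne : ∃ x ∈ Q, g x = c) : IsFaceOf {x ∈ Q | g x = c} P := by
  refine face_trans hQ ⟨hne, ?_, ?_, ?_⟩
  · exact hQ.2.1.inter (isClosed_singleton.preimage (lf_cont g))
  · refine hQ.2.2.1.inter ?_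
    exact convex_hyperplane (LinearMap.isLinear g) c
  · refine ⟨fun x hx => hx.1, ?_⟩
    rintro x hx y hy z ⟨hz, hgz⟩ ⟨a, b, ha, hb, hab, rfl⟩
    refine ⟨hx, le_antisymm (h x hx) ?_⟩
    by_contra hlt
    push Not at hlt
    have h1 := h y hy
    simp only [map_add, map_smul, smul_eq_mul] at hgz
    have : a * g x < a * c := mul_lt_mul_of_pos_left hlt ha
    have h2 : b * g y ≤ b * c := mul_le_mul_of_nonneg_left h1 hb.le
    have : a * c + b * c = c := by rw [← add_mul, hab, one_mul]
    linarith

/-- Points of a convex set in the affine span of a face belong to the face. -/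
theorem mem_of_span (hQ : Convex ℝ Q) (hR : IsFaceOf R Q) {q : E3} (hq : q ∈ Q)
    (hqs : q ∈ affineSpan ℝ R) : q ∈ R := by
  obtain ⟨r, hr⟩ := hR.1.intrinsicInterior hR.2.2.1
  have hrR := intrinsicInterior_subset hr
  rw [mem_intrinsicInterior] at hr
  obtain ⟨⟨r', hr'⟩, hintr, rfl⟩ := hr
  let L : ℝ → affineSpan ℝ R := fun t => ⟨AffineMap.lineMap q r' t, AffineMap.lineMap_mem t hqs hr'⟩
  have hL : Continuous L := by
    refine Continuous.subtype_mk ?_ _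
    exact AffineMap.lineMap_continuous
  have h1 : L 1 ∈ interior ((↑) ⁻¹' R : Set (affineSpan ℝ R)) := by
    have : L 1 = ⟨r', hr'⟩ := by ext1; simp [L]
    rw [this]; exact hintr
  have hnb : L ⁻¹' (interior ((↑) ⁻¹' R : Set (affineSpan ℝ R))) ∈ nhds (1:ℝ) :=
    (isOpen_interior.preimage hL).mem_nhds h1
  obtain ⟨ε, hε, hb⟩ := Metric.mem_nhds_iff.1 hnb
  have h2 : L (1 + ε/2) ∈ interior ((↑) ⁻¹' R : Set (affineSpan ℝ R)) := by
    apply hb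
    rw [Metric.mem_ball, Real.dist_eq, add_sub_cancel_left, abs_of_pos (by positivity)]; linarith
  have h3 : L (1 + ε/2) ∈ ((↑) ⁻¹' R : Set (affineSpan ℝ R)) := interior_subset h2
  change AffineMap.lineMap q r' (1 + ε/2) ∈ R at h3
  refine hR.2.2.2.left_mem_of_mem_openSegment hq (hR.2.2.2.subset h3) hrR ?_
  have hp : (0:ℝ) < 1 + ε/2 := by positivity
  refine ⟨1 - 1/(1+ε/2), 1/(1+ε/2), ?_, by positivity, by ring, ?_⟩
  · rw [sub_pos, div_lt_one hp]; linarith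
  · simp only [AffineMap.lineMap_apply, vsub_eq_sub, vadd_eq_add, smul_add, smul_smul]
    rw [one_div_mul_cancel hp.ne', one_smul]
    module

theorem face_eq_of_dim (hQ : Convex ℝ Q) (hR : IsFaceOf R Q) (hd : setDim Q ≤ setDim R) :
    R = Q := by
  refine Subset.antisymm (face_sub hR) fun q hq => mem_of_span hQ hR hq ?_
  have hle : vectorSpan ℝ R ≤ vectorSpan ℝ Q := vectorSpan_mono ℝ (face_sub hR)
  have heq := Submodule.eq_of_le_of_finrank_le hle hd
  obtain ⟨r, hr⟩ := hR.1
  have : q -ᵥ r ∈ vectorSpan ℝ R := by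
    rw [heq]; exact vsub_mem_vectorSpan ℝ hq (face_sub hR hr)
  have := (affineSpan ℝ R).vadd_mem_of_mem_direction (by rwa [direction_affineSpan]) (mem_affineSpan ℝ hr) (v := q -ᵥ r)
  simpa using this

theorem setDim_mono {A B : Set E3} (h : A ⊆ B) : setDim A ≤ setDim B :=
  Submodule.finrank_mono (vectorSpan_mono ℝ h)

theorem face_dim_lt (hQ : Convex ℝ Q) (hR : IsFaceOf R Q) (hne : R ≠ Q) : setDim R < setDim Q := by
  by_contra h
  exact hne (face_eq_of_dim hQ hR (not_lt.1 h))

theorem face_eq_of_dim' (hF : IsFaceOf F P) (hR : IsFaceOf R P) (h : R ⊆ F)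
    (hd : setDim F ≤ setDim R) : R = F :=
  face_eq_of_dim hF.2.2.1 (face_mono hF hR h) hd

theorem exposed (hP : IsPolytope P) (hF : IsFaceOf F P) :
    ∃ (g : E3 →ₗ[ℝ] ℝ) (c : ℝ), (∀ x ∈ P, g x ≤ c) ∧ ∀ x ∈ P, g x = c ↔ x ∈ F := by
  have hPP : IsFaceOf P P := face_self hP (hF.1.mono (face_sub hF))
  have hcv := cvx hP
  have hfin : (vx P \ F).Finite := (vx_fin hP).subset sdiff_subset
  have hdisj : Disjoint (convexHull ℝ (vx P \ F)) (affineSpan ℝ F : Set E3) := by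
    rw [Set.disjoint_left]
    intro q hq hqs
    have h1 : convexHull ℝ (vx P \ F) ⊆ P \ F :=
      convexHull_min (sdiff_subset_sdiff_left extremePoints_subset) (hF.2.2.2.convex_sdiff hcv)
    exact (h1 hq).2 (mem_of_span hcv hF (h1 hq).1 hqs)
  obtain ⟨f, u, v, h1, huv, h2⟩ := geometric_hahn_banach_compact_closed (convex_convexHull ℝ _)
    (hfin.isCompact_convexHull ℝ) (affineSpan ℝ F).convex
    (AffineSubspace.closed_of_finiteDimensional _) hdisj
  obtain ⟨r, hr⟩ := hF.1
  have hconst : ∀ x ∈ F, f x = f r := by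
    intro x hx
    by_contra hne
    have hd : f x - f r ≠ 0 := sub_ne_zero.2 hne
    have := h2 (AffineMap.lineMap r x ((v - f r) / (f x - f r)))
      (AffineMap.lineMap_mem _ (mem_affineSpan ℝ hr) (mem_affineSpan ℝ hx))
    simp only [AffineMap.lineMap_apply, vsub_eq_sub, vadd_eq_add, map_add, map_smul, map_sub,
      smul_eq_mul] at this
    rw [div_mul_cancel₀ _ hd] at this
    linarith
  have hr2 := h2 r (mem_affineSpan ℝ hr)
  have hle : ∀ x ∈ P, f x ≤ f r := by
    have hs : P ⊆ {x | f x ≤ f r} := by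
      rw [← face_hull hP hPP]
      refine convexHull_min ?_ (convex_halfSpace_le (f.toLinearMap.isLinear) _)
      rintro x ⟨-, hx⟩
      by_cases hxF : x ∈ F
      · exact (hconst x hxF).le
      · have := h1 x (subset_convexHull ℝ _ ⟨hx, hxF⟩)
        show f x ≤ f r
        linarith
    exact hs
  refine ⟨f.toLinearMap, f r, hle, fun x hx => ⟨fun h => ?_, hconst x⟩⟩
  have hH := level_face hPP f.toLinearMap (f r) hle ⟨r, face_sub hF hr, rfl⟩
  refine face_sub_of_vx hP hH hF ?_ ⟨hx, h⟩
  rintro y ⟨⟨hy, hfy⟩, hyv⟩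
  by_contra hyF
  have := h1 y (subset_convexHull ℝ _ ⟨hyv, hyF⟩)
  change f y = f r at hfy
  linarith

/-- maximum of a linear functional over a face is attained at a vertex -/
theorem le_of_vx (hP : IsPolytope P) (hF : IsFaceOf F P) (g : E3 →ₗ[ℝ] ℝ) (c : ℝ)
    (h : ∀ x ∈ F, x ∈ vx P → g x ≤ c) : ∀ x ∈ F, g x ≤ c := by
  have hs : F ⊆ {x | g x ≤ c} := by
    rw [← face_hull hP hF]
    exact convexHull_min (fun x hx => h x hx.1 hx.2) (convex_halfSpace_le g.isLinear _)
  exact hs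

theorem pivot (hP : IsPolytope P) (hQ : IsFaceOf Q P) (hR : IsFaceOf R P) (hRQ : R ⊆ Q)
    (hne : R ≠ Q) (g : E3 →ₗ[ℝ] ℝ) (c : ℝ) (hg : ∀ x ∈ P, g x ≤ c)
    (hgR : ∀ x ∈ P, g x = c ↔ x ∈ R) (f : E3 →ₗ[ℝ] ℝ) (d : ℝ) (hf : ∀ x ∈ R, f x = d) :
    ∃ l : ℝ, (∀ x ∈ Q, f x + l * g x ≤ d + l * c) ∧
      IsFaceOf {x ∈ Q | f x + l * g x = d + l * c} P ∧
      R ⊆ {x ∈ Q | f x + l * g x = d + l * c} ∧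
      ∃ y ∈ Q, y ∈ vx P ∧ y ∉ R ∧ f y + l * g y = d + l * c := by
  classical
  have hfin : ((Q ∩ vx P) \ R).Finite := (vx_fin hP).subset (sdiff_subset.trans inter_subset_right)
  have hnem : ((Q ∩ vx P) \ R).Nonempty := by
    by_contra h
    rw [not_nonempty_iff_eq_empty, sdiff_eq_empty] at h
    exact hne (Subset.antisymm hRQ (face_sub_of_vx hP hQ hR h))
  obtain ⟨y, hy, hmax⟩ := hfin.exists_maximalFor (fun x => (f x - d) / (c - g x)) _ hnem
  have hpos : ∀ x ∈ P, x ∉ R → 0 < c - g x := by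
    intro x hx hxR
    have := hg x hx
    have h2 : g x ≠ c := fun h => hxR ((hgR x hx).1 h)
    exact sub_pos.2 (lt_of_le_of_ne this h2)
  set l := (f y - d) / (c - g y) with hl
  have hle : ∀ x ∈ Q, (f + l • g) x ≤ d + l * c := by
    refine le_of_vx hP hQ _ _ fun x hx hxv => ?_
    simp only [LinearMap.add_apply, LinearMap.smul_apply, smul_eq_mul]
    by_cases hxR : x ∈ R
    · rw [hf x hxR, (hgR x (face_sub hQ hx)).2 hxR]
    · have hp := hpos x (face_sub hQ hx) hxR
      have : (f x - d) / (c - g x) ≤ l := by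
        by_contra hlt
        exact hlt (hmax ⟨⟨hx, hxv⟩, hxR⟩ (not_le.1 hlt).le)
      rw [div_le_iff₀ hp] at this
      linarith
  have hy0 : f y + l * g y = d + l * c := by
    have hp := hpos y (face_sub hQ hy.1.1) hy.2
    have : l * (c - g y) = f y - d := by rw [hl, div_mul_cancel₀ _ hp.ne']
    linarith
  have hfac := level_face hQ (f + l • g) (d + l * c) hle ⟨y, hy.1.1, by simpa using hy0⟩
  simp only [LinearMap.add_apply, LinearMap.smul_apply, smul_eq_mul] at hle hfac
  exact ⟨l, hle, hfac, fun x hx => ⟨hRQ hx, by rw [hf x hx, (hgR x (face_sub hR hx)).2 hx]⟩,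
    y, hy.1.1, hy.1.2, hy.2, hy0⟩

end FB

namespace FB

variable {P Q R F e : Set E3}

theorem singleton_face {v : E3} (hv : v ∈ vx P) : IsFaceOf {v} P := (vertex_iff v).2 hv

theorem dim_pos {A : Set E3} {x y : E3} (hx : x ∈ A) (hy : y ∈ A) (h : x ≠ y) : 0 < setDim A := by
  by_contra h0
  have h0 : setDim A = 0 := by omega
  unfold setDim at h0
  rw [Submodule.finrank_eq_zero] at h0
  have := vsub_mem_vectorSpan ℝ hx hy
  rw [h0, Submodule.mem_bot, vsub_eq_zero_iff_eq] at this
  exact h this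

theorem setDim_singleton (v : E3) : setDim {v} = 0 := by
  unfold setDim
  rw [vectorSpan_singleton, finrank_bot]

theorem subsing_of_dim {A : Set E3} (h : setDim A = 0) : A.Subsingleton := by
  intro x hx y hy
  by_contra hne
  have := dim_pos hx hy hne
  omega

theorem up_edge (hP : IsPolytope P) (hQ : IsFaceOf Q P) {v : E3} (hv : v ∈ vx P) (hvQ : v ∈ Q)
    (f : E3 →ₗ[ℝ] ℝ) (hup : ∃ x ∈ Q, f v < f x) :
    ∃ e, IsEdgeOf e P ∧ e ⊆ Q ∧ v ∈ e ∧ ∃ y ∈ e, f v < f y := by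
  let S : Set (Set E3) := {T | IsFaceOf T P ∧ T ⊆ Q ∧ v ∈ T ∧ ∃ x ∈ T, f v < f x}
  have hS : S.Finite := (faces_fin hP).subset fun T hT => hT.1
  obtain ⟨T, hT⟩ := hS.exists_minimal ⟨Q, hQ, Subset.rfl, hvQ, hup⟩
  obtain ⟨⟨hTf, hTQ, hvT, x, hxT, hx⟩, hmin⟩ := hT
  have hvf := singleton_face hv
  obtain ⟨g, c, hg, hgv⟩ := exposed hP hvf
  have hvP : v ∈ P := face_sub hQ hvQ
  have hvsub : ({v} : Set E3) ⊆ T := by simpa using hvT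
  have hvne : ({v} : Set E3) ≠ T := by
    rintro rfl
    rw [mem_singleton_iff] at hxT; subst hxT; exact lt_irrefl _ hx
  have hpos : ∀ z ∈ P, z ≠ v → 0 < c - g z := by
    intro z hz hzv
    have h2 : g z ≠ c := fun h => hzv ((hgv z hz).1 h)
    exact sub_pos.2 (lt_of_le_of_ne (hg z hz) h2)
  obtain ⟨l, h1, h2, h3, y, hyT, -, hyv, hy⟩ := pivot hP hTf hvf hvsub hvne g c hg hgv f (f v)
    (by intro z hz; rw [mem_singleton_iff.1 hz])
  rw [mem_singleton_iff] at hyv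
  have hxv : x ≠ v := by rintro rfl; exact lt_irrefl _ hx
  have hl : 0 < l := by
    have h4 := h1 x hxT
    have h5 := hpos x (face_sub hTf hxT) hxv
    by_contra hneg
    push Not at hneg
    have : l * (c - g x) ≤ 0 := mul_nonpos_of_nonpos_of_nonneg hneg h5.le
    linarith
  have hyup : f v < f y := by
    have h5 := mul_pos hl (hpos y (face_sub hTf hyT) hyv)
    linarith
  have hfull : ∀ z ∈ T, f z + l * g z = f v + l * c := by
    intro z hz
    exact (hmin (y := {x ∈ T | f x + l * g x = f v + l * c})
      ⟨h2, (sep_subset _ _).trans hTQ, h3 rfl, y, ⟨hyT, hy⟩, hyup⟩ (sep_subset _ _) hz).2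
  have hup2 : ∀ z ∈ T, z ≠ v → f v < f z := by
    intro z hz hzv
    have h5 := mul_pos hl (hpos z (face_sub hTf hz) hzv)
    have := hfull z hz
    linarith
  have hprop : ∀ φ : E3 →ₗ[ℝ] ℝ, ∃ k : ℝ, ∀ z ∈ T, φ z - φ v = k * (c - g z) := by
    intro φ
    obtain ⟨k, -, k2, k3, w, hwT, -, hwv, hw⟩ := pivot hP hTf hvf hvsub hvne g c hg hgv φ (φ v)
      (by intro z hz; rw [mem_singleton_iff.1 hz])
    refine ⟨k, fun z hz => ?_⟩
    have := (hmin (y := {x ∈ T | φ x + k * g x = φ v + k * c})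
      ⟨k2, (sep_subset _ _).trans hTQ, k3 rfl, w, ⟨hwT, hw⟩, hup2 w hwT hwv⟩ (sep_subset _ _) hz).2
    linarith
  have hcol : Collinear ℝ T := by
    rw [collinear_iff_of_mem hvT]
    refine ⟨y - v, fun z hz => ⟨(c - g z) / (c - g y), ?_⟩⟩
    have hy0 := hpos y (face_sub hTf hyT) hyv
    ext i
    obtain ⟨k, hk⟩ := hprop (EuclideanSpace.proj i : E3 →L[ℝ] ℝ).toLinearMap
    have a1 := hk z hz
    have a2 := hk y hyT
    change z i - v i = k * (c - g z) at a1
    change y i - v i = k * (c - g y) at a2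
    simp only [vadd_eq_add, PiLp.add_apply, PiLp.smul_apply, PiLp.sub_apply, smul_eq_mul]
    rw [a2]
    field_simp
    linarith
  have hle := collinear_iff_finrank_le_one.1 hcol
  have hge := dim_pos hyT hvT hyv
  refine ⟨T, ⟨hTf, ?_⟩, hTQ, hvT, x, hxT, hx⟩
  unfold setDim at hge ⊢
  omega

theorem edge_ends (hP : IsPolytope P) (he : IsEdgeOf e P) :
    ∃ x y, x ≠ y ∧ x ∈ vx P ∧ y ∈ vx P ∧ e ∩ vx P = {x, y} ∧ e = segment ℝ x y := by
  obtain ⟨hf, hd⟩ := he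
  obtain ⟨x, hxe, hx⟩ := face_has_vx hP hf
  have : ∃ y ∈ e ∩ vx P, y ≠ x := by
    by_contra h
    push Not at h
    have h2 : e ∩ vx P = {x} := by
      ext z; exact ⟨fun hz => h z hz, by rintro rfl; exact ⟨hxe, hx⟩⟩
    have h3 := face_hull hP hf
    rw [h2, convexHull_singleton] at h3
    rw [← h3, setDim_singleton] at hd
    omega
  obtain ⟨y, ⟨hye, hy⟩, hyx⟩ := this
  have hcol : Collinear ℝ e := collinear_iff_finrank_le_one.2 hd.le
  have key : ∀ a b c : E3, b ∈ vx P → a ∈ P → c ∈ P → a ≠ b → c ≠ b → ¬ Wbtw ℝ a b c := by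
    intro a b c hb ha hc hab hcb hw
    have hs : b ∈ openSegment ℝ a c := by
      have := mem_segment_iff_wbtw.2 hw
      rw [← insert_endpoints_openSegment] at this
      rcases this with h | h | h
      · exact absurd h.symm hab
      · exact absurd h.symm hcb
      · exact h
    rw [mem_extremePoints_iff_left] at hb
    exact hab (hb.2 a ha c hc hs)
  have h2 : e ∩ vx P = {x, y} := by
    apply Subset.antisymm
    · rintro z ⟨hze, hz⟩
      by_contra hzn
      simp only [mem_insert_iff, mem_singleton_iff, not_or] at hzn
      have hc3 : Collinear ℝ {x, y, z} := hcol.subset (by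
        rintro w (rfl | rfl | rfl) <;> assumption)
      rcases hc3.wbtw_or_wbtw_or_wbtw with h | h | h
      · exact key x y z hy (face_sub hf hxe) (face_sub hf hze) hyx.symm hzn.2 h
      · exact key y z x hz (face_sub hf hye) (face_sub hf hxe) (Ne.symm hzn.2) (Ne.symm hzn.1) h
      · exact key z x y hx (face_sub hf hze) (face_sub hf hye) hzn.1 hyx h
    · rintro w (rfl | rfl)
      · exact ⟨hxe, hx⟩
      · exact ⟨hye, hy⟩
  refine ⟨x, y, hyx.symm, hx, hy, h2, ?_⟩
  rw [← face_hull hP hf, h2, convexHull_pair]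

theorem vspan_top (h3 : setDim P = 3) : vectorSpan ℝ P = ⊤ := by
  apply Submodule.eq_top_of_finrank_eq
  rw [show Module.finrank ℝ (vectorSpan ℝ P) = 3 from h3]; simp

theorem ker_of_const {A : Set E3} (f : E3 →ₗ[ℝ] ℝ) (d : ℝ) (h : ∀ x ∈ A, f x = d) :
    vectorSpan ℝ A ≤ LinearMap.ker f := by
  rw [vectorSpan_def, Submodule.span_le]
  rintro _ ⟨x, hx, y, hy, rfl⟩
  simp [h x hx, h y hy]

theorem two_facets (hP : IsPolytope P) (h3 : setDim P = 3) (he : IsEdgeOf e P) :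
    ∃ A B, IsFacetOf A P ∧ IsFacetOf B P ∧ A ≠ B ∧ e ⊆ A ∧ e ⊆ B := by
  obtain ⟨hf, hd⟩ := he
  have hPP : IsFaceOf P P := face_self hP (hf.1.mono (face_sub hf))
  have hne : e ≠ P := by rintro rfl; omega
  obtain ⟨g, c, hg, hge⟩ := exposed hP hf
  have hz : ∃ z, g z = 0 ∧ z ∉ vectorSpan ℝ e := by
    by_contra h
    push Not at h
    have h1 : LinearMap.ker g ≤ vectorSpan ℝ e := fun z hz => h z hz
    have h2 := Submodule.finrank_mono h1
    have h4 := LinearMap.finrank_range_add_finrank_ker g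
    have h5 := Submodule.finrank_le (LinearMap.range g)
    have h6 : Module.finrank ℝ E3 = 3 := by simp
    rw [Module.finrank_self] at h5
    unfold setDim at hd
    omega
  obtain ⟨z, hgz, hz⟩ := hz
  obtain ⟨f, hfz, hfe⟩ := Submodule.exists_le_ker_of_notMem hz
  obtain ⟨r, hr⟩ := hf.1
  have hconst : ∀ x ∈ e, f x = f r := by
    intro x hx
    have := hfe (vsub_mem_vectorSpan ℝ hx hr)
    rw [LinearMap.mem_ker, vsub_eq_sub, map_sub] at this
    linarith
  have hnot : ∀ (s l k : ℝ), s ≠ 0 → ¬ ∀ x ∈ P, s * f x + l * g x = k := by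
    intro s l k hs h
    have h1 := ker_of_const (s • f + l • g) k (by simpa using h)
    rw [vspan_top h3] at h1
    have h2 : z ∈ LinearMap.ker (s • f + l • g) := h1 trivial
    simp [hgz, hfz, hs] at h2
  obtain ⟨l, a1, a2, a3, y, hyP, hyv, hye, ay⟩ :=
    pivot hP hPP hf (face_sub hf) hne g c hg hge f (f r) hconst
  obtain ⟨k, b1, b2, b3, w, hwP, hwv, hwe, bw⟩ :=
    pivot hP hPP hf (face_sub hf) hne g c hg hge (-f) (-f r) (by intro x hx; simp [hconst x hx])
  have hfac : ∀ T : Set E3, IsFaceOf T P → T ≠ P → e ⊆ T → (∃ y ∈ T, y ∉ e) → IsFacetOf T P := by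
    intro T hT hTP heT ⟨y, hy, hye⟩
    refine ⟨hT, ?_⟩
    have h1 := face_dim_lt (cvx hP) hT hTP
    have h2 := face_dim_lt hT.2.2.1 (face_mono hT hf heT) (by rintro rfl; exact hye hy)
    omega
  refine ⟨_, _, hfac _ a2 ?_ a3 ⟨y, ⟨hyP, ay⟩, hye⟩, hfac _ b2 ?_ b3 ⟨w, ⟨hwP, bw⟩, hwe⟩, ?_, a3, b3⟩
  · intro h
    refine hnot 1 l (f r + l * c) one_ne_zero fun x hx => ?_
    rw [← h] at hx
    simpa using hx.2
  · intro h
    refine hnot (-1) k (-f r + k * c) (by norm_num) fun x hx => ?_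
    rw [← h] at hx
    simpa using hx.2
  · intro h
    have hy2 : y ∈ {x ∈ P | (-f) x + k * g x = -f r + k * c} := by rw [← h]; exact ⟨hyP, ay⟩
    have hy3 := hy2.2
    have hgy : g y ≠ c := fun h => hye ((hge y hyP).1 h)
    simp only [LinearMap.neg_apply] at hy3 b1
    have hkl : k = -l := by
      have : (k + l) * (g y - c) = 0 := by linarith
      rcases mul_eq_zero.1 this with h | h
      · linarith
      · exact absurd (sub_eq_zero.1 h) hgy
    subst hkl
    refine hnot 1 l (f r + l * c) one_ne_zero fun x hx => ?_
    have := a1 x hx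
    have := b1 x hx
    linarith

theorem two_edges (hP : IsPolytope P) {A : Set E3} (hA : IsFacetOf A P) {v : E3} (hv : v ∈ vx P)
    (hvA : v ∈ A) : ∃ e e', IsEdgeOf e P ∧ IsEdgeOf e' P ∧ e ≠ e' ∧ e ⊆ A ∧ e' ⊆ A ∧ v ∈ e ∧ v ∈ e' := by
  have step : ∀ R, IsFaceOf R P → R ⊆ A → R ≠ A → v ∈ R →
      ∃ e, IsEdgeOf e P ∧ e ⊆ A ∧ v ∈ e ∧ ∃ y ∈ e, y ∉ R := by
    intro R hR hRA hne hvR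
    obtain ⟨g, c, hg, hgR⟩ := exposed hP hR
    obtain ⟨x, hxA, hxR⟩ : ∃ x ∈ A, x ∉ R := by
      by_contra h
      push Not at h
      exact hne (Subset.antisymm hRA h)
    have hgv := (hgR v (face_sub hR hvR)).2 hvR
    obtain ⟨e, he, heA, hve, y, hy, hyv⟩ := up_edge hP hA.1 hv hvA (-g) ⟨x, hxA, by
      have h1 := hg x (face_sub hA.1 hxA)
      have h2 : g x ≠ c := fun h => hxR ((hgR x (face_sub hA.1 hxA)).1 h)
      have := lt_of_le_of_ne h1 h2
      simp only [LinearMap.neg_apply]; linarith⟩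
    refine ⟨e, he, heA, hve, y, hy, fun hyR => ?_⟩
    have := (hgR y (face_sub hR hyR)).2 hyR
    simp only [LinearMap.neg_apply] at hyv
    linarith
  have h1 : ({v} : Set E3) ≠ A := by
    rintro rfl
    have := hA.2
    rw [setDim_singleton] at this
    omega
  obtain ⟨e, he, heA, hve, -⟩ := step {v} (singleton_face hv) (by simpa using hvA) h1 rfl
  obtain ⟨e', he', heA', hve', y, hy, hye⟩ := step e he.1 heA
    (by rintro rfl; have := hA.2; have := he.2; omega) hve
  exact ⟨e, e', he, he', by rintro rfl; exact hye hy, heA, heA', hve, hve'⟩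

theorem in_facet (hP : IsPolytope P) (h3 : setDim P = 3) (hF : IsFaceOf F P) (hne : F ≠ P) :
    ∃ A, IsFacetOf A P ∧ F ⊆ A := by
  have hlt := face_dim_lt (cvx hP) hF hne
  rw [h3] at hlt
  have hcase : setDim F = 0 ∨ setDim F = 1 ∨ setDim F = 2 := by omega
  rcases hcase with h | h | h
  · obtain ⟨v, hvF, hv⟩ := face_has_vx hP hF
    have hFv : F = {v} := (subsing_of_dim h).eq_singleton_of_mem hvF
    have hPP : IsFaceOf P P := face_self hP (hF.1.mono (face_sub hF))
    obtain ⟨g, c, hg, hgR⟩ := exposed hP hF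
    obtain ⟨x, hxA, hxR⟩ : ∃ x ∈ P, x ∉ F := by
      by_contra h
      push Not at h
      exact hne (Subset.antisymm (face_sub hF) h)
    have hgv := (hgR v (face_sub hF hvF)).2 hvF
    obtain ⟨e, he, heA, hve, -⟩ := up_edge hP hPP hv (face_sub hF hvF) (-g) ⟨x, hxA, by
      have h1 := hg x hxA
      have h2 : g x ≠ c := fun h => hxR ((hgR x hxA).1 h)
      have := lt_of_le_of_ne h1 h2
      simp only [LinearMap.neg_apply]; linarith⟩
    obtain ⟨A, -, hA, -, -, heA, -⟩ := two_facets hP h3 he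
    exact ⟨A, hA, by rw [hFv]; exact singleton_subset_iff.2 (heA hve)⟩
  · obtain ⟨A, -, hA, -, -, heA, -⟩ := two_facets hP h3 ⟨hF, h⟩
    exact ⟨A, hA, heA⟩
  · exact ⟨F, ⟨hF, h⟩, Subset.rfl⟩

end FB

namespace FB

variable {P Q R F A B C e e' : Set E3}

theorem facets_at (hS : IsSimplePolytope3 P) {v : E3} (hv : v ∈ vx P) :
    ∃ A B C, A ≠ B ∧ A ≠ C ∧ B ≠ C ∧ ∀ F, (IsFacetOf F P ∧ v ∈ F) ↔ F = A ∨ F = B ∨ F = C := by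
  have h := hS.2.2 v ((vertex_iff v).2 hv)
  obtain ⟨A, B, C, h1, h2, h3, h⟩ := Set.ncard_eq_three.1 h
  refine ⟨A, B, C, h1, h2, h3, fun F => ?_⟩
  have := Set.ext_iff.1 h F
  simpa using this

/-- Among facets at a vertex, four cannot be pairwise distinct. -/
theorem facets_at_third (hS : IsSimplePolytope3 P) {v : E3} (hv : v ∈ vx P)
    (hA : IsFacetOf A P) (hB : IsFacetOf B P) (hAB : A ≠ B) (hvA : v ∈ A) (hvB : v ∈ B)
    {C D : Set E3} (hC : IsFacetOf C P) (hvC : v ∈ C) (hD : IsFacetOf D P) (hvD : v ∈ D)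
    (hCA : C ≠ A) (hCB : C ≠ B) (hDA : D ≠ A) (hDB : D ≠ B) : C = D := by
  obtain ⟨X, Y, Z, -, -, -, h⟩ := facets_at hS hv
  have a := (h A).1 ⟨hA, hvA⟩
  have b := (h B).1 ⟨hB, hvB⟩
  have c := (h C).1 ⟨hC, hvC⟩
  have d := (h D).1 ⟨hD, hvD⟩
  clear h
  rcases a with rfl | rfl | rfl <;> rcases b with rfl | rfl | rfl <;>
    rcases c with rfl | rfl | rfl <;> rcases d with rfl | rfl | rfl <;> first | rfl | contradiction

theorem inter_dim (hA : IsFacetOf A P) (hB : IsFacetOf B P) (hAB : A ≠ B)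
    (hne : (A ∩ B).Nonempty) : setDim (A ∩ B) ≤ 1 := by
  have hf := face_inter hA.1 hB.1 hne
  by_contra h
  have h1 := face_eq_of_dim' hA.1 hf inter_subset_left (by rw [hA.2]; omega)
  have h2 := face_eq_of_dim' hB.1 hf inter_subset_right (by rw [hB.2]; omega)
  exact hAB (h1.symm.trans h2)

theorem edge_eq_inter (hA : IsFacetOf A P) (hB : IsFacetOf B P) (hAB : A ≠ B)
    (he : IsEdgeOf e P) (heA : e ⊆ A) (heB : e ⊆ B) : e = A ∩ B := by
  have hne : (A ∩ B).Nonempty := he.1.1.mono (subset_inter heA heB)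
  exact face_eq_of_dim' (face_inter hA.1 hB.1 hne) he.1 (subset_inter heA heB)
    (by rw [he.2]; exact inter_dim hA hB hAB hne)

theorem other_facet (hS : IsSimplePolytope3 P) (he : IsEdgeOf e P) (A : Set E3) :
    ∃ B, IsFacetOf B P ∧ B ≠ A ∧ e ⊆ B := by
  obtain ⟨X, Y, hX, hY, hXY, h1, h2⟩ := two_facets hS.1 hS.2.1 he
  by_cases h : X = A
  · exact ⟨Y, hY, by rintro rfl; exact hXY h, h2⟩
  · exact ⟨X, hX, h, h1⟩

theorem inter_edge_v (hS : IsSimplePolytope3 P) (hA : IsFacetOf A P) (hB : IsFacetOf B P)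
    (hAB : A ≠ B) {v : E3} (hv : v ∈ vx P) (hvA : v ∈ A) (hvB : v ∈ B) : IsEdgeOf (A ∩ B) P := by
  have hf := face_inter hA.1 hB.1 ⟨v, hvA, hvB⟩
  refine ⟨hf, ?_⟩
  have h1 := inter_dim hA hB hAB ⟨v, hvA, hvB⟩
  by_contra h2
  have h0 : setDim (A ∩ B) = 0 := by omega
  obtain ⟨e, e', he, he', hne, heA, heA', hve, hve'⟩ := two_edges hS.1 hA hv hvA
  obtain ⟨C, hC, hCA, heC⟩ := other_facet hS he A
  obtain ⟨D, hD, hDA, heD⟩ := other_facet hS he' A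
  have hCB : C ≠ B := by
    rintro rfl
    have := setDim_mono (subset_inter heA heC)
    rw [he.2] at this; omega
  have hDB : D ≠ B := by
    rintro rfl
    have := setDim_mono (subset_inter heA' heD)
    rw [he'.2] at this; omega
  obtain rfl := facets_at_third hS hv hA hB hAB hvA hvB hC (heC hve) hD (heD hve') hCA hCB hDA hDB
  exact hne ((edge_eq_inter hA hC hCA.symm he heA heC).trans
    (edge_eq_inter hA hC hCA.symm he' heA' heD).symm)

theorem inter_edge (hS : IsSimplePolytope3 P) (hA : IsFacetOf A P) (hB : IsFacetOf B P)
    (hAB : A ≠ B) (hne : (A ∩ B).Nonempty) : IsEdgeOf (A ∩ B) P := by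
  obtain ⟨v, hv, hvx⟩ := face_has_vx hS.1 (face_inter hA.1 hB.1 hne)
  exact inter_edge_v hS hA hB hAB hvx hv.1 hv.2

theorem edge_two_facets (hS : IsSimplePolytope3 P) (hA : IsFacetOf A P) (hB : IsFacetOf B P)
    (hC : IsFacetOf C P) (hAB : A ≠ B) (hAC : A ≠ C) (hBC : B ≠ C) (he : IsEdgeOf e P)
    (heA : e ⊆ A) (heB : e ⊆ B) (heC : e ⊆ C) : False := by
  obtain ⟨x, hxe, hx⟩ := face_has_vx hS.1 he.1
  obtain ⟨e1, e2, he1, he2, hne, h1A, h2A, hx1, hx2⟩ := two_edges hS.1 hA hx (heA hxe)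
  have key : ∀ e', IsEdgeOf e' P → e' ⊆ A → x ∈ e' → e' = e := by
    intro e' he' hA' hxe'
    obtain ⟨D, hD, hDA, heD⟩ := other_facet hS he' A
    by_cases hDB : D = B
    · subst hDB
      exact (edge_eq_inter hA hD hAB he' hA' heD).trans (edge_eq_inter hA hD hAB he heA heB).symm
    · obtain rfl := facets_at_third hS hx hA hB hAB (heA hxe) (heB hxe) hD (heD hxe') hC (heC hxe)
        hDA hDB hAC.symm hBC.symm
      exact (edge_eq_inter hA hD hAC he' hA' heD).trans (edge_eq_inter hA hD hAC he heA heC).symm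
  exact hne ((key e1 he1 h1A hx1).trans (key e2 he2 h2A hx2).symm)

theorem edge_other (hP : IsPolytope P) (he : IsEdgeOf e P) {v : E3} (hv : v ∈ vx P) (hve : v ∈ e) :
    ∃ w, w ≠ v ∧ w ∈ vx P ∧ w ∈ e ∧ e ∩ vx P = {v, w} ∧ e = segment ℝ v w := by
  obtain ⟨x, y, hxy, hx, hy, h1, h2⟩ := edge_ends hP he
  have : v ∈ e ∩ vx P := ⟨hve, hv⟩
  rw [h1] at this
  rcases this with rfl | rfl
  · exact ⟨y, hxy.symm, hy, by rw [h2]; exact right_mem_segment ℝ _ _, h1, h2⟩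
  · exact ⟨x, hxy, hx, by rw [h2]; exact left_mem_segment ℝ _ _, by rw [h1, pair_comm],
      by rw [h2, segment_symm]⟩

theorem up_vertex (hP : IsPolytope P) (hQ : IsFaceOf Q P) {v : E3} (hv : v ∈ vx P) (hvQ : v ∈ Q)
    (f : E3 →ₗ[ℝ] ℝ) (hup : ∃ x ∈ Q, f v < f x) :
    ∃ e w, IsEdgeOf e P ∧ e ⊆ Q ∧ v ∈ e ∧ w ∈ e ∧ w ∈ vx P ∧ f v < f w := by
  obtain ⟨e, he, heQ, hve, y, hye, hy⟩ := up_edge hP hQ hv hvQ f hup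
  obtain ⟨w, hwv, hw, hwe, -, hseg⟩ := edge_other hP he hv hve
  refine ⟨e, w, he, heQ, hve, hwe, hw, ?_⟩
  rw [hseg] at hye
  obtain ⟨a, b, ha, hb, hab, rfl⟩ := hye
  by_contra hle
  push Not at hle
  simp only [map_add, map_smul, smul_eq_mul] at hy
  have := mul_le_mul_of_nonneg_left hle hb
  have : a * f v + b * f v = f v := by rw [← add_mul, hab, one_mul]
  linarith

theorem generic (hP : IsPolytope P) : ∃ f : E3 →ₗ[ℝ] ℝ, ∀ x ∈ vx P, ∀ y ∈ vx P, f x = f y → x = y := by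
  have : Finite (vx P) := (vx_fin hP)
  let I := {p : vx P × vx P // p.1 ≠ p.2}
  obtain ⟨f, hf⟩ := Module.exists_dual_forall_apply_ne_zero (K := ℝ) (M := E3)
    (fun p : I => (p.1.1 : E3) - p.1.2) (by
      rintro ⟨⟨x, y⟩, h⟩
      exact sub_ne_zero.2 fun h' => h (Subtype.ext h'))
  refine ⟨f, fun x hx y hy h => ?_⟩
  by_contra hne
  refine hf ⟨(⟨x, hx⟩, ⟨y, hy⟩), fun h' => hne (congrArg Subtype.val h')⟩ ?_
  simp [h]

theorem facets_fin (hP : IsPolytope P) : {F | IsFacetOf F P}.Finite :=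
  (faces_fin hP).subset fun _ h => h.1

theorem exists_cmap (hS : IsSimplePolytope3 P) :
    ∃ (V : Type) (_ : Fintype V) (_ : DecidableEq V) (M : CMap V) (p : V → E3)
      (φ : Set E3 → Finset V), Function.Injective p ∧ (∀ v, p v ∈ vx P) ∧
      (∀ x ∈ vx P, ∃ v, p v = x) ∧ (∀ A, IsFacetOf A P → φ A ∈ M.Φ) ∧
      (∀ X ∈ M.Φ, ∃ A, IsFacetOf A P ∧ φ A = X) ∧ (∀ A v, v ∈ φ A ↔ p v ∈ A) ∧
      (∀ A B, IsFacetOf A P → IsFacetOf B P → φ A = φ B → A = B) := by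
  classical
  have hP := hS.1
  have : Finite (vx P) := vx_fin hP
  have : Fintype (vx P) := Fintype.ofFinite _
  obtain ⟨f, hf⟩ := generic hP
  let φ : Set E3 → Finset (vx P) := fun A => Finset.univ.filter (fun v => v.1 ∈ A)
  have hφ : ∀ A v, v ∈ φ A ↔ v.1 ∈ A := by intro A v; simp [φ]
  have hinj : ∀ A B, IsFacetOf A P → IsFacetOf B P → φ A = φ B → A = B := by
    intro A B hA hB h
    refine face_eq_of_vx hP hA.1 hB.1 ?_
    ext x
    refine and_congr_left fun hx => ?_
    rw [← hφ A ⟨x, hx⟩, h, hφ B ⟨x, hx⟩]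
  let S := (facets_fin hP).toFinset
  have hSm : ∀ F, F ∈ S ↔ IsFacetOf F P := by intro F; simp [S]
  have hmem : ∀ X, X ∈ S.image φ ↔ ∃ A, IsFacetOf A P ∧ φ A = X := by
    intro X; simp only [Finset.mem_image, hSm]
  refine ⟨vx P, inferInstance, inferInstance,
    { Φ := S.image φ
      h := fun v => f v.1
      hinj := fun x y h => Subtype.ext (hf _ x.2 _ y.2 h)
      three := ?_
      inter2 := ?_
      inter3 := ?_
      locmin := ?_
      locmax := ?_ }, Subtype.val, φ, Subtype.val_injective, fun v => v.2,
      fun x hx => ⟨⟨x, hx⟩, rfl⟩, fun A hA => (hmem _).2 ⟨A, hA, rfl⟩, fun X hX => (hmem _).1 hX,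
      hφ, hinj⟩
  · intro v
    have h := hS.2.2 v.1 ((vertex_iff v.1).2 v.2)
    have h2 : (S.image φ).filter (fun A => v ∈ A) = (S.filter (fun F => v.1 ∈ F)).image φ := by
      ext X
      simp only [Finset.mem_filter, Finset.mem_image]
      constructor
      · rintro ⟨⟨A, hA, rfl⟩, hv⟩
        exact ⟨A, ⟨hA, (hφ _ _).1 hv⟩, rfl⟩
      · rintro ⟨A, ⟨hA, hv⟩, rfl⟩
        exact ⟨⟨A, hA, rfl⟩, (hφ _ _).2 hv⟩
    rw [h2, Finset.card_image_of_injOn, ← h, ← Set.ncard_coe_finset]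
    · congr 1
      ext F
      simp [hSm]
    · intro A hA B hB hAB
      simp only [Finset.coe_filter, mem_setOf_eq, hSm] at hA hB
      exact hinj A B hA.1 hB.1 hAB
  · intro X hX Y hY hXY v hvX hvY
    obtain ⟨A, hA, rfl⟩ := (hmem X).1 hX
    obtain ⟨B, hB, rfl⟩ := (hmem Y).1 hY
    have hAB : A ≠ B := by rintro rfl; exact hXY rfl
    rw [hφ] at hvX hvY
    have he := inter_edge_v hS hA hB hAB v.2 hvX hvY
    obtain ⟨w, hwv, hw, hwe, h1, -⟩ := edge_other hP he v.2 ⟨hvX, hvY⟩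
    refine ⟨⟨w, hw⟩, fun h => hwv (congrArg Subtype.val h), ?_⟩
    ext z
    rw [Finset.mem_inter, hφ, hφ]
    have := Set.ext_iff.1 h1 z.1
    simp only [mem_inter_iff, mem_insert_iff, mem_singleton_iff, z.2, and_true] at this
    rw [this]
    simp [Subtype.ext_iff]
  · intro X hX Y hY Z hZ hXY hXZ hYZ x y xX xY xZ yX yY yZ
    obtain ⟨A, hA, rfl⟩ := (hmem X).1 hX
    obtain ⟨B, hB, rfl⟩ := (hmem Y).1 hY
    obtain ⟨C, hC, rfl⟩ := (hmem Z).1 hZ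
    have hAB : A ≠ B := by rintro rfl; exact hXY rfl
    have hAC : A ≠ C := by rintro rfl; exact hXZ rfl
    have hBC : B ≠ C := by rintro rfl; exact hYZ rfl
    rw [hφ] at xX xY xZ yX yY yZ
    by_contra hne
    have hne' : x.1 ≠ y.1 := fun h => hne (Subtype.ext h)
    have he := inter_edge_v hS hA hB hAB x.2 xX xY
    obtain ⟨w, hwv, hw, hwe, h1, h2⟩ := edge_other hP he x.2 ⟨xX, xY⟩
    have hy : y.1 ∈ A ∩ B ∩ vx P := ⟨⟨yX, yY⟩, y.2⟩
    rw [h1] at hy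
    rcases hy with h | h
    · exact hne' h.symm
    · rw [mem_singleton_iff] at h
      rw [← h] at h2
      refine edge_two_facets hS hA hB hC hAB hAC hBC he inter_subset_left inter_subset_right ?_
      rw [h2]
      exact hC.1.2.2.1.segment_subset xZ yZ
  · rintro X hX v hvX ⟨w, hwX, hw⟩
    obtain ⟨A, hA, rfl⟩ := (hmem X).1 hX
    rw [hφ] at hvX hwX
    obtain ⟨e, z, he, heA, hve, hze, hz, hfz⟩ := up_vertex hP hA.1 v.2 hvX (-f)
      ⟨w, hwX, by simpa using hw⟩
    obtain ⟨B, hB, hBA, heB⟩ := other_facet hS he A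
    refine ⟨⟨z, hz⟩, (hφ _ _).2 (heA hze), by simpa using hfz, φ B, (hmem _).2 ⟨B, hB, rfl⟩,
      fun h => hBA (hinj _ _ hB hA h), (hφ _ _).2 (heB hve), (hφ _ _).2 (heB hze)⟩
  · rintro v ⟨w, hw⟩
    have hvP : v.1 ∈ P := extremePoints_subset v.2
    obtain ⟨e, z, he, -, hve, hze, hz, hfz⟩ := up_vertex hP (face_self hP ⟨_, hvP⟩) v.2 hvP f
      ⟨w, extremePoints_subset w.2, hw⟩
    obtain ⟨A, B, hA, hB, hAB, heA, heB⟩ := two_facets hP hS.2.1 he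
    exact ⟨⟨z, hz⟩, hfz, φ A, (hmem _).2 ⟨A, hA, rfl⟩, φ B, (hmem _).2 ⟨B, hB, rfl⟩,
      fun h => hAB (hinj _ _ hA hB h), (hφ _ _).2 (heA hve), (hφ _ _).2 (heB hve),
      (hφ _ _).2 (heA hze), (hφ _ _).2 (heB hze)⟩

/-- number of edges of a facet, as number of neighbours -/
theorem facetEdges_eq (hS : IsSimplePolytope3 P) {V : Type} [Fintype V] [DecidableEq V]
    (M : CMap V) (p : V → E3)
    (φ : Set E3 → Finset V) (h1 : ∀ v, p v ∈ vx P)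
    (h2 : ∀ x ∈ vx P, ∃ v, p v = x) (h3 : ∀ A, IsFacetOf A P → φ A ∈ M.Φ)
    (h4 : ∀ X ∈ M.Φ, ∃ A, IsFacetOf A P ∧ φ A = X) (h5 : ∀ A v, v ∈ φ A ↔ p v ∈ A)
    (h6 : ∀ A B, IsFacetOf A P → IsFacetOf B P → φ A = φ B → A = B)
    (hF : IsFacetOf F P) : facetEdges P F = (φ F).card := by
  classical
  rw [← M.nbr_card (h3 F hF)]
  let N : Set (Set E3) := {B | IsFacetOf B P ∧ B ≠ F ∧ (F ∩ B).Nonempty}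
  have e1 : {e | IsEdgeOf e P ∧ e ⊆ F} = (fun B => F ∩ B) '' N := by
    ext e
    constructor
    · rintro ⟨he, heF⟩
      obtain ⟨B, hB, hBF, heB⟩ := other_facet hS he F
      exact ⟨B, ⟨hB, hBF, he.1.1.mono (subset_inter heF heB)⟩,
        (edge_eq_inter hF hB hBF.symm he heF heB).symm⟩
    · rintro ⟨B, ⟨hB, hBF, hne⟩, rfl⟩
      exact ⟨inter_edge hS hF hB hBF.symm hne, inter_subset_left⟩
  have i1 : InjOn (fun B => F ∩ B) N := by
    rintro A ⟨hA, hAF, hAn⟩ B ⟨hB, hBF, hBn⟩ (h : F ∩ A = F ∩ B)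
    by_contra hAB
    exact edge_two_facets hS hF hA hB hAF.symm hBF.symm hAB (inter_edge hS hF hA hAF.symm hAn)
      inter_subset_left inter_subset_right (h ▸ inter_subset_right)
  have e2 : ((M.Φ.filter (fun B => B ≠ φ F ∧ (φ F ∩ B).Nonempty) : Finset (Finset V)) :
      Set (Finset V)) = φ '' N := by
    ext X
    simp only [Finset.coe_filter, mem_setOf_eq]
    constructor
    · rintro ⟨hX, hne, v, hv⟩
      obtain ⟨A, hA, rfl⟩ := h4 X hX
      rw [Finset.mem_inter, h5, h5] at hv
      exact ⟨A, ⟨hA, by rintro rfl; exact hne rfl, p v, hv⟩, rfl⟩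
    · rintro ⟨B, ⟨hB, hBF, hne⟩, rfl⟩
      refine ⟨h3 B hB, fun h => hBF (h6 _ _ hB hF h), ?_⟩
      obtain ⟨x, hx, hxv⟩ := face_has_vx hS.1 (face_inter hF.1 hB.1 hne)
      obtain ⟨v, rfl⟩ := h2 x hxv
      exact ⟨v, by rw [Finset.mem_inter, h5, h5]; exact hx⟩
  have i2 : InjOn φ N := fun A hA B hB h => h6 A B hA.1 hB.1 h
  rw [← Set.ncard_coe_finset, e2, i2.ncard_image, facetEdges, e1, i1.ncard_image]

end FB

namespace FB

variable {P Q R F A B C e e' : Set E3}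

theorem intInt_sub (hR : IsExtreme ℝ F R) {r : E3} (hr : r ∈ intrinsicInterior ℝ F) (hrR : r ∈ R) :
    F ⊆ R := by
  intro q hq
  have hqs : q ∈ affineSpan ℝ F := mem_affineSpan ℝ hq
  rw [mem_intrinsicInterior] at hr
  obtain ⟨⟨r', hr'⟩, hintr, rfl⟩ := hr
  let L : ℝ → affineSpan ℝ F := fun t => ⟨AffineMap.lineMap q r' t, AffineMap.lineMap_mem t hqs hr'⟩
  have hL : Continuous L := by
    refine Continuous.subtype_mk ?_ _
    exact AffineMap.lineMap_continuous
  have h1 : L 1 ∈ interior ((↑) ⁻¹' F : Set (affineSpan ℝ F)) := by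
    have : L 1 = ⟨r', hr'⟩ := by ext1; simp [L]
    rw [this]; exact hintr
  have hnb : L ⁻¹' (interior ((↑) ⁻¹' F : Set (affineSpan ℝ F))) ∈ nhds (1:ℝ) :=
    (isOpen_interior.preimage hL).mem_nhds h1
  obtain ⟨ε, hε, hb⟩ := Metric.mem_nhds_iff.1 hnb
  have h2 : L (1 + ε/2) ∈ interior ((↑) ⁻¹' F : Set (affineSpan ℝ F)) := by
    apply hb
    rw [Metric.mem_ball, Real.dist_eq, add_sub_cancel_left, abs_of_pos (by positivity)]; linarith
  have h3 : L (1 + ε/2) ∈ ((↑) ⁻¹' F : Set (affineSpan ℝ F)) := interior_subset h2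
  change AffineMap.lineMap q r' (1 + ε/2) ∈ F at h3
  refine hR.left_mem_of_mem_openSegment hq h3 hrR ?_
  have hp : (0:ℝ) < 1 + ε/2 := by positivity
  refine ⟨1 - 1/(1+ε/2), 1/(1+ε/2), ?_, by positivity, by ring, ?_⟩
  · rw [sub_pos, div_lt_one hp]; linarith
  · simp only [AffineMap.lineMap_apply, vsub_eq_sub, vadd_eq_add, smul_add, smul_smul]
    rw [one_div_mul_cancel hp.ne', one_smul]
    module

theorem facet_ext (hA : IsFacetOf A P) (hB : IsFacetOf B P) : IsExtreme ℝ A (B ∩ A) :=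
  (hB.1.2.2.2.inter hA.1.2.2.2).mono (face_sub hA.1) inter_subset_right

theorem facet_not_sub (hA : IsFacetOf A P) (hB : IsFacetOf B P) (hAB : A ≠ B) : ¬ A ⊆ B :=
  fun h => hAB (face_eq_of_dim' hB.1 hA.1 h (by rw [hA.2, hB.2]))

theorem intInt_disj (hA : IsFacetOf A P) (hB : IsFacetOf B P) (hAB : A ≠ B) {x : E3}
    (hx : x ∈ intrinsicInterior ℝ A) : x ∉ B := by
  intro hxB
  exact facet_not_sub hA hB hAB fun y hy =>
    (intInt_sub (facet_ext hA hB) hx ⟨hxB, intrinsicInterior_subset hx⟩ hy).1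

theorem facet_sdiff_convex (hA : IsFacetOf A P) (hB : IsFacetOf B P) : Convex ℝ (A \ B) := by
  have := (facet_ext hA hB).convex_sdiff hA.1.2.2.1
  have h2 : A \ B = A \ (B ∩ A) := by
    ext x
    simp only [mem_sdiff, mem_inter_iff]
    tauto
  rw [h2]
  exact this

theorem facet_sub_frontier (hS : IsSimplePolytope3 P) (hA : IsFacetOf A P) : A ⊆ frontier P := by
  intro x hx
  refine ⟨subset_closure (face_sub hA.1 hx), fun hi => ?_⟩
  have h := intInt_sub hA.1.2.2.2 (interior_subset_intrinsicInterior hi) hx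
  have h2 := setDim_mono h
  rw [hS.2.1, hA.2] at h2
  omega

theorem frontier_facet (hS : IsSimplePolytope3 P) {x : E3} (hx : x ∈ frontier P) :
    ∃ A, IsFacetOf A P ∧ x ∈ A := by
  have hcl : IsClosed P := (cpt hS.1).isClosed
  have hcv := cvx hS.1
  have hxP : x ∈ P := hcl.frontier_subset hx
  have hintr : (interior P).Nonempty := by
    rw [hcv.interior_nonempty_iff_affineSpan_eq_top, AffineSubspace.affineSpan_eq_top_iff_vectorSpan_eq_top_of_nonempty]
    · exact vspan_top hS.2.1
    · exact ⟨x, hxP⟩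
  obtain ⟨f, hf⟩ := geometric_hahn_banach_open_point hcv.interior isOpen_interior hx.2
  have hle : ∀ a ∈ P, f a ≤ f x := by
    intro a ha
    have h1 : a ∈ closure (interior P) := by
      rw [hcv.closure_interior_eq_closure_of_nonempty_interior hintr]; exact subset_closure ha
    have h2 : IsClosed {a | f a ≤ f x} := isClosed_le f.continuous continuous_const
    exact closure_minimal (fun b hb => (hf b hb).le) h2 h1
  have hH := level_face (face_self hS.1 ⟨x, hxP⟩) f.toLinearMap (f x) hle ⟨x, hxP, rfl⟩
  obtain ⟨A, hA, hsub⟩ := in_facet hS.1 hS.2.1 hH (by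
    obtain ⟨y, hy⟩ := hintr
    intro h
    have : y ∈ {z ∈ P | f.toLinearMap z = f x} := by rw [h]; exact interior_subset hy
    exact (hf y hy).ne this.2)
  exact ⟨A, hA, hsub ⟨hxP, rfl⟩⟩

theorem surrounds (hS : IsSimplePolytope3 P) (hF : IsFacetOf F P) (B : Fin 4 → Set E3)
    (hL : IsLoop P B) (hBF : ∀ i, B i ≠ F) (hinj : Function.Injective B) (u : Fin 4 → E3)
    (huinj : Function.Injective u) (huv : ∀ i, u i ∈ vx P)
    (hu : ∀ i, u i ∈ F ∧ u i ∈ B i ∧ u i ∈ B (nxt i)) (hall : ∀ x ∈ F, x ∈ vx P → ∃ i, u i = x) :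
    Surrounds P B F := by
  have hB : ∀ i, IsFacetOf (B i) P := hL.2.1
  have nne : ∀ i : Fin 4, nxt i ≠ i := by decide
  have nsurj : ∀ i : Fin 4, ∃ j, nxt j = i := by decide
  have hseg : ∀ i, segment ℝ (u i) (u (nxt i)) = F ∩ B (nxt i) := by
    intro i
    have he := inter_edge_v hS hF (hB (nxt i)) (hBF _).symm (huv i) (hu i).1 (hu i).2.2
    obtain ⟨w, -, hw, hwe, h1, h2⟩ := edge_other hS.1 he (huv i) ⟨(hu i).1, (hu i).2.2⟩
    have : u (nxt i) ∈ F ∩ B (nxt i) ∩ vx P := ⟨⟨(hu _).1, (hu _).2.1⟩, huv _⟩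
    rw [h1] at this
    rcases this with h | h
    · exact absurd (huinj h) (nne i)
    · rw [mem_singleton_iff] at h
      rw [h2, h]
  have hedge : ∀ i, IsEdgeOf (F ∩ B (nxt i)) P := fun i =>
    inter_edge_v hS hF (hB (nxt i)) (hBF _).symm (huv i) (hu i).1 (hu i).2.2
  set γ : Set E3 := ⋃ i, segment ℝ (u i) (u (nxt i)) with hγ
  have hcyc : IsSimpleEdgeCycleVia P γ u :=
    ⟨by norm_num, huinj, fun i => (vertex_iff _).2 (huv i), fun i => by rw [hseg]; exact hedge i, rfl⟩
  have hγF : γ ⊆ F := by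
    refine iUnion_subset fun i => ?_
    rw [hseg]; exact inter_subset_left
  have hsegγ : ∀ i, F ∩ B i ⊆ γ := by
    intro i
    obtain ⟨j, rfl⟩ := nsurj i
    rw [← hseg]
    exact subset_iUnion (fun i => segment ℝ (u i) (u (nxt i))) j
  -- other facets meet `F` inside the cycle
  have hother : ∀ A, IsFacetOf A P → A ≠ F → F ∩ A ⊆ γ := by
    intro A hA hAF
    by_cases hne : (F ∩ A).Nonempty
    · obtain ⟨x, ⟨hxF, hxA⟩, hx⟩ := face_has_vx hS.1 (face_inter hF.1 hA.1 hne)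
      obtain ⟨i, rfl⟩ := hall x hxF hx
      by_cases h1 : A = B i
      · rw [h1]; exact hsegγ i
      · have := facets_at_third hS hx hF (hB i) (hBF i).symm hxF (hu i).2.1 hA hxA
          (hB (nxt i)) (hu i).2.2 hAF h1 (hBF _) (fun h => nne i (hinj h))
        rw [this]; exact hsegγ _
    · rw [not_nonempty_iff_eq_empty.1 hne]; exact empty_subset _
  -- first component
  have hW : IsPreconnected (⋃ i, B i \ F) := by
    refine IsPreconnected.iUnion_of_reflTransGen
      (fun i => (facet_sdiff_convex (hB i) hF).isPreconnected) ?_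
    have st : ∀ i, Relation.ReflTransGen
        (fun i j : Fin 4 => ((B i \ F) ∩ (B j \ F)).Nonempty) i (nxt i) := by
      intro i
      refine Relation.ReflTransGen.single ?_
      have he := hL.2.2 (by norm_num) i
      by_contra h
      refine edge_two_facets hS hF (hB i) (hB (nxt i)) (hBF _).symm (hBF _).symm
        (fun h => nne i (hinj h).symm) he ?_ inter_subset_left inter_subset_right
      intro x hx
      by_contra hxF
      exact h ⟨x, ⟨hx.1, hxF⟩, ⟨hx.2, hxF⟩⟩
    intro i j
    have : j = i ∨ j = nxt i ∨ j = nxt (nxt i) ∨ j = nxt (nxt (nxt i)) := by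
      revert i j; decide
    rcases this with rfl | rfl | rfl | rfl
    · exact Relation.ReflTransGen.refl
    · exact st i
    · exact (st i).trans (st _)
    · exact ((st i).trans (st _)).trans (st _)
  have hWsub : (⋃ i, B i \ F) ⊆ frontier P \ γ := by
    refine iUnion_subset fun i x hx => ⟨facet_sub_frontier hS (hB i) hx.1, fun h => hx.2 (hγF h)⟩
  obtain ⟨x₁, hx₁⟩ : (B 0 \ F).Nonempty := by
    by_contra h
    rw [not_nonempty_iff_eq_empty, sdiff_eq_empty] at h
    exact facet_not_sub (hB 0) hF (hBF 0) h
  have hx₁W : x₁ ∈ ⋃ i, B i \ F := mem_iUnion.2 ⟨0, hx₁⟩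
  -- second component
  have hD : Convex ℝ (⋂ i, F \ B i) := convex_iInter fun i => facet_sdiff_convex hF (hB i)
  have hDsub : (⋂ i, F \ B i) ⊆ frontier P \ γ := by
    intro x hx
    rw [mem_iInter] at hx
    refine ⟨facet_sub_frontier hS hF (hx 0).1, fun h => ?_⟩
    obtain ⟨i, hi⟩ := mem_iUnion.1 h
    rw [hseg] at hi
    exact (hx (nxt i)).2 hi.2
  have hID : intrinsicInterior ℝ F ⊆ ⋂ i, F \ B i := by
    intro x hx
    exact mem_iInter.2 fun i =>
      ⟨intrinsicInterior_subset hx, intInt_disj hF (hB i) (hBF i).symm hx⟩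
  obtain ⟨x₂, hx₂⟩ := hF.1.1.intrinsicInterior hF.1.2.2.1
  refine ⟨hF, γ, connectedComponentIn (frontier P \ γ) x₁, connectedComponentIn (frontier P \ γ) x₂,
    ⟨x₁, hWsub hx₁W, rfl⟩, ⟨x₂, hDsub (hID hx₂), rfl⟩, ?_, ?_, ?_⟩
  · intro heq
    have hpre : IsPreconnected (connectedComponentIn (frontier P \ γ) x₁) :=
      isPreconnected_connectedComponentIn
    have m1 : x₁ ∈ connectedComponentIn (frontier P \ γ) x₁ :=
      mem_connectedComponentIn (hWsub hx₁W)
    have m2 : x₂ ∈ connectedComponentIn (frontier P \ γ) x₁ := by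
      rw [heq]; exact mem_connectedComponentIn (hDsub (hID hx₂))
    have hsub := connectedComponentIn_subset (frontier P \ γ) x₁
    have hfin : {A | IsFacetOf A P ∧ A ≠ F}.Finite := (facets_fin hS.1).subset fun _ h => h.1
    have hG : IsClosed (⋃ A ∈ {A | IsFacetOf A P ∧ A ≠ F}, A) :=
      hfin.isClosed_biUnion fun A hA => hA.1.1.2.1
    obtain ⟨y, hyC, hyF, hyG⟩ := isPreconnected_closed_iff.1 hpre F _ hF.1.2.1 hG (by
      intro y hy
      obtain ⟨A, hA, hyA⟩ := frontier_facet hS (hsub hy).1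
      by_cases h : A = F
      · left; rw [← h]; exact hyA
      · right; exact mem_biUnion (show A ∈ {A | IsFacetOf A P ∧ A ≠ F} from ⟨hA, h⟩) hyA)
      ⟨x₂, m2, intrinsicInterior_subset hx₂⟩
      ⟨x₁, m1, mem_biUnion (show B 0 ∈ {A | IsFacetOf A P ∧ A ≠ F} from ⟨hB 0, hBF 0⟩) hx₁.1⟩
    obtain ⟨A, hA, hyA⟩ := mem_iUnion₂.1 hyG
    exact (hsub hyC).2 (hother A hA.1 hA.2 ⟨hyF, hyA⟩)
  · refine ⟨hL, fun i x hx => ?_, 4, u, nxt, hcyc, fun i => by rw [hseg]; exact inter_subset_right,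
      fun i => Or.inr rfl, nsurj, fun _ => by decide⟩
    refine hW.subset_connectedComponentIn hx₁W hWsub (mem_iUnion.2 ⟨i, intrinsicInterior_subset hx, ?_⟩)
    exact intInt_disj (hB i) hF (hBF i) hx
  · refine ⟨⟨one_pos, fun _ => hF, fun h => absurd h (by norm_num)⟩, fun _ x hx => ?_, 4, u,
      fun _ => 0, hcyc, fun i => by rw [hseg]; exact inter_subset_left, fun _ => Or.inl rfl,
      fun i => ⟨0, Subsingleton.elim _ _⟩, fun h => absurd h (by norm_num)⟩
    exact hD.isPreconnected.subset_connectedComponentIn (hID hx₂) hDsub (hID hx)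

end FB

namespace FB

variable {P Q R F A C e e' : Set E3}

/-- `nxt` on `ZMod 4` -/
def nz (i : ZMod 4) : ZMod 4 := nxt (k := 4) i

theorem nxt4 (i : ZMod 4) : nz i = i + 1 := by revert i; decide

theorem exists_facet (hS : IsSimplePolytope3 P) : ∃ F, IsFacetOf F P := by
  have hne : P.Nonempty := by
    by_contra h
    rw [not_nonempty_iff_eq_empty] at h
    have := hS.2.1
    rw [h, setDim, vectorSpan_empty, finrank_bot] at this
    omega
  obtain ⟨v, -, hv⟩ := face_has_vx hS.1 (face_self hS.1 hne)
  obtain ⟨A, B, C, -, -, -, h⟩ := facets_at hS hv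
  exact ⟨A, ((h A).2 (Or.inl rfl)).1⟩

/-- there is a facet such that all other ones are pentagons or hexagons -/
theorem exists_exc (hP : IsAlmostFullerene P) : ∃ X, IsFacetOf X P ∧
    ∀ A, IsFacetOf A P → A ≠ X → facetEdges P A = 5 ∨ facetEdges P A = 6 := by
  obtain ⟨hS, h1, h2⟩ := hP
  have hfin : {F | IsFacetOf F P ∧ (facetEdges P F = 4 ∨ facetEdges P F = 7)}.Finite :=
    (facets_fin hS.1).subset fun _ h => h.1
  have key : ∀ A, IsFacetOf A P → ¬ (facetEdges P A = 5 ∨ facetEdges P A = 6) →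
      A ∈ {F | IsFacetOf F P ∧ (facetEdges P F = 4 ∨ facetEdges P F = 7)} := by
    intro A hA hn
    have := h1 A hA
    simp only [mem_insert_iff, mem_singleton_iff] at this
    exact ⟨hA, by omega⟩
  by_cases h : ∃ X, X ∈ {F | IsFacetOf F P ∧ (facetEdges P F = 4 ∨ facetEdges P F = 7)}
  · obtain ⟨X, hX⟩ := h
    refine ⟨X, hX.1, fun A hA hAX => ?_⟩
    by_contra hn
    exact hAX ((Set.ncard_le_one hfin).1 h2 A (key A hA hn) X hX)
  · obtain ⟨F, hF⟩ := exists_facet hS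
    refine ⟨F, hF, fun A hA _ => ?_⟩
    by_contra hn
    exact h ⟨A, key A hA hn⟩

theorem belt_inj {B : Fin 4 → Set E3} (hB : IsBelt P B) : Function.Injective B := by
  intro p q h
  by_contra hne
  obtain ⟨-, hL, -, h4⟩ := hB
  have hn : (B p ∩ B q).Nonempty := by rw [← h, inter_self]; exact (hL.2.1 p).1.1
  have key : ∀ a b, B a = B b → b ≠ nxt a := by
    rintro a b hab rfl
    have := (hL.2.2 (by norm_num) a).2
    rw [← hab, inter_self, (hL.2.1 a).2] at this
    omega
  rcases (h4 le_rfl p q hne).1 hn with h' | h'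
  · exact key p q h h'
  · exact key q p h.symm h'

theorem main_belt (hP : IsAlmostFullerene P) {B : Fin 4 → Set E3} (hB : IsBelt P B) :
    ∃ F, IsFacetOf F P ∧ facetEdges P F = 4 ∧ Surrounds P B F := by
  have hS := hP.1
  obtain ⟨V, i1, i2, M, p, φ, hp, h1, h2, h3, h4, h5, h6⟩ := exists_cmap hS
  have hcard : ∀ A, IsFacetOf A P → facetEdges P A = (φ A).card := fun A hA =>
    facetEdges_eq hS M p φ h1 h2 h3 h4 h5 h6 hA
  obtain ⟨X, hX, hrest⟩ := exists_exc hP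
  have hXc := hP.2.1 X hX
  simp only [mem_insert_iff, mem_singleton_iff, hcard X hX] at hXc
  have hG : M.Good (φ X) := ⟨h3 X hX, by omega, by omega, fun Y hY hne => by
    obtain ⟨A, hA, rfl⟩ := h4 Y hY
    rw [← hcard A hA]
    exact hrest A hA (by rintro rfl; exact hne rfl)⟩
  have hinj := belt_inj hB
  obtain ⟨-, hL, -, hb⟩ := hB
  have hB := hL.2.1
  obtain ⟨Q, hQ, hQc, hQF, u, hui, hu⟩ := CMap.belt hG (fun i : ZMod 4 => φ (B i))
    (fun i => h3 _ (hB i)) (fun i j h => hinj (h6 _ _ (hB i) (hB j) h))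
    (by
      intro i
      have he := hL.2.2 (by norm_num) i
      obtain ⟨x, hx, hxv⟩ := face_has_vx hS.1 he.1
      obtain ⟨v, rfl⟩ := h2 x hxv
      refine ⟨v, ?_⟩
      rw [Finset.mem_inter, h5, h5, ← nxt4]
      exact hx)
    (by
      intro i
      rw [Finset.disjoint_left]
      intro v hv hv2
      rw [h5] at hv hv2
      have hij : ∀ i : ZMod 4, i ≠ i + 2 ∧ ¬ (i + 2 = i + 1 ∨ i = i + 2 + 1) := by decide
      have := (hb le_rfl i (i + 2 : ZMod 4) (hij i).1).1 ⟨p v, hv, hv2⟩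
      have h7 := hij i
      rw [← nxt4, ← nxt4] at h7
      exact h7.2 this)
  obtain ⟨F, hF, rfl⟩ := h4 Q hQ
  refine ⟨F, hF, by rw [hcard F hF, hQc], ?_⟩
  refine surrounds hS hF B hL (fun i h => hQF i (by rw [h])) hinj (fun i => p (u i))
    (fun i j h => hui (hp h)) (fun i => h1 _) (fun i => ?_) ?_
  · have h7 : ∀ i : ZMod 4, p (u i) ∈ F ∧ p (u i) ∈ B i ∧ p (u i) ∈ B (nz i) := by
      intro i
      rw [nxt4]
      have := hu i
      rw [h5, h5, h5] at this
      exact this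
    exact h7 i
  · intro x hxF hx
    obtain ⟨v, rfl⟩ := h2 x hx
    have hv : v ∈ φ F := (h5 _ _).2 hxF
    have : Finset.univ.image u = φ F := by
      apply Finset.eq_of_subset_of_card_le
      · intro w hw
        obtain ⟨i, -, rfl⟩ := Finset.mem_image.1 hw
        exact (hu i).1
      · rw [Finset.card_image_of_injective _ hui, hQc, Finset.card_univ, ZMod.card]
    rw [← this] at hv
    obtain ⟨i, -, rfl⟩ := Finset.mem_image.1 hv
    exact ⟨i, rfl⟩

theorem main_quad (hP : IsAlmostFullerene P) (hF : IsFacetOf F P) (hF4 : facetEdges P F = 4) :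
    ∃ B : Fin 4 → Set E3, IsBelt P B := by
  have hS := hP.1
  obtain ⟨V, i1, i2, M, p, φ, hp, h1, h2, h3, h4, h5, h6⟩ := exists_cmap hS
  have hcard : ∀ A, IsFacetOf A P → facetEdges P A = (φ A).card := fun A hA =>
    facetEdges_eq hS M p φ h1 h2 h3 h4 h5 h6 hA
  obtain ⟨X, hX, hrest⟩ := exists_exc hP
  have hXc := hP.2.1 X hX
  simp only [mem_insert_iff, mem_singleton_iff, hcard X hX] at hXc
  have hG : M.Good (φ X) := ⟨h3 X hX, by omega, by omega, fun Y hY hne => by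
    obtain ⟨A, hA, rfl⟩ := h4 Y hY
    rw [← hcard A hA]
    exact hrest A hA (by rintro rfl; exact hne rfl)⟩
  obtain ⟨G, u, hGf, hGQ, hGi, hui, hu, hd⟩ := CMap.quad hG (h3 F hF) (by rw [← hcard F hF, hF4])
  choose B hB hBG using fun i : ZMod 4 => h4 (G i) (hGf i)
  have hBi : Function.Injective B := fun i j h => hGi (by rw [← hBG, ← hBG, h])
  have hadj : ∀ i : ZMod 4, (B i ∩ B (i + 1)).Nonempty := by
    intro i
    have := hu i
    rw [← hBG i, ← hBG (i + 1), h5, h5, h5] at this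
    exact ⟨p (u i), this.2⟩
  have hsep : ∀ i : ZMod 4, ¬ (B i ∩ B (i + 2)).Nonempty := by
    intro i hne
    obtain ⟨x, hx, hxv⟩ := face_has_vx hS.1 (face_inter (hB i).1 (hB (i + 2)).1 hne)
    obtain ⟨v, rfl⟩ := h2 x hxv
    have := hd i
    rw [Finset.disjoint_left] at this
    refine this (a := v) ?_ ?_
    · rw [← hBG, h5]; exact hx.1
    · rw [← hBG, h5]; exact hx.2
  have hn1 : ∀ i : ZMod 4, i ≠ i + 1 := by decide
  refine ⟨B, by norm_num, ⟨by norm_num, hB, fun _ (i : ZMod 4) => ?_⟩, fun h => absurd h (by norm_num),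
    fun _ (a b : ZMod 4) hab => ?_⟩
  · have := inter_edge hS (hB i) (hB (i + 1)) (fun h => hn1 i (hBi h)) (hadj i)
    rw [← nxt4] at this
    exact this
  · have hc : ∀ a b : ZMod 4, a ≠ b → b = a + 1 ∨ a = b + 1 ∨ b = a + 2 := by decide
    have hc2 : ∀ a b : ZMod 4, a ≠ b → b = a + 2 → ¬ (b = a + 1 ∨ a = b + 1) := by decide
    have e1 : ∀ a : ZMod 4, nz a = a + 1 := nxt4
    constructor
    · intro hne
      rcases hc a b hab with h | h | h
      · left; rw [h]; exact (e1 a).symm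
      · right; rw [h]; exact (e1 b).symm
      · subst h; exact absurd hne (hsep a)
    · rintro (h | h)
      · rw [h]; have := hadj a; rw [← e1] at this; exact this
      · rw [h, inter_comm]; have := hadj b; rw [← e1] at this; exact this

theorem quad_unique (hP : IsAlmostFullerene P) (hF : IsFacetOf F P) (hF4 : facetEdges P F = 4)
    (hA : IsFacetOf A P) (hA4 : facetEdges P A = 4) : A = F := by
  obtain ⟨X, hX, hrest⟩ := exists_exc hP
  have key : ∀ C, IsFacetOf C P → facetEdges P C = 4 → C = X := by
    intro C hC hC4
    by_contra hne
    have := hrest C hC hne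
    omega
  rw [key A hA hA4, key F hF hF4]

end FB


/-- For a simple 3-polytope with all facets pentagons and hexagons except at most one
quadrangle or heptagon: if there is no quadrangle there are no 4-belts, and if there
is a quadrangle `F` then there is exactly one 4-belt, namely the one surrounding `F`. -/
theorem four_belt_theorem (P : Set E3) (hP : IsAlmostFullerene P) :
    (pVec P 4 = 0 → ∀ B : Fin 4 → Set E3, ¬ IsBelt P B) ∧
    (∀ F : Set E3, IsFacetOf F P → facetEdges P F = 4 →
      (∃ B : Fin 4 → Set E3, IsBelt P B ∧ Surrounds P B F) ∧
      (∀ B : Fin 4 → Set E3, IsBelt P B → Surrounds P B F)) := by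
  refine ⟨fun h0 B hB => ?_, fun F hF hF4 => ?_⟩
  · obtain ⟨F, hF, hF4, -⟩ := FB.main_belt hP hB
    have hfin : {F | IsFacetOf F P ∧ facetEdges P F = 4}.Finite :=
      (FB.facets_fin hP.1.1).subset fun _ h => h.1
    rw [pVec, Set.ncard_eq_zero hfin] at h0
    have : F ∈ {F | IsFacetOf F P ∧ facetEdges P F = 4} := ⟨hF, hF4⟩
    rw [h0] at this
    exact this
  · have hall : ∀ B : Fin 4 → Set E3, IsBelt P B → Surrounds P B F := by
      intro B hB
      obtain ⟨A, hA, hA4, hs⟩ := FB.main_belt hP hB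
      rwa [FB.quad_unique hP hF hF4 hA hA4] at hs
    obtain ⟨B, hB⟩ := FB.main_quad hP hF hF4
    exact ⟨⟨B, hB, hall B hB⟩, hall⟩
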